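/- Let u ∈ C¹(Ω) be a weak solution of −div(A(x)∇u) = u in Ω (i.e. ∫_Ω ⟨A(x)∇u, ∇φ⟩ dx = ∫_Ω u φ dx for every φ ∈ C_c^∞(Ω)) with u ≢ 0 in Ω. Then for every δ ∈ (0,1) there exist R̄ > 1 (depending on u, n, λ, α, C, δ) and C₁ > 0 (depending on n, λ, α, C, δ) such that for all R ≥ R̄ one has ∫_{B_{2R} \ B_R} u² dx ≥ C₁ R^{1−δ}, where B_ρ = {x ∈ ℝⁿ : |x| < ρ}. -/

import Mathlib

open MeasureTheory Metric Filter

noncomputable section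

abbrev En (n : ℕ) := EuclideanSpace ℝ (Fin n)

/-- The exterior domain `Ω = {x ∈ ℝⁿ : |x| > 1}`. -/
def OmegaExt (n : ℕ) : Set (En n) := {x | 1 < ‖x‖}

/-- The quadratic/bilinear form `⟨M ξ, η⟩`. -/
def quadForm {n : ℕ} (M : Matrix (Fin n) (Fin n) ℝ) (ξ η : En n) : ℝ :=
  ∑ i, M.mulVec (fun j => ξ j) i * η i

/-- The conformal factor `μ(x) = ⟨A(x)∇r, ∇r⟩ = ⟨A(x)x, x⟩ / |x|²`. -/
def muA {n : ℕ} (A : En n → Matrix (Fin n) (Fin n) ℝ) (x : En n) : ℝ :=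
  quadForm (A x) x x / ‖x‖ ^ 2

/-- The vector field `Z(x) = r(x) A(x)∇r(x) / μ(x) = A(x)x / μ(x)`. -/
def Zvec {n : ℕ} (A : En n → Matrix (Fin n) (Fin n) ℝ) (x : En n) : En n :=
  (muA A x)⁻¹ • (WithLp.toLp 2 ((A x).mulVec (fun j => x j)) : En n)

/-- The derivative of `f` along `Z`: `Zf = ⟨Z, ∇f⟩`. -/
def Zd {n : ℕ} (A : En n → Matrix (Fin n) (Fin n) ℝ) (f : En n → ℝ) (x : En n) : ℝ :=
  ∑ i, Zvec A x i * gradient f x i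

/-- Surface integral over the sphere `{|x| = ρ}` w.r.t. the `(n-1)`-dimensional
Hausdorff measure. -/
def sphInt (n : ℕ) (ρ : ℝ) (f : En n → ℝ) : ℝ :=
  ∫ x in sphere (0 : En n) ρ, f x ∂(μH[(n : ℝ) - 1])

/-- Structural hypotheses on `A`: symmetry, `C¹` entries on `Ω`, uniform ellipticity
`λ|ξ|² ≤ ⟨A(x)ξ,ξ⟩ ≤ λ⁻¹|ξ|²`, and the decay `|x||∇B(x)| + |B(x)| ≤ C|x|^{-α}`
where `B = A - Iₙ` (entrywise). -/
def EllipticDecay {n : ℕ} (A : En n → Matrix (Fin n) (Fin n) ℝ) (lam α C : ℝ) : Prop :=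
  (∀ x ∈ OmegaExt n, (A x).IsSymm) ∧
  (∀ i j, ContDiffOn ℝ 1 (fun x => A x i j) (OmegaExt n)) ∧
  (∀ x ∈ OmegaExt n, ∀ ξ : En n,
      lam * ‖ξ‖ ^ 2 ≤ quadForm (A x) ξ ξ ∧ quadForm (A x) ξ ξ ≤ lam⁻¹ * ‖ξ‖ ^ 2) ∧
  (∀ x ∈ OmegaExt n, ∀ i j,
      ‖x‖ * ‖gradient (fun y => (A y - 1) i j) x‖ + |(A x - 1) i j| ≤ C * ‖x‖ ^ (-α))

/-- `u ∈ C¹(Ω)` is a weak solution of `-div(A∇u) = u` in `Ω`, i.e.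
`∫_Ω ⟨A∇u, ∇φ⟩ = ∫_Ω u φ` for every test function `φ ∈ C_c^∞(Ω)`. -/
def WeakSol {n : ℕ} (A : En n → Matrix (Fin n) (Fin n) ℝ) (u : En n → ℝ) : Prop :=
  ContDiffOn ℝ 1 u (OmegaExt n) ∧
  ∀ φ : En n → ℝ, ContDiff ℝ (⊤ : ℕ∞) φ → HasCompactSupport φ → tsupport φ ⊆ OmegaExt n →
    (∫ x in OmegaExt n, ∑ i, (A x).mulVec (fun j => gradient u x j) i * gradient φ x i) =
    ∫ x in OmegaExt n, u x * φ x

namespace AL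

open scoped Topology

/-- Divergence of a vector field. -/
def divg {n : ℕ} (V : En n → En n) (x : En n) : ℝ :=
  ∑ i, fderiv ℝ V x (EuclideanSpace.single i 1) i

variable {n : ℕ}

lemma sum_coord (v : En n) : ∑ i, v i • (EuclideanSpace.single i (1 : ℝ) : En n) = v := by
  ext j
  simp [Finset.sum_apply, Pi.single_apply]

lemma divg_smul {f : En n → ℝ} {V : En n → En n} {x : En n} (hf : DifferentiableAt ℝ f x)
    (hV : DifferentiableAt ℝ V x) :
    divg (fun y => f y • V y) x = fderiv ℝ f x (V x) + f x * divg V x := by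
  unfold divg
  rw [fderiv_fun_smul hf hV]
  conv_rhs => rw [← sum_coord (V x)]
  rw [map_sum, Finset.mul_sum, ← Finset.sum_add_distrib]
  refine Finset.sum_congr rfl fun i _ => ?_
  simp
  ring

lemma divg_add {V U : En n → En n} {x : En n} (hU : DifferentiableAt ℝ U x)
    (hV : DifferentiableAt ℝ V x) :
    divg (fun y => V y + U y) x = divg V x + divg U x := by
  unfold divg
  rw [fderiv_fun_add hV hU]
  simp [Finset.sum_add_distrib]

lemma divg_sub {V U : En n → En n} {x : En n} (hU : DifferentiableAt ℝ U x)
    (hV : DifferentiableAt ℝ V x) :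
    divg (fun y => V y - U y) x = divg V x - divg U x := by
  unfold divg
  rw [fderiv_fun_sub hV hU]
  simp [Finset.sum_sub_distrib]

lemma divg_congr {V U : En n → En n} {x : En n} (h : V =ᶠ[𝓝 x] U) : divg V x = divg U x := by
  unfold divg
  rw [h.fderiv_eq]

lemma coord_fderiv {V : En n → En n} {x : En n} (hV : DifferentiableAt ℝ V x) (i : Fin n)
    (v : En n) : fderiv ℝ (fun y => V y i) x v = fderiv ℝ V x v i := by
  have h := ((EuclideanSpace.proj (𝕜 := ℝ) i).hasFDerivAt (x := V x)).comp x hV.hasFDerivAt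
  have h2 : HasFDerivAt (fun y => V y i) ((EuclideanSpace.proj (𝕜 := ℝ) i).comp (fderiv ℝ V x)) x := h
  rw [h2.fderiv]; rfl

lemma integral_fderiv_zero {f : En n → ℝ} (hf : ContDiff ℝ 1 f) (hc : HasCompactSupport f)
    (v : En n) : ∫ x, fderiv ℝ f x v = 0 := by
  have hi : Integrable (fun x => fderiv ℝ f x v) :=
    ((hf.continuous_fderiv (by simp)).clm_apply continuous_const).integrable_of_hasCompactSupport
      (by
        have := hc.fderiv (𝕜 := ℝ)
        exact this.mono' (by
          intro x hx
          simp only [Function.mem_support] at hx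
          apply subset_tsupport
          simp only [Function.mem_support]
          intro h0; apply hx; simp [h0]))
  have := integral_mul_fderiv_eq_neg_fderiv_mul_of_integrable (μ := (volume : Measure (En n)))
    (f := fun _ : En n => (1 : ℝ)) (g := f) (v := v)
    (by simp) (by simpa using hi)
    (by simpa using hf.continuous.integrable_of_hasCompactSupport hc)
    (by intro x _; fun_prop) (by intro x _; exact (hf.differentiable (by simp)) x)
  simpa using this

lemma integral_divg {V : En n → En n} (hV : ContDiff ℝ 1 V) (hc : HasCompactSupport V) :
    Integrable (divg V) ∧ ∫ x, divg V x = 0 := by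
  have hVi : ∀ i, ContDiff ℝ 1 (fun y => V y i) := fun i =>
    (EuclideanSpace.proj (𝕜 := ℝ) i).contDiff.comp hV
  have hci : ∀ i, HasCompactSupport (fun y => V y i) := fun i =>
    hc.comp_left (g := fun v : En n => v i) (by simp)
  have e : divg V = fun x => ∑ i, fderiv ℝ (fun y => V y i) x (EuclideanSpace.single i 1) := by
    ext x
    unfold divg
    exact Finset.sum_congr rfl fun i _ => (coord_fderiv ((hV.differentiable (by simp)) x) i _).symm
  have hIntg : ∀ i, Integrable (fun x => fderiv ℝ (fun y => V y i) x (EuclideanSpace.single i 1)) := by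
    intro i
    refine (((hVi i).continuous_fderiv (by simp)).clm_apply
      continuous_const).integrable_of_hasCompactSupport ?_
    have := (hci i).fderiv (𝕜 := ℝ)
    refine this.mono' ?_
    intro x hx
    simp only [Function.mem_support] at hx
    apply subset_tsupport
    simp only [Function.mem_support]
    intro h0; apply hx; simp [h0]
  rw [e]
  refine ⟨integrable_finsetSum _ fun i _ => hIntg i, ?_⟩
  rw [integral_finsetSum _ fun i _ => hIntg i]
  exact Finset.sum_eq_zero fun i _ => integral_fderiv_zero (hVi i) (hci i) _

lemma abs_divg_sub_le {V : En n → En n} {x : En n} {c : ℝ}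
    (h : ∀ ξ : En n, ‖fderiv ℝ V x ξ - ξ‖ ≤ c * ‖ξ‖) : |divg V x - n| ≤ n * c := by
  have : divg V x - n = ∑ i : Fin n, (fderiv ℝ V x (EuclideanSpace.single i 1) - EuclideanSpace.single i (1:ℝ)) i := by
    unfold divg
    simp
  rw [this]
  refine (Finset.abs_sum_le_sum_abs _ _).trans ?_
  calc _ ≤ ∑ i : Fin n, c := by
        refine Finset.sum_le_sum fun i _ => ?_
        have h1 := PiLp.norm_apply_le (fderiv ℝ V x (EuclideanSpace.single i 1) - EuclideanSpace.single i (1:ℝ)) i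
        have h2 := h (EuclideanSpace.single i 1)
        simp only [PiLp.norm_single, norm_one, mul_one] at h2
        exact h1.trans h2
    _ = _ := by simp

/-! gradient calculus -/

lemma contDiffAt_gradient {f : En n → ℝ} {x : En n} {k m : WithTop ℕ∞} (hf : ContDiffAt ℝ k f x)
    (hm : m + 1 ≤ k) : ContDiffAt ℝ m (gradient f) x := by
  have := hf.fderiv_right hm
  exact (InnerProductSpace.toDual ℝ (En n)).symm.contDiff.contDiffAt.comp x this

lemma contDiff_gradient {f : En n → ℝ} {k m : WithTop ℕ∞} (hf : ContDiff ℝ k f)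
    (hm : m + 1 ≤ k) : ContDiff ℝ m (gradient f) :=
  contDiff_iff_contDiffAt.2 fun _ => contDiffAt_gradient hf.contDiffAt hm

lemma hess_symm {f : En n → ℝ} {x : En n} (hf : ContDiffAt ℝ 2 f x) (ξ η : En n) :
    inner ℝ (fderiv ℝ (gradient f) x ξ) η = inner ℝ ξ (fderiv ℝ (gradient f) x η) := by
  have hs : IsSymmSndFDerivAt ℝ f x := hf.isSymmSndFDerivAt (by simp)
  have hd : DifferentiableAt ℝ (fderiv ℝ f) x :=
    (hf.fderiv_right (m := 1) (by norm_num)).differentiableAt (by simp)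
  have hg : DifferentiableAt ℝ (gradient f) x :=
    (contDiffAt_gradient hf (m := 1) (by norm_num)).differentiableAt (by simp)
  have k : ∀ a b : En n, inner ℝ (fderiv ℝ (gradient f) x a) b = fderiv ℝ (fderiv ℝ f) x a b := by
    intro a b
    have h1 : HasFDerivAt (fun y => fderiv ℝ f y b) ((fderiv ℝ (fderiv ℝ f) x).flip b) x := by
      have := hd.hasFDerivAt.clm_apply (hasFDerivAt_const b x)
      simpa only [ContinuousLinearMap.comp_zero, zero_add] using this
    have h2 := hg.hasFDerivAt.inner ℝ (hasFDerivAt_const b x)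
    have e : (fun y => fderiv ℝ f y b) = fun y => inner ℝ (gradient f y) b := by
      ext y; rw [inner_gradient_left]
    rw [e] at h1
    have := congrArg (fun T => T a) (h1.unique h2)
    simpa using this.symm
  rw [k, real_inner_comm, k]
  exact hs.eq ξ η

lemma gradient_mul {f g : En n → ℝ} {x : En n} (hf : DifferentiableAt ℝ f x)
    (hg : DifferentiableAt ℝ g x) :
    gradient (fun y => f y * g y) x = f x • gradient g x + g x • gradient f x := by
  apply ext_inner_right ℝ
  intro v
  rw [inner_gradient_left, fderiv_fun_mul hf hg, inner_add_left, inner_smul_left, inner_smul_left,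
    inner_gradient_left, inner_gradient_left]
  simp

/-- div (A ∇(fg)) -/
lemma divg_mul {𝒜 : En n → En n →L[ℝ] En n} {f g : En n → ℝ} {x : En n}
    (hA : DifferentiableAt ℝ 𝒜 x)
    (hsym : ∀ ξ η : En n, inner ℝ (𝒜 x ξ) η = inner ℝ ξ (𝒜 x η))
    (hf : ContDiffAt ℝ 2 f x) (hg : ContDiffAt ℝ 2 g x) :
    divg (fun y => 𝒜 y (gradient (fun z => f z * g z) y)) x =
      f x * divg (fun y => 𝒜 y (gradient g y)) x + 2 * inner ℝ (𝒜 x (gradient f x)) (gradient g x)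
      + g x * divg (fun y => 𝒜 y (gradient f y)) x := by
  have ef : ∀ᶠ y in 𝓝 x, DifferentiableAt ℝ f y :=
    (hf.eventually (by simp)).mono fun y hy => hy.differentiableAt (by simp)
  have eg : ∀ᶠ y in 𝓝 x, DifferentiableAt ℝ g y :=
    (hg.eventually (by simp)).mono fun y hy => hy.differentiableAt (by simp)
  have e : (fun y => 𝒜 y (gradient (fun z => f z * g z) y)) =ᶠ[𝓝 x]
      fun y => f y • 𝒜 y (gradient g y) + g y • 𝒜 y (gradient f y) := by
    filter_upwards [ef, eg] with y h1 h2
    rw [gradient_mul h1 h2]; simp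
  have gf : DifferentiableAt ℝ (gradient f) x :=
    (contDiffAt_gradient hf (m := 1) (by norm_num)).differentiableAt (by simp)
  have gg : DifferentiableAt ℝ (gradient g) x :=
    (contDiffAt_gradient hg (m := 1) (by norm_num)).differentiableAt (by simp)
  have Af : DifferentiableAt ℝ (fun y => 𝒜 y (gradient f y)) x := hA.clm_apply gf
  have Ag : DifferentiableAt ℝ (fun y => 𝒜 y (gradient g y)) x := hA.clm_apply gg
  have df := ef.self_of_nhds
  have dg := eg.self_of_nhds
  rw [divg_congr e, divg_add (dg.fun_smul Af) (df.fun_smul Ag), divg_smul df Ag, divg_smul dg Af,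
    ← inner_gradient_left, ← inner_gradient_left, ← hsym (gradient f x),
    real_inner_comm (𝒜 x (gradient f x)) (gradient g x)]
  ring

end AL

namespace AL

open scoped Topology

variable {n : ℕ}

lemma hasFDerivAt_log_norm {x : En n} (hx : x ≠ 0) :
    HasFDerivAt (fun y : En n => Real.log ‖y‖) ((‖x‖ ^ 2)⁻¹ • innerSL ℝ x) x := by
  have hx' : ‖x‖ ≠ 0 := norm_ne_zero_iff.2 hx
  have h1 : HasFDerivAt (fun y : En n => ‖y‖ ^ 2) (2 • innerSL ℝ x) x :=
    (hasStrictFDerivAt_norm_sq x).hasFDerivAt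
  have h2 := (h1.log (by positivity)).const_mul (1 / 2 : ℝ)
  have e : (fun y : En n => Real.log ‖y‖) = fun y => (1 / 2 : ℝ) * Real.log (‖y‖ ^ 2) := by
    ext y; rw [Real.log_pow]; push_cast; ring
  rw [e]
  refine h2.congr_fderiv ?_
  ext v
  simp
  ring

lemma hasFDerivAt_rad {F : ℝ → ℝ} {F' : ℝ} {x : En n} (hx : x ≠ 0)
    (hF : HasDerivAt F F' (Real.log ‖x‖)) :
    HasFDerivAt (fun y : En n => F (Real.log ‖y‖)) ((F' / ‖x‖ ^ 2) • innerSL ℝ x) x := by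
  have := hF.comp_hasFDerivAt x (hasFDerivAt_log_norm hx)
  refine this.congr_fderiv ?_
  rw [smul_smul, div_eq_mul_inv]

lemma fderiv_rad {F : ℝ → ℝ} {F' : ℝ} {x : En n} (hx : x ≠ 0)
    (hF : HasDerivAt F F' (Real.log ‖x‖)) (v : En n) :
    fderiv ℝ (fun y : En n => F (Real.log ‖y‖)) x v = F' / ‖x‖ ^ 2 * inner ℝ x v := by
  rw [(hasFDerivAt_rad hx hF).fderiv]; simp

lemma gradient_rad {F : ℝ → ℝ} {F' : ℝ} {x : En n} (hx : x ≠ 0)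
    (hF : HasDerivAt F F' (Real.log ‖x‖)) :
    gradient (fun y : En n => F (Real.log ‖y‖)) x = (F' / ‖x‖ ^ 2) • x := by
  apply ext_inner_right ℝ
  intro v
  rw [inner_gradient_left, fderiv_rad hx hF, inner_smul_left]
  simp

lemma contDiffAt_rad {F : ℝ → ℝ} {k : WithTop ℕ∞} (hF : ContDiff ℝ k F) {x : En n} (hx : x ≠ 0) :
    ContDiffAt ℝ k (fun y : En n => F (Real.log ‖y‖)) x := by
  have : ContDiffAt ℝ k (fun y : En n => Real.log ‖y‖) x :=
    (contDiffAt_norm ℝ hx).log (norm_ne_zero_iff.2 hx)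
  exact hF.contDiffAt.comp x this

lemma exp_neg_two_log {r : ℝ} (hr : 0 < r) : Real.exp (-2 * Real.log r) = (r ^ 2)⁻¹ := by
  rw [show -2 * Real.log r = -(Real.log (r ^ 2)) by rw [Real.log_pow]; push_cast; ring,
    Real.exp_neg, Real.exp_log (by positivity)]

lemma exp_neg_four_log {r : ℝ} (hr : 0 < r) : Real.exp (-4 * Real.log r) = (r ^ 4)⁻¹ := by
  rw [show -4 * Real.log r = -(Real.log (r ^ 4)) by rw [Real.log_pow]; push_cast; ring,
    Real.exp_neg, Real.exp_log (by positivity)]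

lemma divg_rad {𝒜 : En n → En n →L[ℝ] En n} {F F1 : ℝ → ℝ} {F2 : ℝ} {x : En n} (hx : x ≠ 0)
    (hA : DifferentiableAt ℝ 𝒜 x)
    (hF : ∀ t, HasDerivAt F (F1 t) t) (hF1 : HasDerivAt F1 F2 (Real.log ‖x‖)) :
    divg (fun y => 𝒜 y (gradient (fun z : En n => F (Real.log ‖z‖)) y)) x =
      (F2 - 2 * F1 (Real.log ‖x‖)) / ‖x‖ ^ 4 * inner ℝ (𝒜 x x) x +
      F1 (Real.log ‖x‖) / ‖x‖ ^ 2 * divg (fun y => 𝒜 y y) x := by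
  have hr : 0 < ‖x‖ := norm_pos_iff.2 hx
  have e : (fun y => 𝒜 y (gradient (fun z : En n => F (Real.log ‖z‖)) y)) =ᶠ[𝓝 x]
      fun y => (fun t => F1 t * Real.exp (-2 * t)) (Real.log ‖y‖) • 𝒜 y y := by
    filter_upwards [isOpen_ne.mem_nhds hx] with y hy
    rw [gradient_rad hy (hF _)]
    rw [exp_neg_two_log (norm_pos_iff.2 hy), map_smul, div_eq_mul_inv]
  have hG : HasDerivAt (fun t => F1 t * Real.exp (-2 * t))
      (F2 * Real.exp (-2 * Real.log ‖x‖) + F1 (Real.log ‖x‖) *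
        (Real.exp (-2 * Real.log ‖x‖) * (-2))) (Real.log ‖x‖) := by
    have h1 : HasDerivAt (fun t : ℝ => Real.exp (-2 * t)) (Real.exp (-2 * Real.log ‖x‖) * (-2))
        (Real.log ‖x‖) := by
      have := ((hasDerivAt_id (Real.log ‖x‖)).const_mul (-2)).exp
      simpa using this
    exact hF1.mul h1
  have hd : HasFDerivAt (fun y : En n => (fun t => F1 t * Real.exp (-2 * t)) (Real.log ‖y‖)) _ x :=
    hasFDerivAt_rad hx hG
  have hZ : DifferentiableAt ℝ (fun y => 𝒜 y y) x := hA.clm_apply differentiableAt_id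
  rw [divg_congr e, divg_smul hd.differentiableAt hZ, hd.fderiv]
  simp only [exp_neg_two_log hr]
  simp only [smul_apply, innerSL_apply_apply, smul_eq_mul,
    real_inner_comm x (𝒜 x x)]
  field_simp
  ring

/-- The fundamental pointwise divergence identity. -/
lemma div_main {𝒜 : En n → En n →L[ℝ] En n} {W h q : En n → ℝ} {x : En n}
    (hA : DifferentiableAt ℝ 𝒜 x)
    (hsym : ∀ ξ η : En n, inner ℝ (𝒜 x ξ) η = inner ℝ ξ (𝒜 x η))
    (hW : ContDiffAt ℝ 2 W x) (hh : DifferentiableAt ℝ h x) (hq : DifferentiableAt ℝ q x) :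
    divg (fun y => (h y * inner ℝ (𝒜 y y) (gradient W y)) • 𝒜 y (gradient W y)
      - ((1 / 2) * (h y * inner ℝ (𝒜 y (gradient W y)) (gradient W y))) • 𝒜 y y
      + ((1 / 2) * (h y * (q y * W y ^ 2))) • 𝒜 y y) x =
    fderiv ℝ h x (𝒜 x (gradient W x)) * inner ℝ (𝒜 x x) (gradient W x)
    + h x * inner ℝ (fderiv ℝ (fun y => 𝒜 y y) x (𝒜 x (gradient W x))) (gradient W x)
    + h x * inner ℝ (𝒜 x x) (gradient W x) * divg (fun y => 𝒜 y (gradient W y)) x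
    - (1 / 2) * fderiv ℝ h x (𝒜 x x) * inner ℝ (𝒜 x (gradient W x)) (gradient W x)
    - (1 / 2) * h x * inner ℝ (fderiv ℝ 𝒜 x (𝒜 x x) (gradient W x)) (gradient W x)
    - (1 / 2) * h x * inner ℝ (𝒜 x (gradient W x)) (gradient W x) * divg (fun y => 𝒜 y y) x
    + (1 / 2) * (fderiv ℝ h x (𝒜 x x) * q x + h x * fderiv ℝ q x (𝒜 x x)) * W x ^ 2
    + h x * q x * W x * inner ℝ (𝒜 x x) (gradient W x)
    + (1 / 2) * h x * q x * W x ^ 2 * divg (fun y => 𝒜 y y) x := by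
  have hg : DifferentiableAt ℝ (gradient W) x :=
    (contDiffAt_gradient hW (m := 1) (by norm_num)).differentiableAt (by simp)
  have hWd : DifferentiableAt ℝ W x := hW.differentiableAt (by simp)
  have hZ : DifferentiableAt ℝ (fun y => 𝒜 y y) x := hA.clm_apply differentiableAt_id
  have hY : DifferentiableAt ℝ (fun y => 𝒜 y (gradient W y)) x := hA.clm_apply hg
  have hT : HasFDerivAt (fun y => inner ℝ (𝒜 y y) (gradient W y)) _ x :=
    hZ.hasFDerivAt.inner ℝ hg.hasFDerivAt
  have hG : HasFDerivAt (fun y => inner ℝ (𝒜 y (gradient W y)) (gradient W y)) _ x :=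
    hY.hasFDerivAt.inner ℝ hg.hasFDerivAt
  have h1 := hh.hasFDerivAt.mul hT
  have h2 := (hh.hasFDerivAt.mul hG).const_mul (1 / 2 : ℝ)
  have h3 := (hh.hasFDerivAt.mul (hq.hasFDerivAt.mul (hWd.hasFDerivAt.pow 2))).const_mul (1 / 2 : ℝ)
  have d1 : DifferentiableAt ℝ (fun y => h y * inner ℝ (𝒜 y y) (gradient W y)) x :=
    h1.differentiableAt
  have d2 : DifferentiableAt ℝ
    (fun y => (1 / 2) * (h y * inner ℝ (𝒜 y (gradient W y)) (gradient W y))) x :=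
    h2.differentiableAt
  have d3 : DifferentiableAt ℝ (fun y => (1 / 2) * (h y * (q y * W y ^ 2))) x :=
    h3.differentiableAt
  have e1 := h1.fderiv
  have e2 := h2.fderiv
  have e3 := h3.fderiv
  have eY : fderiv ℝ (fun y => 𝒜 y (gradient W y)) x (𝒜 x x) =
      fderiv ℝ 𝒜 x (𝒜 x x) (gradient W x) + 𝒜 x (fderiv ℝ (gradient W) x (𝒜 x x)) := by
    rw [(hA.hasFDerivAt.clm_apply hg.hasFDerivAt).fderiv]
    simp [add_comm]
  have eg : ∀ v, fderiv ℝ W x v = inner ℝ (gradient W x) v := fun v => (inner_gradient_left).symm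
  rw [divg_add (d3.fun_smul hZ) ((d1.fun_smul hY).fun_sub (d2.fun_smul hZ)),
    divg_sub (d2.fun_smul hZ) (d1.fun_smul hY), divg_smul d1 hY, divg_smul d2 hZ, divg_smul d3 hZ]
  erw [e1, e2, e3]
  simp only [add_apply, smul_apply, Pi.mul_apply, smul_eq_mul,
    ContinuousLinearMap.coe_comp, Function.comp_apply, ContinuousLinearMap.prod_apply,
    fderivInnerCLM_apply, nsmul_eq_mul]
  rw [eY, eg]
  rw [inner_add_left, hsym (fderiv ℝ (gradient W) x (𝒜 x x))]
  have s1 : inner ℝ (𝒜 x x) (fderiv ℝ (gradient W) x (𝒜 x (gradient W x))) =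
     inner ℝ (fderiv ℝ (gradient W) x (𝒜 x x)) (𝒜 x (gradient W x)) := (hess_symm hW _ _).symm
  have s2 : inner ℝ (𝒜 x (gradient W x)) (fderiv ℝ (gradient W) x (𝒜 x x)) =
     inner ℝ (fderiv ℝ (gradient W) x (𝒜 x x)) (𝒜 x (gradient W x)) := real_inner_comm _ _
  rw [s1, s2, real_inner_comm (𝒜 x x) (gradient W x)]
  push_cast
  ring

end AL

namespace AL

set_option maxHeartbeats 4000000 in
lemma scalar_core (b C1 lam δ γ C5 ν C6 k C8 M Λ y1 : ℝ) (hb : 0 ≤ b) (hC1 : 1 ≤ C1) (hlam : 0 < lam)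
    (hδ : 0 < δ) (hδ1 : δ < 1) (hγ0 : 0 < γ) (hγ1 : γ * δ * lam ^ 2 = 8 * C1)
    (hγ2 : 4 * C1 ≤ γ * lam ^ 2) (hC5 : C5 = C1 * (3 + γ)) (hν0 : 0 < ν)
    (hνb : ν * (b + 1) = δ / 16) (hC6 : C6 = C5 ^ 2 / (4 * ν)) (hC60 : 0 ≤ C6)
    (hk : k = lam ^ 2 * γ / 8) (hk0 : 0 < k)
    (hC8 : C8 = 1 / 2 * (3 * C1 + γ * C1) + 1 / 2 * (C1 ^ 2 * γ * b ^ 2 + 2 * C1 * b ^ 2)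
      + C6 * b + C6 ^ 2 / (4 * k)) (hC80 : 0 < C8)
    (hMb : 6 * C1 ^ 2 * (b ^ 2 + 1) * (1 / M) ≤ δ / 8) (hΛ : Λ = 1 + γ + C8 / k)
    (hy1a : y1 * γ ≤ δ / 16) (hy1b : y1 * C8 ≤ δ / 8)
    (ri y μ s p p' P σ T G W g2 X1 X2 X3 X4 : ℝ)
    (hri : 0 < ri) (hy : 0 < y) (hy1 : y ≤ 1) (hriy : ri ≤ y ^ 2) (hμ1 : lam ≤ μ) (hμ2 : μ ≤ C1)
    (hμ3 : |μ - 1| ≤ C1 * y)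
    (hg2 : 0 ≤ g2) (hG : lam * g2 ≤ G) (hTG : T ^ 2 * ri ≤ μ * G) (hP : 0 ≤ P) (hσ : 0 ≤ σ)
    (hσ1 : σ ≤ 1) (hσP : σ * P ^ 2 * ri ≤ 1 / M) (hσr : σ * ri ≤ 1 / M)
    (hp : p = b + P) (hp' : p' = P * (γ * y - 2 * σ)) (hs : s = γ * y + (2 - δ) * σ)
    (hdich : y ≤ y1 ∨ (Λ ≤ P ∧ Λ ≤ P ^ 2 * ri))
    (hX1 : |X1| ≤ C1 * y * g2) (hX2 : |X2| ≤ C1 * y) (hX3 : |X3| ≤ C1 * y)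
    (hX4 : |X4| ≤ C1 * (|p'| + p)) :
        δ / 8 * (T ^ 2 * ri + W ^ 2) ≤
          T ^ 2 * ri * (2 * P + 1 - s) + T * W * ri * X4 + X1 + 1 / 2 * s * μ * G
          + 1 / 2 * W ^ 2 * (2 + X2 - s * μ)
          + 1 / 2 * W ^ 2 * ri * (μ ^ 2 * (2 * p * p' - s * p ^ 2) + p ^ 2 * X3) := by
  have hμ0 : 0 < μ := lt_of_lt_of_le hlam hμ1
  have hs0 : 0 ≤ s := by
    rw [hs]; have : 0 ≤ (2 - δ) * σ := mul_nonneg (by linarith) hσ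
    have : 0 ≤ γ * y := by positivity
    linarith
  have hsγ : γ * y ≤ s := by
    rw [hs]; have : 0 ≤ (2 - δ) * σ := mul_nonneg (by linarith) hσ
    linarith
  have hs2 : s ≤ γ * y + (2 - δ) := by
    rw [hs]; linarith [mul_le_mul_of_nonneg_left hσ1 (by linarith : 0 ≤ 2 - δ)]
  have hG0 : 0 ≤ G := le_trans (by positivity) hG
  -- gradient part
  have A1 : C1 * y * g2 ≤ δ / 8 * (s * μ * G) := by
    have h1 : γ * y * lam * (lam * g2) ≤ s * μ * G := by
      have : 0 ≤ lam * g2 := by positivity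
      gcongr
    have h2 : C1 * y * g2 = δ / 8 * (γ * y * lam * (lam * g2)) := by
      linear_combination (-(1 / 8) * y * g2) * hγ1
    rw [h2]; gcongr
  have A2 : T ^ 2 * ri * ((1 / 2 - δ / 8) * s) ≤ (1 / 2 - δ / 8) * (s * μ * G) := by
    have h1 : s * (T ^ 2 * ri) ≤ s * (μ * G) := by gcongr
    have h2 : 0 ≤ 1 / 2 - δ / 8 := by linarith
    linarith [mul_le_mul_of_nonneg_left h1 h2]
  -- mixed term
  have hp0 : 0 ≤ p := by rw [hp]; linarith
  have hPp : P ≤ p := by rw [hp]; linarith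
  have hp'b : |p'| ≤ (2 + γ) * p := by
    rw [hp', abs_mul, abs_of_nonneg hP]
    have : |γ * y - 2 * σ| ≤ 2 + γ := by
      have e1 : 0 ≤ γ * y := by positivity
      have e2 : γ * y ≤ γ * 1 := by gcongr
      rw [abs_le]; constructor <;> linarith
    rw [mul_comm (2 + γ)]
    exact mul_le_mul hPp this (abs_nonneg _) hp0
  have hX4' : |X4| ≤ C5 * p := by
    refine hX4.trans ?_
    rw [hC5]
    have : C1 * (|p'| + p) ≤ C1 * ((2 + γ) * p + p) := by gcongr
    linarith
  have A3 : -(ri * (p * (ν * T ^ 2 + C6 * W ^ 2))) ≤ T * W * ri * X4 := by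
    have h1 : |T * W * X4| ≤ p * (ν * T ^ 2 + C6 * W ^ 2) := by
      rw [abs_mul]
      have h2 : |T * W| * |X4| ≤ |T * W| * (C5 * p) := by gcongr
      have h3 : |T * W| * C5 ≤ ν * T ^ 2 + C6 * W ^ 2 := by
        rw [abs_mul, ← sq_abs T, ← sq_abs W, hC6]
        have : ν * |T| ^ 2 + C5 ^ 2 / (4 * ν) * |W| ^ 2 - |T| * |W| * C5 =
          ν * (|T| - C5 / (2 * ν) * |W|) ^ 2 := by
          field_simp; ring
        have : 0 ≤ ν * (|T| - C5 / (2 * ν) * |W|) ^ 2 := by positivity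
        linarith
      have h5 := mul_le_mul_of_nonneg_left h3 hp0
      linarith
    have h4 := mul_le_mul_of_nonneg_left (abs_le.1 h1).1 hri.le
    linarith
  have A4 : ν * p ≤ δ / 16 + P := by
    rw [hp]
    have e1 : 0 ≤ ν * b := by positivity
    have : ν ≤ 1 := by linarith
    have e2 : ν * P ≤ 1 * P := by gcongr
    linarith
  -- W part
  have B1 : s * μ ≤ (2 - δ) + (γ * C1 + 2 * C1) * y := by
    have h1 : s * μ = γ * y * μ + (2 - δ) * σ * μ := by rw [hs]; ring
    have h2 : γ * y * μ ≤ γ * y * C1 := by gcongr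
    have h3 : μ ≤ 1 + C1 * y := by linarith [(abs_le.1 hμ3).2]
    have h4 : (2 - δ) * σ * μ ≤ (2 - δ) * 1 * (1 + C1 * y) := by
      have : 0 ≤ 2 - δ := by linarith
      gcongr
    have h5 : 0 ≤ δ * (C1 * y) := by positivity
    linarith
  have B2 : δ - (3 * C1 + γ * C1) * y ≤ 2 + X2 - s * μ := by
    have := (abs_le.1 hX2).1
    linarith
  have hb2 : p ^ 2 ≤ 2 * b ^ 2 + 2 * P ^ 2 := by rw [hp]; linarith only [sq_nonneg (b - P)]
  have hμ2' : μ ^ 2 ≤ C1 ^ 2 := by gcongr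
  have hμl : lam ^ 2 ≤ μ ^ 2 := by gcongr
  have B3 : 1 / 2 * lam ^ 2 * γ * y * P ^ 2 - (C1 ^ 2 * γ * b ^ 2 + 2 * C1 * b ^ 2) * y
      - 12 * C1 ^ 2 * σ * (b ^ 2 + P ^ 2) ≤ μ ^ 2 * (2 * p * p' - s * p ^ 2) + p ^ 2 * X3 := by
    have h1 : 2 * p * p' - s * p ^ 2 = γ * y * P ^ 2 - γ * y * b ^ 2
        - σ * (4 * (b + P) * P + (2 - δ) * (b + P) ^ 2) := by
      rw [hs, hp', hp]; ring
    have h2 : σ * (4 * (b + P) * P + (2 - δ) * (b + P) ^ 2) ≤ σ * (12 * (b ^ 2 + P ^ 2)) := by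
      apply mul_le_mul_of_nonneg_left _ hσ
      linarith only [sq_nonneg (b - P), mul_nonneg hδ.le (sq_nonneg (b + P)), sq_nonneg b, sq_nonneg P]
    have h3 : -(C1 * y * (2 * b ^ 2 + 2 * P ^ 2)) ≤ p ^ 2 * X3 := by
      have e1 := (abs_le.1 hX3).1
      have e2 : p ^ 2 * (C1 * y) ≤ (2 * b ^ 2 + 2 * P ^ 2) * (C1 * y) := by gcongr
      linarith [mul_le_mul_of_nonneg_left e1 (sq_nonneg p)]
    have h4 : lam ^ 2 * (γ * y * P ^ 2) ≤ μ ^ 2 * (γ * y * P ^ 2) := by gcongr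
    have h5 : μ ^ 2 * (γ * y * b ^ 2) ≤ C1 ^ 2 * (γ * y * b ^ 2) := by gcongr
    have h6 : μ ^ 2 * (σ * (4 * (b + P) * P + (2 - δ) * (b + P) ^ 2)) ≤
        C1 ^ 2 * (σ * (12 * (b ^ 2 + P ^ 2))) := by
      refine (mul_le_mul_of_nonneg_left h2 (sq_nonneg μ)).trans ?_
      gcongr
    have h7 : 4 * C1 * (y * P ^ 2) ≤ γ * lam ^ 2 * (y * P ^ 2) := by gcongr
    rw [h1]
    linarith
  have hriy' : ri ≤ y := by linarith [mul_le_mul_of_nonneg_left hy1 hy.le]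
  have hri1 : ri ≤ 1 := by linarith
  have B4 : 12 * C1 ^ 2 * σ * (b ^ 2 + P ^ 2) * ri ≤ δ / 4 := by
    have h1 : 12 * C1 ^ 2 * b ^ 2 * (σ * ri) ≤ 12 * C1 ^ 2 * b ^ 2 * (1 / M) := by gcongr
    have h2 : 12 * C1 ^ 2 * (σ * P ^ 2 * ri) ≤ 12 * C1 ^ 2 * (1 / M) := by gcongr
    linarith
  have B5 : (C1 ^ 2 * γ * b ^ 2 + 2 * C1 * b ^ 2) * y * ri ≤ (C1 ^ 2 * γ * b ^ 2 + 2 * C1 * b ^ 2) * y := by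
    have : 0 ≤ (C1 ^ 2 * γ * b ^ 2 + 2 * C1 * b ^ 2) * y := by positivity
    linarith [mul_le_mul_of_nonneg_left hri1 this]
  have B6 : C6 * p * ri ≤ C6 * b * y + k * y * P ^ 2 * ri + C6 ^ 2 / (4 * k) * y := by
    have h1 : C6 * b * ri ≤ C6 * b * y := by gcongr
    have h2 : C6 * P ≤ k * y * P ^ 2 + C6 ^ 2 / (4 * k) * (1 / y) := by
      have : k * y * P ^ 2 + C6 ^ 2 / (4 * k) * (1 / y) - C6 * P =
        k * y * (P - C6 / (2 * k * y)) ^ 2 := by field_simp; ring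
      have : 0 ≤ k * y * (P - C6 / (2 * k * y)) ^ 2 := by positivity
      linarith
    have h3 : C6 ^ 2 / (4 * k) * (1 / y) * ri ≤ C6 ^ 2 / (4 * k) * y := by
      have : 1 / y * ri ≤ y := by rw [one_div_mul_eq_div, div_le_iff₀ hy]; linarith
      rw [mul_assoc]; gcongr
    have h4 := mul_le_mul_of_nonneg_right h2 hri.le
    rw [hp]; linarith
  have B7 : δ / 4 ≤ δ / 2 - δ / 8 - C8 * y + k * y * P ^ 2 * ri := by
    have h0 : 0 ≤ k * y * P ^ 2 * ri := by positivity
    rcases hdich with h | ⟨_, h⟩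
    · have h1 : y * C8 ≤ y1 * C8 := by gcongr
      linarith
    · have h1 : C8 / k ≤ P ^ 2 * ri := by linarith
      rw [div_le_iff₀ hk0] at h1
      linarith [mul_le_mul_of_nonneg_left h1 hy.le]
  have A5 : δ / 8 ≤ P + 3 * δ / 16 - γ * y := by
    rcases hdich with h | ⟨h, _⟩
    · have h1 : y * γ ≤ y1 * γ := by gcongr
      linarith
    · have : 0 ≤ C8 / k := by positivity
      linarith [mul_le_mul_of_nonneg_left hy1 hγ0.le]
  have W2 : 0 ≤ W ^ 2 := sq_nonneg W
  have T2 : 0 ≤ T ^ 2 * ri := by positivity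
  -- assemble
  have F1 : T ^ 2 * ri * (δ / 8) ≤ T ^ 2 * ri * (2 * P + 1 - s + (1 / 2 - δ / 8) * s - ν * p) := by
    apply mul_le_mul_of_nonneg_left _ T2
    have : (1 / 2 + δ / 8) * s ≤ γ * y + 1 - δ / 4 := by
      have h1 : (1 / 2 + δ / 8) * s ≤ (1 / 2 + δ / 8) * (γ * y + (2 - δ)) := by gcongr
      have h2 : 0 ≤ γ * y := by positivity
      have h3 : 0 ≤ (1 - δ) * (γ * y) := mul_nonneg (by linarith) h2
      have h4 := sq_nonneg δ
      linarith
    linarith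
  have F2 : W ^ 2 * (δ / 8) ≤ W ^ 2 * (1 / 2 * (2 + X2 - s * μ)
     + 1 / 2 * (ri * (μ ^ 2 * (2 * p * p' - s * p ^ 2) + p ^ 2 * X3)) - C6 * p * ri) := by
    apply mul_le_mul_of_nonneg_left _ W2
    have h1 := mul_le_mul_of_nonneg_left B3 hri.le
    have h2 : 1 / 2 * lam ^ 2 * γ = 4 * k := by rw [hk]; ring
    rw [h2] at h1
    have h3 : C8 * y = 1 / 2 * (3 * C1 + γ * C1) * y +
      1 / 2 * ((C1 ^ 2 * γ * b ^ 2 + 2 * C1 * b ^ 2) * y)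
      + C6 * b * y + C6 ^ 2 / (4 * k) * y := by rw [hC8]; ring
    linarith
  have F3 := (abs_le.1 hX1).1
  linarith

set_option maxHeartbeats 1000000 in
/-- The scalar inequality behind the weighted estimate. -/
lemma scalar_main (b C1 lam δ : ℝ) (hb : 0 ≤ b) (hC1 : 1 ≤ C1) (hlam : 0 < lam)
    (hδ : 0 < δ) (hδ1 : δ < 1) :
    ∃ γ > 0, ∃ M ≥ 1, ∃ Λ ≥ 1, ∃ y1 > 0,
      ∀ (ri y μ s p p' P σ T G W g2 X1 X2 X3 X4 : ℝ),
        0 < ri → 0 < y → y ≤ 1 → ri ≤ y ^ 2 → lam ≤ μ → μ ≤ C1 → |μ - 1| ≤ C1 * y →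
        0 ≤ g2 → lam * g2 ≤ G → T ^ 2 * ri ≤ μ * G → 0 ≤ P → 0 ≤ σ → σ ≤ 1 →
        σ * P ^ 2 * ri ≤ 1 / M → σ * ri ≤ 1 / M →
        p = b + P → p' = P * (γ * y - 2 * σ) → s = γ * y + (2 - δ) * σ →
        (y ≤ y1 ∨ (Λ ≤ P ∧ Λ ≤ P ^ 2 * ri)) →
        |X1| ≤ C1 * y * g2 → |X2| ≤ C1 * y → |X3| ≤ C1 * y → |X4| ≤ C1 * (|p'| + p) →
        δ / 8 * (T ^ 2 * ri + W ^ 2) ≤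
          T ^ 2 * ri * (2 * P + 1 - s) + T * W * ri * X4 + X1 + 1 / 2 * s * μ * G
          + 1 / 2 * W ^ 2 * (2 + X2 - s * μ)
          + 1 / 2 * W ^ 2 * ri * (μ ^ 2 * (2 * p * p' - s * p ^ 2) + p ^ 2 * X3) := by
  set γ : ℝ := 8 * C1 / (δ * lam ^ 2) with hγ
  have hγ0 : 0 < γ := by positivity
  have hγ1 : γ * δ * lam ^ 2 = 8 * C1 := by rw [hγ]; field_simp
  have hγ2 : 4 * C1 ≤ γ * lam ^ 2 := by
    have := mul_pos hγ0 (pow_pos hlam 2)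
    nlinarith
  clear_value γ
  set C5 : ℝ := C1 * (3 + γ) with hC5
  set ν : ℝ := δ / (16 * (b + 1)) with hν
  have hν0 : 0 < ν := by positivity
  have hνb : ν * (b + 1) = δ / 16 := by rw [hν]; field_simp
  set C6 : ℝ := C5 ^ 2 / (4 * ν) with hC6
  have hC60 : 0 ≤ C6 := by positivity
  set k : ℝ := lam ^ 2 * γ / 8 with hk
  have hk0 : 0 < k := by positivity
  set C8 : ℝ := 1 / 2 * (3 * C1 + γ * C1) + 1 / 2 * (C1 ^ 2 * γ * b ^ 2 + 2 * C1 * b ^ 2)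
    + C6 * b + C6 ^ 2 / (4 * k) with hC8
  have hC80 : 0 < C8 := by positivity
  refine ⟨γ, hγ0, 1 + 48 * C1 ^ 2 * (b ^ 2 + 1) / δ, by
    have : 0 ≤ 48 * C1 ^ 2 * (b ^ 2 + 1) / δ := by positivity
    linarith, 1 + γ + C8 / k, by
    have : 0 ≤ C8 / k := by positivity
    linarith, min (δ / (16 * γ)) (δ / (8 * C8)), by positivity, ?_⟩
  intro ri y μ s p p' P σ T G W g2 X1 X2 X3 X4 hri hy hy1 hriy hμ1 hμ2 hμ3 hg2 hG hTG hP hσ hσ1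
    hσP hσr hp hp' hs hdich hX1 hX2 hX3 hX4
  have hM0 : 0 < 1 + 48 * C1 ^ 2 * (b ^ 2 + 1) / δ := by positivity
  refine scalar_core b C1 lam δ γ C5 ν C6 k C8 _ _ _ hb hC1 hlam hδ hδ1 hγ0 hγ1 hγ2 hC5 hν0 hνb
    hC6 hC60 hk hk0 hC8 hC80 ?_ rfl ?_ ?_ ri y μ s p p' P σ T G W g2 X1 X2 X3 X4 hri hy hy1
    hriy hμ1 hμ2 hμ3 hg2 hG hTG hP hσ hσ1 hσP hσr hp hp' hs hdich hX1 hX2 hX3 hX4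
  · have : 48 * C1 ^ 2 * (b ^ 2 + 1) ≤ δ * (1 + 48 * C1 ^ 2 * (b ^ 2 + 1) / δ) := by
      rw [mul_add δ, mul_div_cancel₀ _ hδ.ne']; linarith
    rw [mul_one_div, div_le_iff₀ hM0]; linarith
  · rw [← le_div_iff₀ hγ0]
    refine (min_le_left _ _).trans (le_of_eq ?_)
    rw [div_div]
  · rw [← le_div_iff₀ hC80]
    refine (min_le_right _ _).trans (le_of_eq ?_)
    rw [div_div]

end AL

namespace AL

open scoped Topology

variable {n : ℕ}

/-- Conjugation of the operator with a radial exponential weight. -/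
lemma conj_id {𝒜 : En n → En n →L[ℝ] En n} {Ψ p : ℝ → ℝ} {p1 : ℝ} {v : En n → ℝ} {x : En n}
    (hx : x ≠ 0) (hA : DifferentiableAt ℝ 𝒜 x)
    (hsym : ∀ ξ η : En n, inner ℝ (𝒜 x ξ) η = inner ℝ ξ (𝒜 x η))
    (hΨ : ∀ t, HasDerivAt Ψ (p t) t) (hΨ2 : ContDiff ℝ 2 Ψ)
    (hp : HasDerivAt p p1 (Real.log ‖x‖)) (hv : ContDiffAt ℝ 2 v x) :
    divg (fun y => 𝒜 y (gradient (fun z => Real.exp (Ψ (Real.log ‖z‖)) * v z) y)) x =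
      Real.exp (Ψ (Real.log ‖x‖)) * divg (fun y => 𝒜 y (gradient v y)) x
      + 2 * p (Real.log ‖x‖) / ‖x‖ ^ 2 *
        inner ℝ (𝒜 x x) (gradient (fun z => Real.exp (Ψ (Real.log ‖z‖)) * v z) x)
      + Real.exp (Ψ (Real.log ‖x‖)) * v x / ‖x‖ ^ 2 *
        (inner ℝ (𝒜 x x) x / ‖x‖ ^ 2 * (p1 - p (Real.log ‖x‖) ^ 2 - 2 * p (Real.log ‖x‖))
          + p (Real.log ‖x‖) * divg (fun y => 𝒜 y y) x) := by
  have hr : 0 < ‖x‖ := norm_pos_iff.2 hx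
  have hF : ∀ t, HasDerivAt (fun t => Real.exp (Ψ t)) (p t * Real.exp (Ψ t)) t := fun t => by
    have := (hΨ t).exp
    rwa [mul_comm] at this
  have hF1 : HasDerivAt (fun t => p t * Real.exp (Ψ t))
      (p1 * Real.exp (Ψ (Real.log ‖x‖)) + p (Real.log ‖x‖) *
        (p (Real.log ‖x‖) * Real.exp (Ψ (Real.log ‖x‖)))) (Real.log ‖x‖) := hp.mul (hF _)
  have hfs : ContDiffAt ℝ 2 (fun z : En n => Real.exp (Ψ (Real.log ‖z‖))) x :=
    contDiffAt_rad (F := fun t => Real.exp (Ψ t)) (hΨ2.exp) hx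
  rw [divg_mul hA hsym hfs hv]
  rw [divg_rad hx hA hF hF1]
  rw [gradient_mul (hfs.differentiableAt (by simp)) (hv.differentiableAt (by simp))]
  rw [gradient_rad hx (hF _), map_smul, inner_smul_left, inner_add_right, inner_smul_right,
    inner_smul_right, inner_smul_right]
  simp only [RCLike.conj_to_real]
  field_simp
  ring

lemma hasFDerivAt_quad {𝒜 : En n → En n →L[ℝ] En n} {Q : ℝ → ℝ} {Q1 : ℝ} {x : En n}
    (hx : x ≠ 0) (hA : DifferentiableAt ℝ 𝒜 x) (hQ : HasDerivAt Q Q1 (Real.log ‖x‖)) :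
    DifferentiableAt ℝ (fun y => Q (Real.log ‖y‖) * inner ℝ (𝒜 y y) y + 1) x ∧
    ∀ ξ, fderiv ℝ (fun y => Q (Real.log ‖y‖) * inner ℝ (𝒜 y y) y + 1) x ξ =
      Q1 / ‖x‖ ^ 2 * inner ℝ x ξ * inner ℝ (𝒜 x x) x + Q (Real.log ‖x‖) *
        (inner ℝ (𝒜 x x) ξ + inner ℝ (fderiv ℝ (fun y => 𝒜 y y) x ξ) x) := by
  have hZ : DifferentiableAt ℝ (fun y => 𝒜 y y) x := hA.clm_apply differentiableAt_id
  have h1 := hasFDerivAt_rad hx hQ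
  have h2 : HasFDerivAt (fun y => inner ℝ (𝒜 y y) y) _ x :=
    hZ.hasFDerivAt.inner ℝ (hasFDerivAt_id x)
  have h3 := (h1.mul h2).add_const 1
  refine ⟨h3.differentiableAt, fun ξ => ?_⟩
  have h4 := h3.fderiv
  have : fderiv ℝ (fun y => Q (Real.log ‖y‖) * inner ℝ (𝒜 y y) y + 1) x = _ := h4
  rw [this]
  simp
  ring

/-- The Carleman weights, in terms of `t = log |x|`. -/
structure Wt (n : ℕ) (γ δ α M Λ y1 : ℝ) where
  P : ℝ → ℝ
  σ : ℝ → ℝ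
  Ψ : ℝ → ℝ
  H : ℝ → ℝ
  hΨ : ∀ t, HasDerivAt Ψ (((n : ℝ) - 1) / 2 + P t) t
  hP : ∀ t, HasDerivAt P (P t * (γ * Real.exp (-α * t) - 2 * σ t)) t
  hH : ∀ t, HasDerivAt H ((2 - (n : ℝ) - (γ * Real.exp (-α * t) + (2 - δ) * σ t)) * H t) t
  P0 : ∀ t, 0 ≤ P t
  σ0 : ∀ t, 0 ≤ σ t
  σ1 : ∀ t, σ t ≤ 1
  H0 : ∀ t, 0 < H t
  cΨ : ContDiff ℝ 2 Ψ
  cP : ContDiff ℝ 1 P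
  cH : ContDiff ℝ 1 H
  b1 : ∀ t, 0 < t → σ t * P t ^ 2 * Real.exp (-2 * t) ≤ 1 / M
  b2 : ∀ t, 0 < t → σ t * Real.exp (-2 * t) ≤ 1 / M
  dich : ∀ t, 0 < t → (Real.exp (-α * t) ≤ y1 ∨ (Λ ≤ P t ∧ Λ ≤ P t ^ 2 * Real.exp (-2 * t)))

/-- Weighted function. -/
def Wfun (Ψ : ℝ → ℝ) (v : En n → ℝ) : En n → ℝ := fun z => Real.exp (Ψ (Real.log ‖z‖)) * v z

/-- The potential in the Carleman vector field. -/
def qfun (𝒜 : En n → En n →L[ℝ] En n) (p : ℝ → ℝ) : En n → ℝ := fun y =>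
  (fun t => p t ^ 2 * Real.exp (-4 * t)) (Real.log ‖y‖) * inner ℝ (𝒜 y y) y + 1

/-- The Carleman vector field. -/
def Vfun (𝒜 : En n → En n →L[ℝ] En n) (W h q : En n → ℝ) : En n → En n := fun y =>
  (h y * inner ℝ (𝒜 y y) (gradient W y)) • 𝒜 y (gradient W y)
      - ((1 / 2) * (h y * inner ℝ (𝒜 y (gradient W y)) (gradient W y))) • 𝒜 y y
      + ((1 / 2) * (h y * (q y * W y ^ 2))) • 𝒜 y y

lemma contDiffAt_Wfun {Ψ : ℝ → ℝ} {v : En n → ℝ} {x : En n} (hx : x ≠ 0)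
    (hΨ2 : ContDiff ℝ 2 Ψ) (hv : ContDiffAt ℝ 2 v x) : ContDiffAt ℝ 2 (Wfun Ψ v) x :=
  (contDiffAt_rad (F := fun t => Real.exp (Ψ t)) (hΨ2.exp) hx).mul hv

lemma pointwise_id {𝒜 : En n → En n →L[ℝ] En n} {γ δ α M Λ y1 : ℝ} (w : Wt n γ δ α M Λ y1)
    {v : En n → ℝ} {x : En n} (hx : x ≠ 0) (hA : DifferentiableAt ℝ 𝒜 x)
    (hsym : ∀ ξ η : En n, inner ℝ (𝒜 x ξ) η = inner ℝ ξ (𝒜 x η)) (hv : ContDiffAt ℝ 2 v x)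
    (t r2 μ d T G W p p1 s : ℝ) (g : En n) (ht : t = Real.log ‖x‖) (hr2 : r2 = ‖x‖ ^ 2)
    (hμ : μ = inner ℝ (𝒜 x x) x / r2) (hd : d = divg (fun y => 𝒜 y y) x)
    (hg : g = gradient (Wfun w.Ψ v) x)
    (hT : T = inner ℝ (𝒜 x x) g) (hG : G = inner ℝ (𝒜 x g) g) (hW : W = Wfun w.Ψ v x)
    (hp : p = ((n : ℝ) - 1) / 2 + w.P t)
    (hp1 : p1 = w.P t * (γ * Real.exp (-α * t) - 2 * w.σ t))
    (hs : s = γ * Real.exp (-α * t) + (2 - δ) * w.σ t) :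
    divg (Vfun 𝒜 (Wfun w.Ψ v) (fun y => w.H (Real.log ‖y‖))
      (qfun 𝒜 (fun t => ((n : ℝ) - 1) / 2 + w.P t))) x =
    w.H t * (T * (Real.exp (w.Ψ t) * (divg (fun y => 𝒜 y (gradient v y)) x + v x)) +
      (T ^ 2 * r2⁻¹ * (2 * w.P t + 1 - s) + T * W * r2⁻¹ * (μ * (p1 - 2 * p) + p * d)
      + (inner ℝ (fderiv ℝ (fun y => 𝒜 y y) x (𝒜 x g)) g - G
          - 1 / 2 * inner ℝ (fderiv ℝ 𝒜 x (𝒜 x x) g) g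
          - 1 / 2 * G * ((2 - (n : ℝ)) * (μ - 1) + (d - n)))
      + 1 / 2 * s * μ * G
      + 1 / 2 * W ^ 2 * (2 + ((2 - (n : ℝ)) * μ + d - 2) - s * μ)
      + 1 / 2 * W ^ 2 * r2⁻¹ * (μ ^ 2 * (2 * p * p1 - s * p ^ 2)
          + p ^ 2 * ((2 - (n : ℝ)) * μ ^ 2 + μ * d - 4 * μ ^ 2 + 2
            + ((inner ℝ (fderiv ℝ (fun y => 𝒜 y y) x (𝒜 x x)) x + inner ℝ (𝒜 x x) (𝒜 x x)) / r2
              - 2))))) := by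
  have hr : 0 < ‖x‖ := norm_pos_iff.2 hx
  have hr20 : 0 < r2 := by rw [hr2]; positivity
  have hWs := contDiffAt_Wfun hx w.cΨ hv
  have hpd : HasDerivAt (fun t => ((n : ℝ) - 1) / 2 + w.P t) p1 (Real.log ‖x‖) := by
    rw [hp1, ht]; exact (w.hP _).const_add _
  have hQ : HasDerivAt (fun t => (((n : ℝ) - 1) / 2 + w.P t) ^ 2 * Real.exp (-4 * t))
      ((2 * p * p1 - 4 * p ^ 2) * (r2 ^ 2)⁻¹) (Real.log ‖x‖) := by
    have h1 : HasDerivAt (fun t : ℝ => Real.exp (-4 * t)) (Real.exp (-4 * (Real.log ‖x‖)) * (-4))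
      (Real.log ‖x‖) := by
      have := ((hasDerivAt_id (Real.log ‖x‖)).const_mul (-4)).exp
      simpa using this
    have := (hpd.pow 2).mul h1
    refine this.congr_deriv ?_
    rw [exp_neg_four_log hr, hr2, hp, ht]
    simp
    ring
  have hq := hasFDerivAt_quad hx hA hQ
  have hh := hasFDerivAt_rad hx (w.hH _)
  have hc := conj_id hx hA hsym w.hΨ w.cΨ hpd hv
  have hdm := div_main hA hsym hWs hh.differentiableAt hq.1
  unfold Vfun qfun
  rw [hdm]
  simp only [fderiv_rad hx (w.hH _), hq.2]
  have hWu : (fun z => Real.exp (w.Ψ (Real.log ‖z‖)) * v z) = Wfun w.Ψ v := rfl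
  rw [hWu] at hc
  rw [hc, ← hg, ← hd, ← ht, ← hr2, ← hW, ← hT, ← hG, ← hp]
  have e1 : inner ℝ x (𝒜 x g) = T := by rw [hT, hsym]
  have e2 : inner ℝ x (𝒜 x x) = μ * r2 := by
    rw [hμ, real_inner_comm]; field_simp
  have e3 : inner ℝ (𝒜 x x) x = μ * r2 := by rw [hμ]; field_simp
  rw [e1, e2, e3, ← hs, show (-4 : ℝ) * t = -4 * Real.log ‖x‖ by rw [ht], exp_neg_four_log hr,
    show ‖x‖ ^ 4 = r2 ^ 2 by rw [hr2]; ring]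
  have eW : Real.exp (w.Ψ t) * v x = W := by rw [hW, ht]; rfl
  have eW' : Real.exp (w.Ψ t) * (divg (fun y => 𝒜 y (gradient v y)) x + v x) =
    Real.exp (w.Ψ t) * (divg (fun y => 𝒜 y (gradient v y)) x) + W := by rw [← eW]; ring
  rw [eW', eW]
  have hPp : w.P t = p - ((n : ℝ) - 1) / 2 := by rw [hp]; ring
  rw [hPp]
  generalize divg (fun y => 𝒜 y (gradient v y)) x = D
  generalize Real.exp (w.Ψ t) = E
  generalize inner ℝ (fderiv ℝ (fun y => 𝒜 y y) x (𝒜 x g)) g = k1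
  generalize inner ℝ (fderiv ℝ 𝒜 x (𝒜 x x) g) g = k2
  generalize inner ℝ (fderiv ℝ (fun y => 𝒜 y y) x (𝒜 x x)) x = k3
  generalize inner ℝ (𝒜 x x) (𝒜 x x) = k4
  generalize w.H t = H
  clear hdm hc hq hQ hpd hp1 hs hp hW hG hT hg hd hμ hr2 ht e1 e2 e3 eW eW' hPp hh hWu hWs
  field_simp
  ring

end AL

namespace AL

open scoped Topology

variable {n : ℕ}

/-- Structural assumptions in operator form. -/
structure Good (𝒜 : En n → En n →L[ℝ] En n) (lam α K : ℝ) : Prop where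
  sym : ∀ x ∈ OmegaExt n, ∀ ξ η : En n, inner ℝ (𝒜 x ξ) η = inner ℝ ξ (𝒜 x η)
  smooth : ContDiffOn ℝ 1 𝒜 (OmegaExt n)
  ell : ∀ x ∈ OmegaExt n, ∀ ξ : En n, lam * ‖ξ‖ ^ 2 ≤ inner ℝ (𝒜 x ξ) ξ
  dec0 : ∀ x ∈ OmegaExt n, ‖𝒜 x - ContinuousLinearMap.id ℝ (En n)‖ ≤ K * ‖x‖ ^ (-α)
  dec1 : ∀ x ∈ OmegaExt n, ‖x‖ * ‖fderiv ℝ 𝒜 x‖ ≤ K * ‖x‖ ^ (-α)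
  lam0 : 0 < lam
  α0 : 0 < α
  α1 : α ≤ 1
  K1 : 1 ≤ K

lemma isOpen_Omega : IsOpen (OmegaExt n) := isOpen_lt continuous_const continuous_norm

lemma Omega_ne {x : En n} (hx : x ∈ OmegaExt n) : x ≠ 0 := by
  rintro rfl
  have : (1 : ℝ) < ‖(0 : En n)‖ := hx
  simp at this
  linarith

namespace Good

variable {𝒜 : En n → En n →L[ℝ] En n} {lam α K : ℝ} (h : Good 𝒜 lam α K)
include h

lemma diffAt {x : En n} (hx : x ∈ OmegaExt n) : DifferentiableAt ℝ 𝒜 x :=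
  (h.smooth.contDiffAt (isOpen_Omega.mem_nhds hx)).differentiableAt (by simp)

lemma y_pos {x : En n} (hx : x ∈ OmegaExt n) : 0 < ‖x‖ ^ (-α) :=
  Real.rpow_pos_of_pos (norm_pos_iff.2 (Omega_ne hx)) _

lemma y_le {x : En n} (hx : x ∈ OmegaExt n) : ‖x‖ ^ (-α) ≤ 1 :=
  Real.rpow_le_one_of_one_le_of_nonpos (le_of_lt hx) (by linarith [h.α0])

lemma ri_le {x : En n} (hx : x ∈ OmegaExt n) : (‖x‖ ^ 2)⁻¹ ≤ (‖x‖ ^ (-α)) ^ 2 := by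
  rw [← inv_pow]
  have : ‖x‖⁻¹ ≤ ‖x‖ ^ (-α) := by
    rw [← Real.rpow_neg_one]
    exact Real.rpow_le_rpow_of_exponent_le (le_of_lt hx) (by linarith [h.α1])
  gcongr

lemma A_sub {x : En n} (hx : x ∈ OmegaExt n) (ξ : En n) :
    ‖𝒜 x ξ - ξ‖ ≤ K * ‖x‖ ^ (-α) * ‖ξ‖ := by
  have := (𝒜 x - ContinuousLinearMap.id ℝ (En n)).le_of_opNorm_le (h.dec0 x hx) ξ
  simpa using this

lemma A_le {x : En n} (hx : x ∈ OmegaExt n) (ξ : En n) : ‖𝒜 x ξ‖ ≤ (1 + K) * ‖ξ‖ := by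
  have h1 := h.A_sub hx ξ
  have h2 : ‖𝒜 x ξ‖ ≤ ‖𝒜 x ξ - ξ‖ + ‖ξ‖ := by simpa using norm_add_le (𝒜 x ξ - ξ) ξ
  have h3 : K * ‖x‖ ^ (-α) * ‖ξ‖ ≤ K * 1 * ‖ξ‖ := by
    have := h.K1
    gcongr
    exact h.y_le hx
  linarith

lemma DA_le {x : En n} (hx : x ∈ OmegaExt n) (ξ η : En n) :
    ‖x‖ * ‖fderiv ℝ 𝒜 x ξ η‖ ≤ K * ‖x‖ ^ (-α) * ‖ξ‖ * ‖η‖ := by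
  have h1 := (fderiv ℝ 𝒜 x).le_opNorm₂ ξ η
  calc _ ≤ ‖x‖ * (‖fderiv ℝ 𝒜 x‖ * ‖ξ‖ * ‖η‖) := by gcongr
    _ = (‖x‖ * ‖fderiv ℝ 𝒜 x‖) * ‖ξ‖ * ‖η‖ := by ring
    _ ≤ _ := by
      have := h.dec1 x hx
      gcongr

lemma DZ_eq {x : En n} (hx : x ∈ OmegaExt n) (ξ : En n) :
    fderiv ℝ (fun y => 𝒜 y y) x ξ = 𝒜 x ξ + fderiv ℝ 𝒜 x ξ x := by
  have := (h.diffAt hx).hasFDerivAt.clm_apply (hasFDerivAt_id x)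
  have h2 : fderiv ℝ (fun y => 𝒜 y y) x = _ := this.fderiv
  rw [h2]; simp

lemma DZ_sub {x : En n} (hx : x ∈ OmegaExt n) (ξ : En n) :
    ‖fderiv ℝ (fun y => 𝒜 y y) x ξ - ξ‖ ≤ 2 * K * ‖x‖ ^ (-α) * ‖ξ‖ := by
  rw [h.DZ_eq hx]
  have h1 := h.A_sub hx ξ
  have h2 := h.DA_le hx ξ x
  have hr : 0 < ‖x‖ := norm_pos_iff.2 (Omega_ne hx)
  have h3 : ‖fderiv ℝ 𝒜 x ξ x‖ ≤ K * ‖x‖ ^ (-α) * ‖ξ‖ := by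
    have : ‖x‖ * ‖fderiv ℝ 𝒜 x ξ x‖ ≤ ‖x‖ * (K * ‖x‖ ^ (-α) * ‖ξ‖) := by linarith
    exact le_of_mul_le_mul_left this hr
  have h4 : 𝒜 x ξ + fderiv ℝ 𝒜 x ξ x - ξ = (𝒜 x ξ - ξ) + fderiv ℝ 𝒜 x ξ x := by abel
  rw [h4]
  have := norm_add_le (𝒜 x ξ - ξ) (fderiv ℝ 𝒜 x ξ x)
  linarith

lemma d_sub {x : En n} (hx : x ∈ OmegaExt n) :
    |divg (fun y => 𝒜 y y) x - n| ≤ n * (2 * K * ‖x‖ ^ (-α)) :=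
  abs_divg_sub_le (h.DZ_sub hx)

lemma mu_sub {x : En n} (hx : x ∈ OmegaExt n) :
    |inner ℝ (𝒜 x x) x / ‖x‖ ^ 2 - 1| ≤ K * ‖x‖ ^ (-α) := by
  have hr : 0 < ‖x‖ := norm_pos_iff.2 (Omega_ne hx)
  have e : inner ℝ (𝒜 x x) x / ‖x‖ ^ 2 - 1 = inner ℝ (𝒜 x x - x) x / ‖x‖ ^ 2 := by
    rw [inner_sub_left, real_inner_self_eq_norm_sq]; field_simp
  rw [e, abs_div, abs_of_pos (by positivity : 0 < ‖x‖ ^ 2), div_le_iff₀ (by positivity)]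
  have h1 := abs_real_inner_le_norm (𝒜 x x - x) x
  have h2 := mul_le_mul_of_nonneg_right (h.A_sub hx x) (norm_nonneg x)
  linarith

lemma cs {x : En n} (hx : x ∈ OmegaExt n) (ξ η : En n) :
    inner ℝ (𝒜 x ξ) η ^ 2 ≤ inner ℝ (𝒜 x ξ) ξ * inner ℝ (𝒜 x η) η := by
  have hnn : ∀ ζ : En n, 0 ≤ inner ℝ (𝒜 x ζ) ζ := fun ζ =>
    le_trans (mul_nonneg h.lam0.le (sq_nonneg _)) (h.ell x hx ζ)
  have key : ∀ t : ℝ, 0 ≤ inner ℝ (𝒜 x η) η * (t * t) + 2 * inner ℝ (𝒜 x ξ) η * t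
      + inner ℝ (𝒜 x ξ) ξ := by
    intro t
    have := hnn (ξ + t • η)
    rw [map_add, map_smul, inner_add_left, inner_add_right, inner_add_right, inner_smul_left,
      inner_smul_left, inner_smul_right, inner_smul_right] at this
    simp only [RCLike.conj_to_real] at this
    have hs : inner ℝ (𝒜 x η) ξ = inner ℝ (𝒜 x ξ) η := by rw [h.sym x hx, real_inner_comm]
    rw [hs] at this
    linarith
  have := discrim_le_zero key
  unfold discrim at this
  linarith

end Good

lemma err1 {N K y g2 G a k2 m e : ℝ} (hN : 1 ≤ N) (hK : 1 ≤ K) (hy : 0 ≤ y) (hg2 : 0 ≤ g2)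
    (hG0 : 0 ≤ G) (hG : G ≤ (1 + K) * g2) (ha : |a| ≤ 2 * K * (1 + K) * y * g2)
    (hk : |k2| ≤ K * (1 + K) * y * g2) (hm : |m| ≤ K * y) (he : |e| ≤ N * (2 * K * y)) :
    |a - 1 / 2 * k2 - 1 / 2 * G * ((2 - N) * m + e)| ≤ 100 * (N + 1) * (1 + K) ^ 2 * y * g2 := by
  have h1 : |(2 - N) * m + e| ≤ (N + 1) * (K * y) + N * (2 * K * y) := by
    refine (abs_add_le _ _).trans (add_le_add ?_ he)
    rw [abs_mul]
    have : |2 - N| ≤ N + 1 := by rw [abs_le]; constructor <;> linarith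
    exact mul_le_mul this hm (abs_nonneg _) (by linarith)
  have h2 : |G * ((2 - N) * m + e)| ≤ (1 + K) * g2 * ((N + 1) * (K * y) + N * (2 * K * y)) := by
    rw [abs_mul, abs_of_nonneg hG0]
    exact mul_le_mul hG h1 (abs_nonneg _) (by positivity)
  have h3 : 100 * (N + 1) * (1 + K) ^ 2 * y * g2 = 100 * (N + 1) * (1 + K) * y * g2 + 100 * N * (K * (1 + K) * y * g2) + 100 * (K * (1 + K) * y * g2) := by ring
  have h4 : 0 ≤ K * (1 + K) * y * g2 := by positivity
  have h5 : 0 ≤ N * (K * (1 + K) * y * g2) := by positivity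
  have h6 : 0 ≤ (N + 1) * (1 + K) * y * g2 := by positivity
  have h7 := abs_le.1 h2
  have h8 := abs_le.1 ha
  have h9 := abs_le.1 hk
  rw [abs_le]
  constructor <;> linarith only [h3, h4, h5, h6, h7.1, h7.2, h8.1, h8.2, h9.1, h9.2]

lemma err2 {N K y μ d : ℝ} (hN : 1 ≤ N) (hK : 1 ≤ K) (hy : 0 ≤ y) 
    (hm : |μ - 1| ≤ K * y) (he : |d - N| ≤ N * (2 * K * y)) :
    |(2 - N) * μ + d - 2| ≤ 100 * (N + 1) * (1 + K) ^ 2 * y := by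
  have h1 : |(2 - N) * (μ - 1) + (d - N)| ≤ (N + 1) * (K * y) + N * (2 * K * y) := by
    refine (abs_add_le _ _).trans (add_le_add ?_ he)
    rw [abs_mul]
    have : |2 - N| ≤ N + 1 := by rw [abs_le]; constructor <;> linarith
    exact mul_le_mul this hm (abs_nonneg _) (by linarith)
  rw [show (2 - N) * μ + d - 2 = (2 - N) * (μ - 1) + (d - N) by ring]
  refine h1.trans ?_
  have h4 : 0 ≤ K * y := by positivity
  have h5 : 0 ≤ N * (K * y) := by positivity
  have h6 : 0 ≤ (N + 1) * y := by positivity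
  have h7 : 0 ≤ (N + 1) * K ^ 2 * y := by positivity
  linarith only [h4, h5, h6, h7]

lemma err3 {N K y μ d e : ℝ} (hN : 1 ≤ N) (hK : 1 ≤ K) (hy : 0 ≤ y) (hy1 : y ≤ 1)
    (hm : |μ - 1| ≤ K * y) (hd : |d - N| ≤ N * (2 * K * y)) (he : |e| ≤ K * (6 + 4 * K) * y) :
    |(2 - N) * μ ^ 2 + μ * d - 4 * μ ^ 2 + 2 + e| ≤ 100 * (N + 1) * (1 + K) ^ 2 * y := by
  have hKy : K * y ≤ K := by nlinarith
  have hNKy : N * (2 * K * y) ≤ N * (2 * K) := by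
    have : N * 2 * (K * y) ≤ N * 2 * K := by gcongr
    linarith
  have h1 : |(-2 - N) * ((μ - 1) * (μ + 1))| ≤ (N + 2) * (K * y * (2 + K)) := by
    rw [abs_mul, abs_mul]
    have a1 : |-2 - N| ≤ N + 2 := by rw [abs_le]; constructor <;> linarith
    have a2 : |μ + 1| ≤ 2 + K := by
      have := abs_le.1 hm
      rw [abs_le]; constructor <;> linarith
    gcongr
  have h2 : |(μ - 1) * d| ≤ K * y * (N + N * (2 * K)) := by
    rw [abs_mul]
    have a2 : |d| ≤ N + N * (2 * K) := by
      have := abs_le.1 hd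
      rw [abs_le]; constructor <;> linarith
    gcongr
  rw [show (2 - N) * μ ^ 2 + μ * d - 4 * μ ^ 2 + 2 + e =
    (-2 - N) * ((μ - 1) * (μ + 1)) + (μ - 1) * d + (d - N) + e by ring]
  have h4 : 0 ≤ K * y := by positivity
  have h5 : 0 ≤ N * (K * y) := by positivity
  have h6 : 0 ≤ (N + 1) * y := by positivity
  have h7 : 0 ≤ K * (K * y) := by positivity
  have h8 : 0 ≤ N * (K * (K * y)) := by positivity
  have h1 := abs_le.1 h1
  have h2 := abs_le.1 h2
  have hd := abs_le.1 hd
  have he := abs_le.1 he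
  rw [abs_le]
  constructor <;> linarith only [h4, h5, h6, h7, h8, h1.1, h1.2, h2.1, h2.2, hd.1, hd.2, he.1, he.2]

lemma err4 {N K y μ d p p1 : ℝ} (hN : 1 ≤ N) (hK : 1 ≤ K) (hy : 0 ≤ y) (hy1 : y ≤ 1)
    (hm : |μ - 1| ≤ K * y) (hd : |d - N| ≤ N * (2 * K * y)) (hp : 0 ≤ p) :
    |μ * (p1 - 2 * p) + p * d| ≤ 100 * (N + 1) * (1 + K) ^ 2 * (|p1| + p) := by
  have hKy : K * y ≤ K := by nlinarith
  have hNKy : N * (2 * K * y) ≤ N * (2 * K) := by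
    have : N * 2 * (K * y) ≤ N * 2 * K := by gcongr
    linarith
  have a1 : |μ| ≤ 1 + K := by
    have := abs_le.1 hm
    rw [abs_le]; constructor <;> linarith
  have a2 : |d| ≤ N + N * (2 * K) := by
    have := abs_le.1 hd
    rw [abs_le]; constructor <;> linarith
  have a3 : |p1 - 2 * p| ≤ |p1| + 2 * p := by
    have := abs_sub p1 (2 * p)
    rwa [abs_of_nonneg (by positivity : 0 ≤ 2 * p)] at this
  refine (abs_add_le _ _).trans ?_
  rw [abs_mul, abs_mul, abs_of_nonneg hp]
  have b1 : |μ| * |p1 - 2 * p| ≤ (1 + K) * (|p1| + 2 * p) := by gcongr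
  have b2 : p * |d| ≤ p * (N + N * (2 * K)) := by gcongr
  have c0 := abs_nonneg p1
  have c1 : 0 ≤ K * |p1| := by positivity
  have c2 : 0 ≤ N * (1 + K) ^ 2 * |p1| := by positivity
  have c3 : 0 ≤ N * p := by positivity
  have c4 : 0 ≤ N * K * p := by positivity
  have c5 : 0 ≤ N * K ^ 2 * p := by positivity
  have c6 : 0 ≤ K * p := by positivity
  have c7 : 0 ≤ K ^ 2 * p := by positivity
  have c8 : 0 ≤ K ^ 2 * |p1| := by positivity
  linarith only [b1, b2, c0, c1, c2, c3, c4, c5, c6, c7, c8, hp]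

set_option maxHeartbeats 1000000 in
/-- Uniform constants, pointwise form of the Carleman estimate. -/
lemma pointwise_carleman {𝒜 : En n → En n →L[ℝ] En n} {lam α K : ℝ} (h : Good 𝒜 lam α K)
    (hn : 1 ≤ n) {δ : ℝ} (hδ : 0 < δ) (hδ1 : δ < 1) :
    ∃ γ > 0, ∃ M ≥ 1, ∃ Λ ≥ 1, ∃ y1 > 0, ∀ (w : Wt n γ δ α M Λ y1) (v : En n → ℝ) (x : En n),
      x ∈ OmegaExt n → ContDiffAt ℝ 2 v x →
      w.H (Real.log ‖x‖) * (δ / 8 * (Wfun w.Ψ v x) ^ 2 - 2 / δ * ‖x‖ ^ 2 *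
        (Real.exp (w.Ψ (Real.log ‖x‖)) * (divg (fun y => 𝒜 y (gradient v y)) x + v x)) ^ 2) ≤
      divg (Vfun 𝒜 (Wfun w.Ψ v) (fun y => w.H (Real.log ‖y‖))
        (qfun 𝒜 (fun t => ((n : ℝ) - 1) / 2 + w.P t))) x := by
  have hK := h.K1
  have hn0 : (1 : ℝ) ≤ n := by exact_mod_cast hn
  obtain ⟨γ, hγ, M, hM, Λ, hΛ, y1, hy1, key⟩ := scalar_main (((n : ℝ) - 1) / 2)
    (100 * (n + 1) * (1 + K) ^ 2) lam δ (by linarith) (by nlinarith) h.lam0 hδ hδ1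
  refine ⟨γ, hγ, M, hM, Λ, hΛ, y1, hy1, ?_⟩
  intro w v x hx hv
  have hx0 := Omega_ne hx
  have hr : 0 < ‖x‖ := norm_pos_iff.2 hx0
  have ht0 : 0 < Real.log ‖x‖ := Real.log_pos hx
  obtain ⟨t, ht⟩ : ∃ t, t = Real.log ‖x‖ := ⟨_, rfl⟩
  obtain ⟨r2, hr2⟩ : ∃ t, t = ‖x‖ ^ 2 := ⟨_, rfl⟩
  obtain ⟨μ, hμ⟩ : ∃ t, t = inner ℝ (𝒜 x x) x / r2 := ⟨_, rfl⟩
  obtain ⟨d, hd⟩ : ∃ t, t = divg (fun y => 𝒜 y y) x := ⟨_, rfl⟩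
  obtain ⟨g, hg⟩ : ∃ t, t = gradient (Wfun w.Ψ v) x := ⟨_, rfl⟩
  obtain ⟨T, hT⟩ : ∃ t, t = inner ℝ (𝒜 x x) g := ⟨_, rfl⟩
  obtain ⟨G, hG⟩ : ∃ t, t = inner ℝ (𝒜 x g) g := ⟨_, rfl⟩
  obtain ⟨W, hW⟩ : ∃ t, t = Wfun w.Ψ v x := ⟨_, rfl⟩
  obtain ⟨p, hp⟩ : ∃ s, s = ((n : ℝ) - 1) / 2 + w.P t := ⟨_, rfl⟩
  obtain ⟨p1, hp1⟩ : ∃ s, s = w.P t * (γ * Real.exp (-α * t) - 2 * w.σ t) := ⟨_, rfl⟩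
  obtain ⟨s, hs⟩ : ∃ s, s = γ * Real.exp (-α * t) + (2 - δ) * w.σ t := ⟨_, rfl⟩
  rw [pointwise_id w hx0 (h.diffAt hx) (h.sym x hx) hv t r2 μ d T G W p p1 s g ht hr2 hμ hd hg hT hG
    hW hp hp1 hs, ← ht, ← hr2, ← hW]
  have hr20 : 0 < r2 := by rw [hr2]; positivity
  obtain ⟨y, hy⟩ : ∃ s, s = ‖x‖ ^ (-α) := ⟨_, rfl⟩
  have hye : y = Real.exp (-α * t) := by
    rw [hy, ht, Real.rpow_def_of_pos hr]; ring_nf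
  have hrie : r2⁻¹ = Real.exp (-2 * t) := by rw [ht, exp_neg_two_log hr, hr2]
  have hy0 : 0 < y := hy ▸ h.y_pos hx
  have hyle : y ≤ 1 := hy ▸ h.y_le hx
  have hri : r2⁻¹ ≤ y ^ 2 := by rw [hr2, hy]; exact h.ri_le hx
  have hμ3 : |μ - 1| ≤ K * y := by rw [hμ, hr2, hy]; exact h.mu_sub hx
  have hKy : K * y ≤ K := by nlinarith
  have hμ2 : |μ| ≤ 1 + K := by
    have := abs_le.1 hμ3
    rw [abs_le]; constructor <;> linarith
  have hμ1 : lam ≤ μ := by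
    rw [hμ, le_div_iff₀ hr20, hr2]; exact h.ell x hx x
  have hd3 : |d - n| ≤ n * (2 * K * y) := by rw [hd, hy]; exact h.d_sub hx
  have hGell : lam * ‖g‖ ^ 2 ≤ G := hG ▸ h.ell x hx g
  have hGle : G ≤ (1 + K) * ‖g‖ ^ 2 := by
    rw [hG]
    refine (real_inner_le_norm _ _).trans ?_
    have := mul_le_mul_of_nonneg_right (h.A_le hx g) (norm_nonneg g)
    linarith
  have hG0 : 0 ≤ G := le_trans (mul_nonneg h.lam0.le (sq_nonneg _)) hGell
  have hTG : T ^ 2 * r2⁻¹ ≤ μ * G := by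
    have := h.cs hx x g
    rw [← hT, ← hG] at this
    rw [hμ, div_mul_eq_mul_div, ← div_eq_mul_inv]
    gcongr
  have hg2 : 0 ≤ ‖g‖ ^ 2 := sq_nonneg _
  -- error terms
  have e1 : |inner ℝ (fderiv ℝ (fun y => 𝒜 y y) x (𝒜 x g)) g - G| ≤ 2 * K * (1 + K) * y * ‖g‖ ^ 2 := by
    rw [hG, ← inner_sub_left]
    refine (abs_real_inner_le_norm _ _).trans ?_
    have a1 := h.DZ_sub hx (𝒜 x g)
    have a2 := h.A_le hx g
    rw [← hy] at a1
    calc _ ≤ (2 * K * y * ‖𝒜 x g‖) * ‖g‖ := by gcongr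
      _ ≤ (2 * K * y * ((1 + K) * ‖g‖)) * ‖g‖ := by gcongr
      _ = _ := by ring
  have e2 : |inner ℝ (fderiv ℝ 𝒜 x (𝒜 x x) g) g| ≤ K * (1 + K) * y * ‖g‖ ^ 2 := by
    refine (abs_real_inner_le_norm _ _).trans ?_
    have a1 := h.DA_le hx (𝒜 x x) g
    have a2 := h.A_le hx x
    rw [← hy] at a1
    have a3 : ‖x‖ * ‖fderiv ℝ 𝒜 x (𝒜 x x) g‖ ≤ ‖x‖ * (K * (1 + K) * y * ‖g‖) := by
      calc _ ≤ K * y * ‖𝒜 x x‖ * ‖g‖ := a1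
        _ ≤ K * y * ((1 + K) * ‖x‖) * ‖g‖ := by gcongr
        _ = _ := by ring
    have a4 := le_of_mul_le_mul_left a3 hr
    calc _ ≤ (K * (1 + K) * y * ‖g‖) * ‖g‖ := by gcongr
      _ = _ := by ring
  have e3 : |(inner ℝ (fderiv ℝ (fun y => 𝒜 y y) x (𝒜 x x)) x + inner ℝ (𝒜 x x) (𝒜 x x)) / r2 - 2|
      ≤ K * (6 + 4 * K) * y := by
    have q : (inner ℝ (fderiv ℝ (fun y => 𝒜 y y) x (𝒜 x x)) x + inner ℝ (𝒜 x x) (𝒜 x x)) / r2 - 2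
        = (inner ℝ (fderiv ℝ (fun y => 𝒜 y y) x (𝒜 x x) - 𝒜 x x) x + inner ℝ (𝒜 x x - x) x
          + inner ℝ (𝒜 x x - x) (𝒜 x x) + inner ℝ x (𝒜 x x - x)) / r2 := by
      rw [inner_sub_left, inner_sub_left, inner_sub_left, inner_sub_right,
        real_inner_self_eq_norm_sq x, ← hr2]
      field_simp
      ring
    rw [q, abs_div, abs_of_pos hr20, div_le_iff₀ hr20]
    have a0 := h.A_le hx x
    have a1 := h.DZ_sub hx (𝒜 x x)
    have a2 := h.A_sub hx x
    rw [← hy] at a1 a2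
    have b1 : |inner ℝ (fderiv ℝ (fun y => 𝒜 y y) x (𝒜 x x) - 𝒜 x x) x| ≤ 2 * K * (1 + K) * y * r2 := by
      refine (abs_real_inner_le_norm _ _).trans ?_
      calc _ ≤ (2 * K * y * ‖𝒜 x x‖) * ‖x‖ := by gcongr
        _ ≤ (2 * K * y * ((1 + K) * ‖x‖)) * ‖x‖ := by gcongr
        _ = _ := by rw [hr2]; ring
    have b2 : |inner ℝ (𝒜 x x - x) x| ≤ K * y * r2 := by
      refine (abs_real_inner_le_norm _ _).trans ?_
      calc _ ≤ (K * y * ‖x‖) * ‖x‖ := by gcongr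
        _ = _ := by rw [hr2]; ring
    have b4 : |inner ℝ x (𝒜 x x - x)| ≤ K * y * r2 := by rw [real_inner_comm]; exact b2
    have b3 : |inner ℝ (𝒜 x x - x) (𝒜 x x)| ≤ K * (1 + K) * y * r2 := by
      refine (abs_real_inner_le_norm _ _).trans ?_
      calc _ ≤ (K * y * ‖x‖) * ((1 + K) * ‖x‖) := by gcongr
        _ = _ := by rw [hr2]; ring
    have c : 0 ≤ K * y * r2 * (1 + K) := by positivity
    rw [abs_le] at b1 b2 b3 b4 ⊢
    constructor <;> linarith only [c, b1.1, b2.1, b3.1, b4.1, b1.2, b2.2, b3.2, b4.2]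
  have hS := key r2⁻¹ y μ s p p1 (w.P t) (w.σ t) T G W (‖g‖ ^ 2)
    (inner ℝ (fderiv ℝ (fun y => 𝒜 y y) x (𝒜 x g)) g - G
          - 1 / 2 * inner ℝ (fderiv ℝ 𝒜 x (𝒜 x x) g) g
          - 1 / 2 * G * ((2 - (n : ℝ)) * (μ - 1) + (d - n)))
    ((2 - (n : ℝ)) * μ + d - 2)
    ((2 - (n : ℝ)) * μ ^ 2 + μ * d - 4 * μ ^ 2 + 2
            + ((inner ℝ (fderiv ℝ (fun y => 𝒜 y y) x (𝒜 x x)) x + inner ℝ (𝒜 x x) (𝒜 x x)) / r2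
              - 2))
    (μ * (p1 - 2 * p) + p * d)
    (by positivity) hy0 hyle hri hμ1 ?_ ?_ hg2 hGell hTG (w.P0 t) (w.σ0 t) (w.σ1 t)
    (by rw [hrie]; exact w.b1 t (ht ▸ ht0)) (by rw [hrie]; exact w.b2 t (ht ▸ ht0)) hp
    (by rw [hp1, hye]) (by rw [hs, hye]) (by rw [hrie, hye]; exact w.dich t (ht ▸ ht0)) ?_ ?_ ?_ ?_
  · have hH := w.H0 t
    refine mul_le_mul_of_nonneg_left ?_ hH.le
    generalize Real.exp (w.Ψ t) * (divg (fun y => 𝒜 y (gradient v y)) x + v x) = E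
    refine le_trans ?_ (add_le_add_right hS _)
    have : T * E + δ / 8 * (T ^ 2 * r2⁻¹) + 2 / δ * r2 * E ^ 2 =
      δ / 8 * r2⁻¹ * (T + 4 / δ * r2 * E) ^ 2 := by
      field_simp; ring
    have h2 : 0 ≤ δ / 8 * r2⁻¹ * (T + 4 / δ * r2 * E) ^ 2 := by positivity
    linarith
  · have := (abs_le.1 hμ2).2
    nlinarith only [this, hK, hn0, mul_nonneg (by linarith : 0 ≤ (n:ℝ)) (sq_nonneg (1 + K)), sq_nonneg (K - 1)]
  · refine hμ3.trans ?_
    gcongr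
    nlinarith
  · exact err1 hn0 hK hy0.le hg2 hG0 hGle e1 e2 hμ3 hd3
  · exact err2 hn0 hK hy0.le hμ3 hd3
  · exact err3 hn0 hK hy0.le hyle hμ3 hd3 e3
  · refine err4 hn0 hK hy0.le hyle hμ3 hd3 ?_
    have := w.P0 t
    rw [hp]; linarith

end AL

namespace AL

open scoped Topology

variable {n : ℕ}

lemma continuousOn_divg {V : En n → En n} {s : Set (En n)} (hs : IsOpen s) (hV : ContDiffOn ℝ 1 V s) :
    ContinuousOn (divg V) s := by
  have h1 : ContinuousOn (fderiv ℝ V) s := hV.continuousOn_fderiv_of_isOpen hs (by simp)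
  unfold divg
  refine continuousOn_finsetSum _ fun i _ => ?_
  have h2 : ContinuousOn (fun x => fderiv ℝ V x (EuclideanSpace.single i 1)) s :=
    h1.clm_apply continuousOn_const
  exact (EuclideanSpace.proj (𝕜 := ℝ) i).continuous.comp_continuousOn h2

lemma continuous_of_supp {F : Type*} [TopologicalSpace F] [Zero F] {f : En n → F} {k s : Set (En n)}
    (hs : IsOpen s) (hk : IsClosed k) (hks : k ⊆ s) (hf : ContinuousOn f s)
    (h0 : ∀ x ∉ k, f x = 0) : Continuous f := by
  rw [continuous_iff_continuousAt]
  intro x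
  by_cases hx : x ∈ s
  · exact hf.continuousAt (hs.mem_nhds hx)
  · have hxk : x ∉ k := fun h => hx (hks h)
    have : f =ᶠ[𝓝 x] fun _ => 0 := by
      filter_upwards [hk.isOpen_compl.mem_nhds hxk] with y hy using h0 y hy
    exact continuousAt_const.congr this.symm

lemma hasCompactSupport_of_supp {F : Type*} [Zero F] {f : En n → F} {k : Set (En n)}
    (hk : IsCompact k) (h0 : ∀ x ∉ k, f x = 0) : HasCompactSupport f :=
  HasCompactSupport.intro hk fun x hx => h0 x hx

lemma integrable_of_supp {f : En n → ℝ} {k s : Set (En n)}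
    (hs : IsOpen s) (hk : IsCompact k) (hks : k ⊆ s) (hf : ContinuousOn f s)
    (h0 : ∀ x ∉ k, f x = 0) : Integrable f :=
  (continuous_of_supp hs hk.isClosed hks hf h0).integrable_of_hasCompactSupport
    (hasCompactSupport_of_supp hk h0)

lemma contDiff_of_supp {F : Type*} [NormedAddCommGroup F] [NormedSpace ℝ F] {f : En n → F}
    {k s : Set (En n)} {m : WithTop ℕ∞}
    (hs : IsOpen s) (hk : IsClosed k) (hks : k ⊆ s) (hf : ContDiffOn ℝ m f s)
    (h0 : ∀ x ∉ k, f x = 0) : ContDiff ℝ m f := by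
  rw [contDiff_iff_contDiffAt]
  intro x
  by_cases hx : x ∈ s
  · exact hf.contDiffAt (hs.mem_nhds hx)
  · have hxk : x ∉ k := fun h => hx (hks h)
    have : f =ᶠ[𝓝 x] fun _ => 0 := by
      filter_upwards [hk.isOpen_compl.mem_nhds hxk] with y hy using h0 y hy
    exact contDiffAt_const.congr_of_eventuallyEq this

lemma gradient_of_supp {f : En n → ℝ} {k : Set (En n)} (hk : IsClosed k) (h0 : ∀ x ∉ k, f x = 0)
    {x : En n} (hx : x ∉ k) : gradient f x = 0 := by
  have : f =ᶠ[𝓝 x] fun _ => 0 := by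
    filter_upwards [hk.isOpen_compl.mem_nhds hx] with y hy using h0 y hy
  rw [gradient, this.fderiv_eq]
  simp

lemma divg_of_supp {V : En n → En n} {k : Set (En n)} (hk : IsClosed k) (h0 : ∀ x ∉ k, V x = 0)
    {x : En n} (hx : x ∉ k) : divg V x = 0 := by
  have : V =ᶠ[𝓝 x] fun _ => 0 := by
    filter_upwards [hk.isOpen_compl.mem_nhds hx] with y hy using h0 y hy
  rw [divg_congr this]
  simp [divg]

lemma contDiffOn_rad {F : ℝ → ℝ} {k : WithTop ℕ∞} (hF : ContDiff ℝ k F) :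
    ContDiffOn ℝ k (fun y : En n => F (Real.log ‖y‖)) (OmegaExt n) := fun _ hx =>
  (contDiffAt_rad hF (Omega_ne hx)).contDiffWithinAt

lemma contDiffOn_gradient {f : En n → ℝ} {k m : WithTop ℕ∞} {s : Set (En n)} (hs : IsOpen s)
    (hf : ContDiffOn ℝ k f s) (hm : m + 1 ≤ k) : ContDiffOn ℝ m (gradient f) s := fun _ hx =>
  (contDiffAt_gradient (hf.contDiffAt (hs.mem_nhds hx)) hm).contDiffWithinAt

/-- The operator `L v = div (𝒜 ∇ v) + v`. -/
def Lop (𝒜 : En n → En n →L[ℝ] En n) (v : En n → ℝ) (x : En n) : ℝ :=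
  divg (fun y => 𝒜 y (gradient v y)) x + v x

/-- The integrated Carleman estimate. -/
lemma carleman {𝒜 : En n → En n →L[ℝ] En n} {lam α K : ℝ} (h : Good 𝒜 lam α K)
    (hn : 1 ≤ n) {δ : ℝ} (hδ : 0 < δ) (hδ1 : δ < 1) :
    ∃ γ > 0, ∃ M ≥ 1, ∃ Λ ≥ 1, ∃ y1 > 0, ∀ (w : Wt n γ δ α M Λ y1) (v : En n → ℝ) (k : Set (En n)),
      ContDiffOn ℝ 2 v (OmegaExt n) → IsCompact k → k ⊆ OmegaExt n → (∀ x ∉ k, v x = 0) →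
      ∫ x, w.H (Real.log ‖x‖) * (Real.exp (w.Ψ (Real.log ‖x‖)) * v x) ^ 2 ≤
        16 / δ ^ 2 * ∫ x, w.H (Real.log ‖x‖) * ‖x‖ ^ 2 *
          (Real.exp (w.Ψ (Real.log ‖x‖)) * Lop 𝒜 v x) ^ 2 := by
  obtain ⟨γ, hγ, M, hM, Λ, hΛ, y1, hy1, key⟩ := pointwise_carleman h hn hδ hδ1
  refine ⟨γ, hγ, M, hM, Λ, hΛ, y1, hy1, ?_⟩
  intro w v k hv hk hkΩ h0
  have hO := isOpen_Omega (n := n)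
  have hW0 : ∀ x ∉ k, Wfun w.Ψ v x = 0 := fun x hx => by simp [Wfun, h0 x hx]
  have hgW : ∀ x ∉ k, gradient (Wfun w.Ψ v) x = 0 := fun x hx => gradient_of_supp hk.isClosed hW0 hx
  have hgv : ∀ x ∉ k, gradient v x = 0 := fun x hx => gradient_of_supp hk.isClosed h0 hx
  have hL0 : ∀ x ∉ k, Lop 𝒜 v x = 0 := fun x hx => by
    unfold Lop
    rw [divg_of_supp hk.isClosed (fun z hz => by rw [hgv z hz, map_zero]) hx, h0 x hx, add_zero]
  have cψ : ContDiffOn ℝ 2 (fun x : En n => Real.exp (w.Ψ (Real.log ‖x‖))) (OmegaExt n) :=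
    contDiffOn_rad (F := fun t => Real.exp (w.Ψ t)) w.cΨ.exp
  have cH : ContDiffOn ℝ 1 (fun x : En n => w.H (Real.log ‖x‖)) (OmegaExt n) := contDiffOn_rad w.cH
  have cW : ContDiffOn ℝ 2 (Wfun w.Ψ v) (OmegaExt n) := cψ.mul hv
  have cgW : ContDiffOn ℝ 1 (gradient (Wfun w.Ψ v)) (OmegaExt n) :=
    contDiffOn_gradient hO cW (by norm_num)
  have cgv : ContDiffOn ℝ 1 (gradient v) (OmegaExt n) :=
    contDiffOn_gradient hO hv (by norm_num)
  have cL : ContinuousOn (Lop 𝒜 v) (OmegaExt n) :=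
    (continuousOn_divg hO (h.smooth.clm_apply cgv)).add hv.continuousOn
  have cZ : ContDiffOn ℝ 1 (fun y => 𝒜 y y) (OmegaExt n) := h.smooth.clm_apply contDiffOn_id
  have cAg : ContDiffOn ℝ 1 (fun y => 𝒜 y (gradient (Wfun w.Ψ v) y)) (OmegaExt n) :=
    h.smooth.clm_apply cgW
  have cq : ContDiffOn ℝ 1 (qfun 𝒜 (fun t => ((n : ℝ) - 1) / 2 + w.P t)) (OmegaExt n) := by
    unfold qfun
    refine ContDiffOn.add (ContDiffOn.mul (contDiffOn_rad (F := fun t => (((n : ℝ) - 1) / 2 + w.P t) ^ 2 * Real.exp (-4 * t)) ?_) (cZ.inner ℝ contDiffOn_id))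
      contDiffOn_const
    have := w.cP
    fun_prop
  set V := Vfun 𝒜 (Wfun w.Ψ v) (fun y => w.H (Real.log ‖y‖))
        (qfun 𝒜 (fun t => ((n : ℝ) - 1) / 2 + w.P t)) with hV
  have cV : ContDiffOn ℝ 1 V (OmegaExt n) := by
    rw [hV]; unfold Vfun
    exact (((cH.mul (cZ.inner ℝ cgW)).smul cAg).sub
      ((contDiffOn_const.mul (cH.mul (cAg.inner ℝ cgW))).smul cZ)).add
      ((contDiffOn_const.mul (cH.mul (cq.mul ((cW.of_le (by norm_num)).pow 2)))).smul cZ)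
  have hV0 : ∀ x ∉ k, V x = 0 := fun x hx => by
    rw [hV]; unfold Vfun; simp [hgW x hx, hW0 x hx]
  obtain ⟨hVi, hVint⟩ := integral_divg (contDiff_of_supp hO hk.isClosed hkΩ cV hV0)
    (hasCompactSupport_of_supp hk hV0)
  have i1 : Integrable (fun x => w.H (Real.log ‖x‖) * (Real.exp (w.Ψ (Real.log ‖x‖)) * v x) ^ 2) := by
    refine integrable_of_supp hO hk hkΩ ?_ (fun x hx => by simp [h0 x hx])
    exact cH.continuousOn.mul ((cψ.continuousOn.mul hv.continuousOn).pow 2)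
  have i2 : Integrable (fun x => w.H (Real.log ‖x‖) * ‖x‖ ^ 2 *
      (Real.exp (w.Ψ (Real.log ‖x‖)) * Lop 𝒜 v x) ^ 2) := by
    refine integrable_of_supp hO hk hkΩ ?_ (fun x hx => by simp [hL0 x hx])
    exact (cH.continuousOn.mul (continuous_norm.continuousOn.pow 2)).mul
      ((cψ.continuousOn.mul cL).pow 2)
  have hle : ∫ x, (δ / 8 * (w.H (Real.log ‖x‖) * (Real.exp (w.Ψ (Real.log ‖x‖)) * v x) ^ 2)
      - 2 / δ * (w.H (Real.log ‖x‖) * ‖x‖ ^ 2 *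
      (Real.exp (w.Ψ (Real.log ‖x‖)) * Lop 𝒜 v x) ^ 2)) ≤ ∫ x, divg V x := by
    refine integral_mono ((i1.const_mul _).sub (i2.const_mul _)) hVi fun x => ?_
    by_cases hx : x ∈ k
    · refine le_trans (le_of_eq ?_) (key w v x (hkΩ hx) (hv.contDiffAt (hO.mem_nhds (hkΩ hx))))
      unfold Wfun Lop
      ring
    · simp [h0 x hx, hL0 x hx, divg_of_supp hk.isClosed hV0 hx]
  rw [hVint, integral_sub (i1.const_mul _) (i2.const_mul _), integral_const_mul,
    integral_const_mul] at hle
  have : δ / 8 * ∫ x, w.H (Real.log ‖x‖) * (Real.exp (w.Ψ (Real.log ‖x‖)) * v x) ^ 2 ≤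
    2 / δ * ∫ x, w.H (Real.log ‖x‖) * ‖x‖ ^ 2 *
      (Real.exp (w.Ψ (Real.log ‖x‖)) * Lop 𝒜 v x) ^ 2 := by linarith
  have h8 := mul_le_mul_of_nonneg_left this (by positivity : 0 ≤ 8 / δ)
  rw [← mul_assoc, ← mul_assoc] at h8
  have e1 : 8 / δ * (δ / 8) = 1 := by field_simp
  have e2 : 8 / δ * (2 / δ) = 16 / δ ^ 2 := by field_simp; norm_num
  rwa [e1, e2, one_mul] at h8

end AL

namespace AL

open scoped Topology Convolution ContDiff

variable {n : ℕ}

lemma exists_cutoff {k s : Set (En n)} (hk : IsCompact k) (hs : IsOpen s) (hks : k ⊆ s) :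
    ∃ (ζ : En n → ℝ) (k2 : Set (En n)), ContDiff ℝ ∞ ζ ∧ IsCompact k2 ∧ k2 ⊆ s ∧
      (∀ᶠ x in 𝓝ˢ k, ζ x = 1) ∧ (∀ x ∉ k2, ζ x = 0) := by
  obtain ⟨k2, hk2, hkk2, hk2s⟩ := exists_compact_between hk hs hks
  obtain ⟨f, hf0, hf1, -⟩ := exists_contMDiffMap_zero_one_nhds_of_isClosed
    (I := modelWithCornersSelf ℝ (En n)) (n := (⊤ : ℕ∞)) (s := (interior k2)ᶜ) (t := k)
    isOpen_interior.isClosed_compl hk.isClosed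
    (Set.disjoint_left.2 fun x hx hxk => hx (hkk2 hxk))
  refine ⟨f, k2, f.contMDiff.contDiff, hk2, hk2s, hf1, fun x hx => ?_⟩
  exact hf0.self_of_nhdsSet x (fun h => hx (interior_subset h))

/-- A fixed mollifier profile. -/
structure Prof (ρ : En n → ℝ) : Prop where
  smooth : ContDiff ℝ ∞ ρ
  supp : ∀ x, 1 < ‖x‖ → ρ x = 0
  int : ∫ x, ρ x = 1

lemma exists_prof : ∃ ρ : En n → ℝ, Prof ρ := by
  let φ : ContDiffBump (0 : En n) := ⟨1 / 2, 1, by norm_num, by norm_num⟩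
  refine ⟨φ.normed volume, φ.contDiff_normed, fun x hx => ?_, φ.integral_normed⟩
  have : x ∉ Function.support (φ.normed volume) := by
    rw [φ.support_normed_eq]
    simp only [mem_ball, dist_zero_right, not_lt]
    exact le_of_lt hx
  simpa using this

/-- Rescaled mollifier. -/
def rs (ρ : En n → ℝ) (ε : ℝ) (x : En n) : ℝ := (ε ^ n)⁻¹ * ρ (ε⁻¹ • x)

namespace Prof

variable {ρ : En n → ℝ} (hρ : Prof ρ)
include hρ

lemma rs_smooth (ε : ℝ) : ContDiff ℝ ∞ (rs ρ ε) := by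
  unfold rs
  exact contDiff_const.mul (hρ.smooth.comp (contDiff_const_smul _))

lemma rs_supp {ε : ℝ} (hε : 0 < ε) (x : En n) (hx : x ∉ closedBall (0 : En n) ε) : rs ρ ε x = 0 := by
  unfold rs
  rw [hρ.supp, mul_zero]
  rw [norm_smul, norm_inv, Real.norm_of_nonneg hε.le, inv_mul_eq_div, lt_div_iff₀ hε]
  simpa using hx

lemma rs_compact {ε : ℝ} (hε : 0 < ε) : HasCompactSupport (rs ρ ε) :=
  HasCompactSupport.intro (isCompact_closedBall 0 ε) fun x hx => hρ.rs_supp hε x hx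

lemma compact : HasCompactSupport ρ :=
  HasCompactSupport.intro (isCompact_closedBall 0 1) fun x hx => hρ.supp x (by simpa using hx)

lemma fderiv_rs {ε : ℝ} (hε : 0 < ε) (z v : En n) :
    fderiv ℝ (rs ρ ε) (ε • z) v = (ε ^ n)⁻¹ * (ε⁻¹ * fderiv ℝ ρ z v) := by
  have hd : DifferentiableAt ℝ ρ (ε⁻¹ • (ε • z)) := (hρ.smooth.differentiable (by simp)) _
  have h1 : HasFDerivAt (fun x : En n => ρ (ε⁻¹ • x)) ((fderiv ℝ ρ (ε⁻¹ • (ε • z))).comp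
    (ε⁻¹ • ContinuousLinearMap.id ℝ (En n))) (ε • z) :=
    hd.hasFDerivAt.comp (ε • z) ((hasFDerivAt_id (ε • z)).const_smul ε⁻¹)
  have h2 := h1.const_mul (ε ^ n)⁻¹
  have h3 : fderiv ℝ (rs ρ ε) (ε • z) = _ := h2.fderiv
  rw [h3, smul_smul, inv_mul_cancel₀ hε.ne', one_smul]
  simp

end Prof

lemma integral_scale {F : Type*} [NormedAddCommGroup F] [NormedSpace ℝ F] (f : En n → F) {ε : ℝ}
    (hε : 0 < ε) : ∫ x, f x = (ε ^ n) • ∫ z, f (ε • z) := by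
  rw [Measure.integral_comp_smul, finrank_euclideanSpace_fin, smul_smul, abs_of_pos (by positivity),
    mul_inv_cancel₀ (by positivity), one_smul]

/-- Mollification of a vector or scalar valued function. -/
def mol (ρ : En n → ℝ) (ε : ℝ) {F : Type*} [NormedAddCommGroup F] [NormedSpace ℝ F]
    (g : En n → F) (x : En n) : F := ∫ t, rs ρ ε t • g (x - t)

lemma mol_eq_conv (ρ : En n → ℝ) (ε : ℝ) {F : Type*} [NormedAddCommGroup F] [NormedSpace ℝ F]
    (g : En n → F) : mol ρ ε g = (rs ρ ε) ⋆[ContinuousLinearMap.lsmul ℝ ℝ, volume] g := by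
  ext x; simp [mol, convolution]

lemma mol_scale (ρ : En n → ℝ) {ε : ℝ} (hε : 0 < ε) {F : Type*} [NormedAddCommGroup F]
    [NormedSpace ℝ F] (g : En n → F) (x : En n) : mol ρ ε g x = ∫ z, ρ z • g (x - ε • z) := by
  unfold mol
  rw [integral_scale _ hε, ← integral_smul]
  congr 1
  ext z
  unfold rs
  rw [smul_smul, smul_smul, inv_mul_cancel₀ hε.ne', one_smul, ← mul_assoc,
    mul_inv_cancel₀ (by positivity), one_mul]

section

variable {ρ : En n → ℝ} (hρ : Prof ρ) {F : Type*} [NormedAddCommGroup F] [NormedSpace ℝ F]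
include hρ

lemma mol_smooth {ε : ℝ} (hε : 0 < ε) {g : En n → F} (hg : Continuous g) :
    ContDiff ℝ ∞ (mol ρ ε g) := by
  rw [mol_eq_conv]
  exact (hρ.rs_compact hε).contDiff_convolution_left _ (hρ.rs_smooth ε) hg.locallyIntegrable

lemma fderiv_mol_left [CompleteSpace F] {ε : ℝ} (hε : 0 < ε) {g : En n → F} (hg : Continuous g) (x v : En n) :
    fderiv ℝ (mol ρ ε g) x v = ∫ t, (fderiv ℝ (rs ρ ε) t v) • g (x - t) := by
  have hs1 : ContDiff ℝ 1 (rs ρ ε) := (hρ.rs_smooth ε).of_le (by simp)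
  rw [mol_eq_conv, ((hρ.rs_compact hε).hasFDerivAt_convolution_left _ hs1
    hg.locallyIntegrable x).fderiv]
  unfold convolution
  rw [ContinuousLinearMap.integral_apply]
  · rfl
  · have := ((hρ.rs_compact hε).fderiv (𝕜 := ℝ)).convolutionExists_left
      (ContinuousLinearMap.precompL (En n) (ContinuousLinearMap.lsmul ℝ ℝ : ℝ →L[ℝ] F →L[ℝ] F))
      (hs1.continuous_fderiv (by simp)) (hg.locallyIntegrable (μ := volume)) x
    exact this

lemma gradient_mol {ε : ℝ} (hε : 0 < ε) {g : En n → ℝ} (hg : ContDiff ℝ 1 g)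
    (hgc : HasCompactSupport g) : gradient (mol ρ ε g) = mol ρ ε (gradient g) := by
  ext1 x
  apply ext_inner_right ℝ
  intro v
  have hs1 : ContDiff ℝ 1 (rs ρ ε) := (hρ.rs_smooth ε).of_le (by simp)
  have hcg : Continuous (gradient g) := (contDiff_gradient hg (m := 0) (by simp)).continuous
  rw [inner_gradient_left, mol_eq_conv, (hgc.hasFDerivAt_convolution_right _
    hs1.continuous.locallyIntegrable hg x).fderiv]
  unfold convolution
  rw [ContinuousLinearMap.integral_apply]
  · unfold mol
    rw [real_inner_comm, ← integral_inner]
    · congr 1; ext t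
      rw [inner_smul_right, real_inner_comm, inner_gradient_left]
      rfl
    · have := (hρ.rs_compact hε).convolutionExists_left
        (ContinuousLinearMap.lsmul ℝ ℝ : ℝ →L[ℝ] En n →L[ℝ] En n) hs1.continuous
        (hcg.locallyIntegrable (μ := volume)) x
      exact this
  · have := (hρ.rs_compact hε).convolutionExists_left
      (ContinuousLinearMap.precompR (En n) (ContinuousLinearMap.lsmul ℝ ℝ : ℝ →L[ℝ] ℝ →L[ℝ] ℝ))
      hs1.continuous ((hg.continuous_fderiv (by simp)).locallyIntegrable (μ := volume)) x
    exact this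

end

end AL

namespace AL

open scoped Topology ContDiff

variable {n : ℕ}

lemma fderiv_of_supp {F : Type*} [NormedAddCommGroup F] [NormedSpace ℝ F] {f : En n → F}
    {k : Set (En n)} (hk : IsClosed k) (h0 : ∀ x ∉ k, f x = 0)
    {x : En n} (hx : x ∉ k) : fderiv ℝ f x = 0 := by
  have : f =ᶠ[𝓝 x] fun _ => 0 := by
    filter_upwards [hk.isOpen_compl.mem_nhds hx] with y hy using h0 y hy
  rw [this.fderiv_eq]
  simp

/-- The first order coefficient `∑ ∂_i a_ij ξ_j`. -/
def cA (𝒜 : En n → En n →L[ℝ] En n) (x ξ : En n) : ℝ :=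
  ∑ i, (fderiv ℝ 𝒜 x (EuclideanSpace.single i 1) ξ) i

lemma sum_fderiv_coord (L : En n →L[ℝ] ℝ) (ξ : En n) :
    ∑ i, L (EuclideanSpace.single i 1) * ξ i = L ξ := by
  conv_rhs => rw [← sum_coord ξ]
  rw [map_sum]
  exact Finset.sum_congr rfl fun i _ => by rw [map_smul, smul_eq_mul, mul_comm]

/-- The weak formulation in operator form. -/
def WeakOp (𝒜 : En n → En n →L[ℝ] En n) (u : En n → ℝ) : Prop :=
  ∀ φ : En n → ℝ, ContDiff ℝ ∞ φ → HasCompactSupport φ → tsupport φ ⊆ OmegaExt n →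
    ∫ x, fderiv ℝ φ x (𝒜 x (gradient u x)) = ∫ x, u x * φ x

lemma Lop_mol {𝒜 : En n → En n →L[ℝ] En n} {lam α K : ℝ} (h : Good 𝒜 lam α K) {u ut : En n → ℝ}
    (hw : WeakOp 𝒜 u) {ρ : En n → ℝ} (hρ : Prof ρ)
    (hut : ContDiff ℝ 1 ut) (hutc : HasCompactSupport ut) {x0 : En n} {ε ε' : ℝ} (hε : 0 < ε)
    (hεε' : ε < ε') (hball : ball x0 ε' ⊆ OmegaExt n) (hu : ∀ y ∈ ball x0 ε', ut y = u y) :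
    Lop 𝒜 (mol ρ ε ut) x0 = cA 𝒜 x0 (mol ρ ε (gradient ut) x0) +
      ∫ z, ε⁻¹ * fderiv ℝ ρ z ((𝒜 x0 - 𝒜 (x0 - ε • z)) (gradient ut (x0 - ε • z))) := by
  have hx0 : x0 ∈ OmegaExt n := hball (mem_ball_self (by linarith))
  have hg : Continuous (gradient ut) := (contDiff_gradient hut (m := 0) (by simp)).continuous
  have hrs1 : ContDiff ℝ 1 (rs ρ ε) := (hρ.rs_smooth ε).of_le (by simp)
  have hDrs : Continuous (fderiv ℝ (rs ρ ε)) := hrs1.continuous_fderiv (by simp)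
  have hDrs0 : ∀ t ∉ closedBall (0 : En n) ε, fderiv ℝ (rs ρ ε) t = 0 := fun t ht =>
    fderiv_of_supp isClosed_closedBall (hρ.rs_supp hε) ht
  have hrefl : Continuous fun t : En n => gradient ut (x0 - t) := hg.comp (by fun_prop)
  have hgu : ∀ y ∈ ball x0 ε', gradient ut y = gradient u y := fun y hy => by
    have : ut =ᶠ[𝓝 y] u := by
      filter_upwards [isOpen_ball.mem_nhds hy] with z hz using hu z hz
    unfold gradient
    rw [this.fderiv_eq]
  -- the second order part
  have a1 : divg (fun y => 𝒜 y (gradient (mol ρ ε ut) y)) x0 =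
      cA 𝒜 x0 (mol ρ ε (gradient ut) x0)
      + ∫ t, fderiv ℝ (rs ρ ε) t (𝒜 x0 (gradient ut (x0 - t))) := by
    rw [gradient_mol hρ hε hut hutc]
    have hG : DifferentiableAt ℝ (mol ρ ε (gradient ut)) x0 :=
      ((mol_smooth hρ hε hg).differentiable (by simp)) x0
    have h1 := (h.diffAt hx0).hasFDerivAt.clm_apply hG.hasFDerivAt
    have h2 : fderiv ℝ (fun y => 𝒜 y (mol ρ ε (gradient ut) y)) x0 = _ := h1.fderiv
    unfold divg cA
    rw [h2]
    have h3 : ∀ i : Fin n, (𝒜 x0 (fderiv ℝ (mol ρ ε (gradient ut)) x0 (EuclideanSpace.single i 1))) i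
        = ∫ t, fderiv ℝ (rs ρ ε) t (EuclideanSpace.single i 1) * (𝒜 x0 (gradient ut (x0 - t))) i := by
      intro i
      rw [fderiv_mol_left hρ hε hg]
      have hi : Integrable fun t => fderiv ℝ (rs ρ ε) t (EuclideanSpace.single i 1) • gradient ut (x0 - t) := by
        refine Continuous.integrable_of_hasCompactSupport ?_ ?_
        · exact (hDrs.clm_apply continuous_const).smul hrefl
        · exact hasCompactSupport_of_supp (isCompact_closedBall 0 ε) fun t ht => by
            rw [hDrs0 t ht]; simp
      have := ((EuclideanSpace.proj (𝕜 := ℝ) i).comp (𝒜 x0)).integral_comp_comm hi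
      refine Eq.trans this.symm ?_
      congr 1; ext t
      simp
    have hi2 : ∀ i : Fin n, Integrable fun t => fderiv ℝ (rs ρ ε) t (EuclideanSpace.single i 1) *
        (𝒜 x0 (gradient ut (x0 - t))) i := fun i => by
      refine Continuous.integrable_of_hasCompactSupport ?_ ?_
      · exact (hDrs.clm_apply continuous_const).mul
          ((EuclideanSpace.proj (𝕜 := ℝ) i).continuous.comp ((𝒜 x0).continuous.comp hrefl))
      · exact hasCompactSupport_of_supp (isCompact_closedBall 0 ε) fun t ht => by
          rw [hDrs0 t ht]; simp
    have h4 : ∫ t, fderiv ℝ (rs ρ ε) t (𝒜 x0 (gradient ut (x0 - t))) = ∑ i,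
        ∫ t, fderiv ℝ (rs ρ ε) t (EuclideanSpace.single i 1) * (𝒜 x0 (gradient ut (x0 - t))) i := by
      rw [← integral_finsetSum _ fun i _ => hi2 i]
      congr 1; ext t
      rw [sum_fderiv_coord]
    rw [h4, ← Finset.sum_add_distrib]
    refine Finset.sum_congr rfl fun i _ => ?_
    rw [← h3 i]
    simp [add_comm]
  -- the weak equation
  have a2 : mol ρ ε ut x0 = -∫ t, fderiv ℝ (rs ρ ε) t (𝒜 (x0 - t) (gradient ut (x0 - t))) := by
    have hφ : ContDiff ℝ ∞ fun y => rs ρ ε (x0 - y) :=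
      (hρ.rs_smooth ε).comp (contDiff_const.sub contDiff_id)
    have hφ0 : ∀ y ∉ closedBall x0 ε, rs ρ ε (x0 - y) = 0 := fun y hy =>
      hρ.rs_supp hε _ (by simpa [dist_eq_norm, norm_sub_rev] using hy)
    have hsub : closedBall x0 ε ⊆ ball x0 ε' := closedBall_subset_ball hεε'
    have hts : tsupport (fun y => rs ρ ε (x0 - y)) ⊆ closedBall x0 ε := by
      refine closure_minimal (fun y hy => ?_) isClosed_closedBall
      by_contra hc
      exact hy (hφ0 y hc)
    have hwe := hw _ hφ (hasCompactSupport_of_supp (isCompact_closedBall x0 ε) hφ0)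
      (hts.trans (hsub.trans hball))
    have hD : ∀ y, fderiv ℝ (fun y => rs ρ ε (x0 - y)) y = -fderiv ℝ (rs ρ ε) (x0 - y) := by
      intro y
      have h1 : HasFDerivAt (fun y => rs ρ ε (x0 - y))
          ((fderiv ℝ (rs ρ ε) (x0 - y)).comp (-ContinuousLinearMap.id ℝ (En n))) y :=
        ((hrs1.differentiable (by simp)) (x0 - y)).hasFDerivAt.comp y
          ((hasFDerivAt_id y).const_sub x0)
      rw [h1.fderiv]
      ext v; simp
    simp only [hD] at hwe
    have e1 : ∫ y, u y * rs ρ ε (x0 - y) = mol ρ ε ut x0 := by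
      unfold mol
      rw [← integral_sub_left_eq_self _ volume x0]
      congr 1; ext t
      rw [sub_sub_cancel, smul_eq_mul, mul_comm]
      by_cases ht : x0 - t ∈ ball x0 ε'
      · rw [hu _ ht]
      · rw [hρ.rs_supp hε t, zero_mul, zero_mul]
        intro hc
        apply ht
        simp only [mem_ball, dist_eq_norm, sub_sub_cancel_left, norm_neg]
        simp at hc
        linarith
    rw [← e1, ← hwe, ← integral_neg]
    rw [← integral_sub_left_eq_self _ volume x0]
    congr 1; ext t
    rw [sub_sub_cancel]
    by_cases ht : x0 - t ∈ ball x0 ε'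
    · rw [hgu _ ht]; simp
    · rw [hDrs0 t]; · simp
      intro hc
      apply ht
      simp only [mem_ball, dist_eq_norm, sub_sub_cancel_left, norm_neg]
      simp at hc
      linarith
  have i1 : Integrable fun t => fderiv ℝ (rs ρ ε) t (𝒜 x0 (gradient ut (x0 - t))) := by
    refine Continuous.integrable_of_hasCompactSupport ?_ ?_
    · exact hDrs.clm_apply ((𝒜 x0).continuous.comp hrefl)
    · exact hasCompactSupport_of_supp (isCompact_closedBall 0 ε) fun t ht => by
        rw [hDrs0 t ht]; simp
  have i2 : Integrable fun t => fderiv ℝ (rs ρ ε) t (𝒜 (x0 - t) (gradient ut (x0 - t))) := by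
    refine integrable_of_supp (s := ball 0 ε') isOpen_ball (isCompact_closedBall 0 ε)
      (closedBall_subset_ball hεε') ?_ fun t ht => by rw [hDrs0 t ht]; simp
    refine hDrs.continuousOn.clm_apply (ContinuousOn.clm_apply ?_ hrefl.continuousOn)
    refine h.smooth.continuousOn.comp (by fun_prop) fun t ht => hball ?_
    simpa [dist_eq_norm] using ht
  unfold Lop
  rw [a1, a2, add_assoc, ← sub_eq_add_neg, ← integral_sub i1 i2]
  congr 1
  rw [integral_scale _ hε, ← integral_smul]
  congr 1; ext z
  rw [← map_sub, hρ.fderiv_rs hε, ContinuousLinearMap.sub_apply, smul_eq_mul, ← mul_assoc,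
    mul_inv_cancel₀ (by positivity), one_mul]

lemma prof_moment {ρ : En n → ℝ} (hρ : Prof ρ) (𝒜 : En n → En n →L[ℝ] En n) (x ξ : En n) :
    ∫ z, fderiv ℝ ρ z (fderiv ℝ 𝒜 x z ξ) = - cA 𝒜 x ξ := by
  have hρ1 : ContDiff ℝ 1 ρ := hρ.smooth.of_le (by simp)
  set Lz : En n →L[ℝ] En n := (fderiv ℝ 𝒜 x).flip ξ with hL
  have hd : ∀ z, divg (fun y => ρ y • Lz y) z = fderiv ℝ ρ z (Lz z) + ρ z * cA 𝒜 x ξ := by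
    intro z
    rw [divg_smul ((hρ1.differentiable (by simp)) z) Lz.differentiableAt]
    congr 2
    unfold divg cA
    simp [hL]
  have hi := integral_divg (V := fun y => ρ y • Lz y) (hρ1.smul Lz.contDiff) (hρ.compact.smul_right)
  have i1 : Integrable fun z => fderiv ℝ ρ z (Lz z) := by
    refine Continuous.integrable_of_hasCompactSupport
      ((hρ1.continuous_fderiv (by simp)).clm_apply Lz.continuous) ?_
    exact hasCompactSupport_of_supp (isCompact_closedBall 0 1) fun t ht => by
      rw [fderiv_of_supp isClosed_closedBall (fun x hx => hρ.supp x (by simpa using hx)) ht]; simp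
  have i2 : Integrable ρ := hρ1.continuous.integrable_of_hasCompactSupport hρ.compact
  have := hi.2
  simp only [hd] at this
  rw [integral_add i1 (i2.mul_const _), integral_mul_const, hρ.int, one_mul] at this
  have e : ∫ z, fderiv ℝ ρ z (fderiv ℝ 𝒜 x z ξ) = ∫ z, fderiv ℝ ρ z (Lz z) := by
    simp [hL]
  rw [e]; linarith

end AL

namespace AL

open scoped Topology ContDiff

variable {n : ℕ}

lemma mol_le {ρ : En n → ℝ} (hρ : Prof ρ) {F : Type*} [NormedAddCommGroup F] [NormedSpace ℝ F]
    {ε : ℝ} (hε : 0 < ε) {g : En n → F} {B : ℝ} (hB : ∀ x, ‖g x‖ ≤ B) (x : En n) :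
    ‖mol ρ ε g x‖ ≤ (∫ z, ‖ρ z‖) * B := by
  rw [mol_scale ρ hε, ← integral_mul_const]
  have i2 : Integrable ρ := hρ.smooth.continuous.integrable_of_hasCompactSupport hρ.compact
  refine norm_integral_le_of_norm_le (i2.norm.mul_const B) (ae_of_all _ fun z => ?_)
  rw [norm_smul]
  exact mul_le_mul_of_nonneg_left (hB _) (norm_nonneg _)

lemma mol_tendsto {ρ : En n → ℝ} (hρ : Prof ρ) {F : Type*} [NormedAddCommGroup F] [NormedSpace ℝ F]
    [CompleteSpace F]
    {ε : ℕ → ℝ} (hε : ∀ j, 0 < ε j) (hε0 : Tendsto ε atTop (𝓝 0)) {g : En n → F} (hg : Continuous g)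
    {B : ℝ} (hB : ∀ x, ‖g x‖ ≤ B) (x : En n) :
    Tendsto (fun j => mol ρ (ε j) g x) atTop (𝓝 (g x)) := by
  have i2 : Integrable ρ := hρ.smooth.continuous.integrable_of_hasCompactSupport hρ.compact
  have e : g x = ∫ z, ρ z • g x := by rw [integral_smul_const, hρ.int, one_smul]
  rw [e]
  simp only [fun j => mol_scale ρ (hε j) g x]
  refine tendsto_integral_of_dominated_convergence (fun z => ‖ρ z‖ * B) (fun j => ?_)
    (i2.norm.mul_const B) (fun j => ae_of_all _ fun z => ?_) (ae_of_all _ fun z => ?_)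
  · exact (hρ.smooth.continuous.smul (hg.comp (by fun_prop))).aestronglyMeasurable
  · rw [norm_smul]
    exact mul_le_mul_of_nonneg_left (hB _) (norm_nonneg _)
  · refine Tendsto.smul tendsto_const_nhds ?_
    have : Tendsto (fun j => x - ε j • z) atTop (𝓝 (x - (0 : ℝ) • z)) :=
      tendsto_const_nhds.sub (hε0.smul_const z)
    rw [zero_smul, sub_zero] at this
    exact (hg.tendsto x).comp this

lemma Good.DA_le' {𝒜 : En n → En n →L[ℝ] En n} {lam α K : ℝ} (h : Good 𝒜 lam α K) {x : En n}
    (hx : x ∈ OmegaExt n) : ‖fderiv ℝ 𝒜 x‖ ≤ K := by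
  have h1 := h.dec1 x hx
  have h2 := h.y_le hx
  have h3 : 1 < ‖x‖ := hx
  have h4 := h.K1
  have h5 := norm_nonneg (fderiv ℝ 𝒜 x)
  nlinarith

lemma cA_le {𝒜 : En n → En n →L[ℝ] En n} {lam α K : ℝ} (h : Good 𝒜 lam α K) {x : En n}
    (hx : x ∈ OmegaExt n) (ξ : En n) : |cA 𝒜 x ξ| ≤ n * (K * ‖ξ‖) := by
  unfold cA
  refine (Finset.abs_sum_le_sum_abs _ _).trans ?_
  refine (Finset.sum_le_card_nsmul _ _ (K * ‖ξ‖) fun i _ => ?_).trans (by simp)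
  have h1 := PiLp.norm_apply_le (fderiv ℝ 𝒜 x (EuclideanSpace.single i 1) ξ) i
  have h2 := (fderiv ℝ 𝒜 x (EuclideanSpace.single i 1)).le_opNorm ξ
  have h3 := (fderiv ℝ 𝒜 x).le_opNorm (EuclideanSpace.single i 1)
  simp only [PiLp.norm_single, norm_one, mul_one] at h3
  have h4 := h.DA_le' hx
  calc |(fderiv ℝ 𝒜 x (EuclideanSpace.single i 1) ξ) i| ≤ _ := h1
    _ ≤ _ := h2
    _ ≤ _ := mul_le_mul_of_nonneg_right (h3.trans h4) (norm_nonneg _)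

lemma cA_continuous (𝒜 : En n → En n →L[ℝ] En n) (x : En n) : Continuous (cA 𝒜 x) := by
  unfold cA
  fun_prop

lemma comm_bound {𝒜 : En n → En n →L[ℝ] En n} {lam α K : ℝ} (h : Good 𝒜 lam α K)
    {ρ : En n → ℝ} (hρ : Prof ρ) {G : En n → En n} {B : ℝ} (hB : ∀ x, ‖G x‖ ≤ B)
    {x0 : En n} {ε ε' : ℝ} (hε : 0 < ε)
    (hεε' : ε < ε') (hball : ball x0 ε' ⊆ OmegaExt n) (z : En n) :
    ‖ε⁻¹ * fderiv ℝ ρ z ((𝒜 x0 - 𝒜 (x0 - ε • z)) (G (x0 - ε • z)))‖ ≤ ‖fderiv ℝ ρ z‖ * (K * B) := by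
  have hK := h.K1
  have hB0 : 0 ≤ B := (norm_nonneg _).trans (hB 0)
  by_cases hz : z ∈ closedBall (0 : En n) 1
  swap
  · rw [fderiv_of_supp isClosed_closedBall (fun x hx => hρ.supp x (by simpa using hx)) hz]
    simp
  have hz1 : ‖z‖ ≤ 1 := by simpa using hz
  have hm : x0 - ε • z ∈ ball x0 ε' := by
    simp only [mem_ball, dist_eq_norm, sub_sub_cancel_left, norm_neg, norm_smul,
      Real.norm_of_nonneg hε.le]
    nlinarith
  have h1 : ‖𝒜 x0 - 𝒜 (x0 - ε • z)‖ ≤ K * ‖x0 - (x0 - ε • z)‖ :=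
    (convex_ball x0 ε').norm_image_sub_le_of_norm_fderiv_le (𝕜 := ℝ)
      (fun y hy => h.diffAt (hball hy)) (fun y hy => h.DA_le' (hball hy)) hm
      (mem_ball_self (by linarith))
  have h2 : ‖x0 - (x0 - ε • z)‖ ≤ ε := by
    simp only [sub_sub_cancel, norm_smul, Real.norm_of_nonneg hε.le]
    nlinarith
  have h3 : ‖𝒜 x0 - 𝒜 (x0 - ε • z)‖ ≤ K * ε := h1.trans (by gcongr)
  rw [norm_mul, norm_inv, Real.norm_of_nonneg hε.le, inv_mul_le_iff₀ hε]
  calc _ ≤ ‖fderiv ℝ ρ z‖ * ‖(𝒜 x0 - 𝒜 (x0 - ε • z)) (G (x0 - ε • z))‖ :=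
        (fderiv ℝ ρ z).le_opNorm _
    _ ≤ ‖fderiv ℝ ρ z‖ * (K * ε * B) := by
        gcongr
        refine ((𝒜 x0 - 𝒜 (x0 - ε • z)).le_opNorm _).trans ?_
        gcongr
        exact hB _
    _ = _ := by ring

lemma comm_continuous {𝒜 : En n → En n →L[ℝ] En n} {lam α K : ℝ} (h : Good 𝒜 lam α K)
    {ρ : En n → ℝ} (hρ : Prof ρ) {G : En n → En n} (hG : Continuous G)
    {x0 : En n} {ε ε' : ℝ} (hε : 0 < ε)
    (hεε' : ε < ε') (hball : ball x0 ε' ⊆ OmegaExt n) :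
    Continuous fun z => ε⁻¹ * fderiv ℝ ρ z ((𝒜 x0 - 𝒜 (x0 - ε • z)) (G (x0 - ε • z))) := by
  have hρ1 : ContDiff ℝ 1 ρ := hρ.smooth.of_le (by simp)
  have hm : ∀ z ∈ ball (0 : En n) (ε' / ε), x0 - ε • z ∈ OmegaExt n := fun z hz => by
    apply hball
    simp only [mem_ball, dist_eq_norm, sub_zero, lt_div_iff₀ hε] at hz
    simp only [mem_ball, dist_eq_norm, sub_sub_cancel_left, norm_neg, norm_smul,
      Real.norm_of_nonneg hε.le]
    linarith
  refine continuous_of_supp (s := ball 0 (ε' / ε)) (k := closedBall 0 1) isOpen_ball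
    isClosed_closedBall (closedBall_subset_ball (by rw [lt_div_iff₀ hε]; linarith)) ?_ ?_
  · have h1 : ContinuousOn (fun z => 𝒜 (x0 - ε • z)) (ball 0 (ε' / ε)) :=
      h.smooth.continuousOn.comp (by fun_prop) hm
    have h2 : Continuous (fun z => G (x0 - ε • z)) := hG.comp (by fun_prop)
    exact continuousOn_const.mul ((hρ1.continuous_fderiv (by simp)).continuousOn.clm_apply
      ((continuousOn_const.sub h1).clm_apply h2.continuousOn))
  · intro z hz
    rw [fderiv_of_supp isClosed_closedBall (fun x hx => hρ.supp x (by simpa using hx)) hz]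
    simp

/-- Regularisation of weak solutions. -/
lemma approx {𝒜 : En n → En n →L[ℝ] En n} {lam α K : ℝ} (h : Good 𝒜 lam α K) {u : En n → ℝ}
    (hu : ContDiffOn ℝ 1 u (OmegaExt n)) (hw : WeakOp 𝒜 u) {k : Set (En n)} (hk : IsCompact k)
    (hks : k ⊆ OmegaExt n) :
    ∃ (U : ℕ → En n → ℝ) (B : ℝ), (∀ j, ContDiff ℝ 2 (U j)) ∧ ∀ x ∈ k,
      (∀ j, |U j x| ≤ B ∧ ‖gradient (U j) x‖ ≤ B ∧ |Lop 𝒜 (U j) x| ≤ B) ∧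
      Tendsto (fun j => U j x) atTop (𝓝 (u x)) ∧
      Tendsto (fun j => gradient (U j) x) atTop (𝓝 (gradient u x)) ∧
      Tendsto (fun j => Lop 𝒜 (U j) x) atTop (𝓝 0) := by
  obtain ⟨ε0, hε0, hth⟩ := hk.exists_cthickening_subset_open isOpen_Omega hks
  obtain ⟨ζ, k2, hζ, hk2, hk2s, hζ1, hζ0⟩ := exists_cutoff hk.cthickening isOpen_Omega hth
  obtain ⟨ρ, hρ⟩ := exists_prof (n := n)
  obtain ⟨ut, hutdef⟩ : ∃ f : En n → ℝ, f = fun x => ζ x * u x := ⟨_, rfl⟩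
  have hut0 : ∀ x ∉ k2, ut x = 0 := fun x hx => by rw [hutdef]; simp [hζ0 x hx]
  have hut : ContDiff ℝ 1 ut := by
    refine contDiff_of_supp isOpen_Omega hk2.isClosed hk2s ?_ hut0
    rw [hutdef]
    exact (hζ.of_le (by simp)).contDiffOn.mul hu
  have hutc : HasCompactSupport ut := hasCompactSupport_of_supp hk2 hut0
  have hg : Continuous (gradient ut) := (contDiff_gradient hut (m := 0) (by simp)).continuous
  have hgc : HasCompactSupport (gradient ut) :=
    hasCompactSupport_of_supp hk2 fun x hx => gradient_of_supp hk2.isClosed hut0 hx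
  obtain ⟨B1, hB1⟩ := hut.continuous.bounded_above_of_compact_support hutc
  obtain ⟨B2, hB2⟩ := hg.bounded_above_of_compact_support hgc
  have hballk : ∀ x ∈ k, ball x ε0 ⊆ cthickening ε0 k := fun x hx =>
    (ball_subset_closedBall).trans (closedBall_subset_cthickening hx _)
  have hζeq : ∀ y ∈ cthickening ε0 k, ζ y = 1 := fun y hy =>
    (eventually_nhdsSet_iff_forall.1 hζ1 y hy).self_of_nhds
  obtain ⟨ε, hεdef⟩ : ∃ f : ℕ → ℝ, f = fun j : ℕ => ε0 / ((j : ℝ) + 2) := ⟨_, rfl⟩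
  have hε : ∀ j, 0 < ε j := fun j => by rw [hεdef]; positivity
  have hεlt : ∀ j, ε j < ε0 := fun j => by
    rw [hεdef]
    refine div_lt_self hε0 ?_
    have : (0 : ℝ) ≤ j := Nat.cast_nonneg j
    linarith
  have hcT : Tendsto (fun j : ℕ => (j : ℝ) + 2) atTop atTop :=
    tendsto_atTop_add_const_right _ _ tendsto_natCast_atTop_atTop
  have hεT : Tendsto ε atTop (𝓝 0) := by
    rw [hεdef]; exact tendsto_const_nhds.div_atTop hcT
  have hεi : Tendsto (fun j => ‖(ε j)⁻¹‖) atTop atTop := by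
    have : (fun j => ‖(ε j)⁻¹‖) = fun j : ℕ => ((j : ℝ) + 2) / ε0 := by
      ext j
      rw [norm_inv, Real.norm_of_nonneg (hε j).le, hεdef, inv_div]
    rw [this]
    exact hcT.atTop_div_const hε0
  have hB10 : 0 ≤ B1 := (norm_nonneg _).trans (hB1 0)
  have hB20 : 0 ≤ B2 := (norm_nonneg _).trans (hB2 0)
  have hK := h.K1
  obtain ⟨I, hI⟩ : ∃ I, I = ∫ z, ‖ρ z‖ := ⟨_, rfl⟩
  obtain ⟨J, hJ⟩ : ∃ J, J = ∫ z, ‖fderiv ℝ ρ z‖ * (K * B2) := ⟨_, rfl⟩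
  have hI0 : 0 ≤ I := hI ▸ integral_nonneg fun z => norm_nonneg _
  have hJ0 : 0 ≤ J := hJ ▸ integral_nonneg fun z => by positivity
  have hρ1 : ContDiff ℝ 1 ρ := hρ.smooth.of_le (by simp)
  have hJi : Integrable fun z => ‖fderiv ℝ ρ z‖ * (K * B2) := by
    refine Integrable.mul_const (Integrable.norm ?_) _
    refine (hρ1.continuous_fderiv (by simp)).integrable_of_hasCompactSupport ?_
    exact hρ.compact.fderiv (𝕜 := ℝ)
  refine ⟨fun j => mol ρ (ε j) ut, I * B1 + I * B2 + (n * (K * (I * B2)) + J), fun j =>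
    (mol_smooth hρ (hε j) hut.continuous).of_le (by norm_cast), fun x hx => ?_⟩
  have hgr : ∀ j, gradient (mol ρ (ε j) ut) x = mol ρ (ε j) (gradient ut) x := fun j => by
    rw [gradient_mol hρ (hε j) hut hutc]
  have hxΩ := hks hx
  have hb := (hballk x hx).trans hth
  have hueq : ∀ y ∈ ball x ε0, ut y = u y := fun y hy => by
    rw [hutdef]; simp [hζeq y (hballk x hx hy)]
  have hux : ut x = u x := hueq x (mem_ball_self hε0)
  have hgux : gradient ut x = gradient u x := by
    have : ut =ᶠ[𝓝 x] u := by
      filter_upwards [isOpen_ball.mem_nhds (mem_ball_self hε0)] with z hz using hueq z hz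
    unfold gradient
    rw [this.fderiv_eq]
  have hL : ∀ j, Lop 𝒜 (mol ρ (ε j) ut) x = _ := fun j =>
    Lop_mol h hw hρ hut hutc (hε j) (hεlt j) hb hueq
  have hm1 := fun j => mol_le hρ (hε j) hB1 x
  have hm2 := fun j => mol_le hρ (hε j) hB2 x
  rw [← hI] at hm1 hm2
  have hc1 : 0 ≤ I * B1 := by positivity
  have hc2 : 0 ≤ I * B2 := by positivity
  have hc3 : 0 ≤ n * (K * (I * B2)) := by positivity
  have hT2 := mol_tendsto hρ hε hεT hg hB2 x
  refine ⟨fun j => ⟨?_, ?_, ?_⟩, ?_, ?_, ?_⟩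
  · have := hm1 j
    rw [Real.norm_eq_abs] at this
    linarith
  · rw [hgr]; have := hm2 j; linarith
  · rw [hL j]
    refine (abs_add_le _ _).trans ?_
    have e1 : |cA 𝒜 x (mol ρ (ε j) (gradient ut) x)| ≤ n * (K * (I * B2)) :=
      (cA_le h hxΩ _).trans (by gcongr; exact hm2 j)
    have e2 : |∫ z, (ε j)⁻¹ * fderiv ℝ ρ z ((𝒜 x - 𝒜 (x - ε j • z)) (gradient ut (x - ε j • z)))|
        ≤ J := by
      rw [hJ]
      exact norm_integral_le_of_norm_le hJi (ae_of_all _ fun z =>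
        comm_bound h hρ hB2 (hε j) (hεlt j) hb z)
    linarith
  · rw [← hux]; exact mol_tendsto hρ hε hεT hut.continuous hB1 x
  · simp only [hgr]; rw [← hgux]; exact hT2
  · simp only [hL]
    have t1 : Tendsto (fun j => cA 𝒜 x (mol ρ (ε j) (gradient ut) x)) atTop
        (𝓝 (cA 𝒜 x (gradient ut x))) := ((cA_continuous 𝒜 x).tendsto _).comp hT2
    have t2 : Tendsto (fun j => ∫ z, (ε j)⁻¹ * fderiv ℝ ρ z ((𝒜 x - 𝒜 (x - ε j • z))
        (gradient ut (x - ε j • z)))) atTop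
        (𝓝 (∫ z, fderiv ℝ ρ z (fderiv ℝ 𝒜 x z (gradient ut x)))) := by
      refine tendsto_integral_of_dominated_convergence (fun z => ‖fderiv ℝ ρ z‖ * (K * B2))
        (fun j => (comm_continuous h hρ hg (hε j) (hεlt j) hb).aestronglyMeasurable) hJi
        (fun j => ae_of_all _ fun z => comm_bound h hρ hB2 (hε j) (hεlt j) hb z)
        (ae_of_all _ fun z => ?_)
      have s1 : Tendsto (fun j => (ε j)⁻¹ • (𝒜 x - 𝒜 (x - ε j • z))) atTop
          (𝓝 (fderiv ℝ 𝒜 x z)) := by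
        have := ((h.diffAt hxΩ).hasFDerivAt.lim (-z) hεi).neg
        simp only [inv_inv, map_neg, neg_neg] at this
        refine this.congr fun j => ?_
        rw [← smul_neg, neg_sub, smul_neg, ← sub_eq_add_neg]
      have s2 : Tendsto (fun j => x - ε j • z) atTop (𝓝 (x - (0 : ℝ) • z)) :=
        tendsto_const_nhds.sub (hεT.smul_const z)
      rw [zero_smul, sub_zero] at s2
      have s3 := (((isBoundedBilinearMap_apply (𝕜 := ℝ) (E := En n) (F := En n)).continuous).tendsto
        (fderiv ℝ 𝒜 x z, gradient ut x)).comp (s1.prodMk_nhds ((hg.tendsto x).comp s2))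
      have s4 := ((fderiv ℝ ρ z).continuous.tendsto _).comp s3
      refine s4.congr fun j => ?_
      simp
    rw [prof_moment hρ] at t2
    simpa using t1.add t2

end AL

namespace AL

open scoped Topology ContDiff

variable {n : ℕ}

/-- The auxiliary function `S = 1 + a e^{2t}`. -/
def wS (a t : ℝ) : ℝ := 1 + a * Real.exp (2 * t)
/-- The auxiliary function `exp (-(γ/α) e^{-αt})`. -/
def wE (γ α t : ℝ) : ℝ := Real.exp (-(γ / α) * Real.exp (-α * t))
/-- The derivative of the conjugating phase. -/
def wP (γ α a τ t : ℝ) : ℝ := τ * wE γ α t / wS a t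
/-- The multiplier weight. -/
def wH (n : ℕ) (γ α δ a t : ℝ) : ℝ :=
  Real.exp ((2 - (n : ℝ)) * t + γ / α * Real.exp (-α * t) - (2 - δ) / 2 * Real.log (wS a t))
/-- The phase. -/
def wΨ (n : ℕ) (γ α a τ t : ℝ) : ℝ := ((n : ℝ) - 1) / 2 * t + ∫ s in (0 : ℝ)..t, wP γ α a τ s

lemma wS_pos {a : ℝ} (ha : 0 < a) (t : ℝ) : 0 < wS a t := by unfold wS; positivity
lemma wS_one {a : ℝ} (ha : 0 < a) (t : ℝ) : 1 ≤ wS a t := by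
  unfold wS; have : 0 < a * Real.exp (2 * t) := by positivity
  linarith
lemma wE_pos (γ α t : ℝ) : 0 < wE γ α t := Real.exp_pos _
lemma wE_le {γ α : ℝ} (hγ : 0 < γ) (hα : 0 < α) (t : ℝ) : wE γ α t ≤ 1 := by
  unfold wE; rw [Real.exp_le_one_iff]
  have : 0 < γ / α * Real.exp (-α * t) := by positivity
  linarith
lemma wE_ge {γ α : ℝ} (hγ : 0 < γ) (hα : 0 < α) {t : ℝ} (ht : 0 ≤ t) :
    Real.exp (-(γ / α)) ≤ wE γ α t := by
  unfold wE; rw [Real.exp_le_exp]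
  have h1 : Real.exp (-α * t) ≤ 1 := by rw [Real.exp_le_one_iff]; nlinarith
  have : 0 < γ / α := by positivity
  nlinarith

lemma wS_deriv (a t : ℝ) : HasDerivAt (wS a) (2 * (a * Real.exp (2 * t))) t := by
  unfold wS
  have h1 : HasDerivAt (fun t : ℝ => 2 * t) 2 t := by simpa using (hasDerivAt_id t).const_mul 2
  have h2 := ((h1.exp).const_mul a).const_add 1
  exact h2.congr_deriv (by ring)

lemma exp_deriv (α t : ℝ) : HasDerivAt (fun t => Real.exp (-α * t)) (-α * Real.exp (-α * t)) t := by
  have h1 : HasDerivAt (fun t : ℝ => -α * t) (-α) t := by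
    simpa using (hasDerivAt_id t).const_mul (-α)
  exact h1.exp.congr_deriv (by ring)

lemma wE_deriv {α : ℝ} (hα : 0 < α) (γ t : ℝ) :
    HasDerivAt (wE γ α) (wE γ α t * (γ * Real.exp (-α * t))) t := by
  have h2 := ((exp_deriv α t).const_mul (-(γ / α))).exp
  refine HasDerivAt.congr_deriv (f := wE γ α) h2 ?_
  unfold wE; field_simp

lemma wP_deriv {α a : ℝ} (hα : 0 < α) (ha : 0 < a) (γ τ t : ℝ) : HasDerivAt (wP γ α a τ)
    (wP γ α a τ t * (γ * Real.exp (-α * t) - 2 * (a * Real.exp (2 * t) / wS a t))) t := by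
  have hS := (wS_pos ha t).ne'
  have h := ((wE_deriv hα γ t).const_mul τ).div (wS_deriv a t) hS
  refine HasDerivAt.congr_deriv (f := wP γ α a τ) h ?_
  unfold wP; field_simp

lemma wH_deriv {α a : ℝ} (hα : 0 < α) (ha : 0 < a) (γ δ t : ℝ) : HasDerivAt (wH n γ α δ a)
    ((2 - (n : ℝ) - (γ * Real.exp (-α * t) + (2 - δ) * (a * Real.exp (2 * t) / wS a t)))
      * wH n γ α δ a t) t := by
  have hS := (wS_pos ha t).ne'
  have h1 : HasDerivAt (fun t : ℝ => (2 - (n : ℝ)) * t) (2 - (n : ℝ)) t := by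
    simpa using (hasDerivAt_id t).const_mul (2 - (n : ℝ))
  have h := ((h1.add ((exp_deriv α t).const_mul (γ / α))).sub
    (((wS_deriv a t).log hS).const_mul ((2 - δ) / 2))).exp
  refine HasDerivAt.congr_deriv (f := wH n γ α δ a) h ?_
  have e : γ / α * (-α * Real.exp (-α * t)) = -(γ * Real.exp (-α * t)) := by field_simp
  unfold wH
  simp only [Pi.add_apply, Pi.sub_apply]
  rw [e]
  ring

lemma wS_cont (a : ℝ) : ContDiff ℝ ∞ (wS a) := by unfold wS; fun_prop
lemma wE_cont (γ α : ℝ) : ContDiff ℝ ∞ (wE γ α) := by unfold wE; fun_prop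
lemma wP_cont {a : ℝ} (ha : 0 < a) (γ α τ : ℝ) : ContDiff ℝ ∞ (wP γ α a τ) := by
  unfold wP
  exact (contDiff_const.mul (wE_cont γ α)).div (wS_cont a) fun t => (wS_pos ha t).ne'
lemma wH_cont {a : ℝ} (ha : 0 < a) (γ α δ : ℝ) : ContDiff ℝ ∞ (wH n γ α δ a) := by
  unfold wH
  have := (wS_cont a).log fun t => (wS_pos ha t).ne'
  fun_prop

lemma wΨ_deriv {a : ℝ} (ha : 0 < a) (γ α τ t : ℝ) :
    HasDerivAt (wΨ n γ α a τ) (((n : ℝ) - 1) / 2 + wP γ α a τ t) t := by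
  have h1 : HasDerivAt (fun t : ℝ => ((n : ℝ) - 1) / 2 * t) (((n : ℝ) - 1) / 2) t := by
    simpa using (hasDerivAt_id t).const_mul (((n : ℝ) - 1) / 2)
  exact h1.add ((wP_cont ha γ α τ).continuous.integral_hasStrictDerivAt 0 t).hasDerivAt

lemma wΨ_cont {a : ℝ} (ha : 0 < a) (γ α τ : ℝ) : ContDiff ℝ 2 (wΨ n γ α a τ) := by
  rw [show (2 : WithTop ℕ∞) = 1 + 1 by norm_num, contDiff_succ_iff_deriv]
  refine ⟨fun t => (wΨ_deriv ha γ α τ t).differentiableAt, by simp, ?_⟩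
  have : deriv (wΨ n γ α a τ) = fun t => ((n : ℝ) - 1) / 2 + wP γ α a τ t :=
    funext fun t => (wΨ_deriv ha γ α τ t).deriv
  rw [this]
  exact contDiff_const.add ((wP_cont ha γ α τ).of_le (by simp))

lemma wP_lower {γ α a τ : ℝ} (hγ : 0 < γ) (hα : 0 < α) (ha : 0 < a) (hτ : 0 ≤ τ) {t : ℝ} (ht : 0 ≤ t)
    (hS : wS a t ≤ 2) : τ * (Real.exp (-(γ / α)) / 2) ≤ wP γ α a τ t := by
  unfold wP
  rw [le_div_iff₀ (wS_pos ha t)]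
  have h1 := wE_ge hγ hα ht
  have h2 := Real.exp_pos (-(γ / α))
  calc τ * (Real.exp (-(γ / α)) / 2) * wS a t ≤ τ * (Real.exp (-(γ / α)) / 2) * 2 := by gcongr
    _ = τ * Real.exp (-(γ / α)) := by ring
    _ ≤ _ := by gcongr

lemma wS_le {M τ T t : ℝ} (hM : 1 ≤ M) (hτ : 0 < τ) (hT : Real.exp T ≤ τ) (ht : t ≤ T) :
    wS ((M * τ) ^ 2)⁻¹ t ≤ 2 := by
  unfold wS
  have h1 : Real.exp (2 * t) ≤ (M * τ) ^ 2 := by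
    have : Real.exp (2 * t) = Real.exp t ^ 2 := by rw [← Real.exp_nat_mul]; norm_num
    rw [this]
    have h2 : Real.exp t ≤ τ := (Real.exp_le_exp.2 ht).trans hT
    have h3 : Real.exp t ≤ M * τ := by nlinarith
    exact pow_le_pow_left₀ (Real.exp_pos _).le h3 2
  have : ((M * τ) ^ 2)⁻¹ * Real.exp (2 * t) ≤ 1 := by
    rw [inv_mul_le_iff₀ (by positivity)]; linarith
  linarith

set_option maxHeartbeats 1000000 in
lemma exists_weights (hn : 1 ≤ n) {γ δ α M Λ y1 : ℝ} (hγ : 0 < γ) (hδ : 0 < δ) (hδ1 : δ < 1) (hα : 0 < α)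
    (hM : 1 ≤ M) (hy1 : 0 < y1) {T : ℝ} (hT : 0 ≤ T) :
    ∃ c > 0, ∃ h0 > 0, ∃ h1 > 0, ∀ᶠ τ in atTop, ∃ w : Wt n γ δ α M Λ y1,
      (∀ t, 0 ≤ t → t ≤ T → h0 ≤ w.H t ∧ w.H t ≤ h1) ∧
      (∀ s t, 0 ≤ s → s ≤ t → t ≤ T → c * τ * (t - s) ≤ w.Ψ t - w.Ψ s) ∧
      ∃ C > 0, ∀ t, 0 ≤ t → w.H t * Real.exp (w.Ψ t) ^ 2 ≤ C * Real.exp ((δ - 1) * t) := by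
  have hb : 0 ≤ ((n : ℝ) - 1) / 2 := by
    have : (1 : ℝ) ≤ n := by exact_mod_cast hn
    linarith
  have hga : 0 < γ / α := by positivity
  obtain ⟨c, hc⟩ : ∃ c, c = Real.exp (-(γ / α)) / 2 := ⟨_, rfl⟩
  have hc0 : 0 < c := by rw [hc]; positivity
  obtain ⟨t1, ht1⟩ : ∃ t1, t1 = -Real.log y1 / α := ⟨_, rfl⟩
  refine ⟨c, hc0, Real.exp (-(n : ℝ) * T - Real.log 2), Real.exp_pos _,
    Real.exp (2 * T + γ / α), Real.exp_pos _, ?_⟩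
  have ev1 : ∀ᶠ τ : ℝ in atTop, Λ ≤ τ * c := (tendsto_id.atTop_mul_const hc0).eventually_ge_atTop Λ
  have ev2 : ∀ᶠ τ : ℝ in atTop, Real.exp (2 * t1) * (|Λ| + 1) ≤ τ * c :=
    (tendsto_id.atTop_mul_const hc0).eventually_ge_atTop _
  filter_upwards [ev1, ev2, eventually_ge_atTop 1, eventually_ge_atTop (Real.exp T),
    eventually_ge_atTop (Real.exp t1)] with τ e1 e2 e3 e4 e5
  have hτ : 0 < τ := by linarith
  obtain ⟨a, hadef⟩ : ∃ a, a = ((M * τ) ^ 2)⁻¹ := ⟨_, rfl⟩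
  have ha : 0 < a := by rw [hadef]; positivity
  have hMi : 1 / M ^ 2 ≤ 1 / M := by
    apply one_div_le_one_div_of_le <;> nlinarith
  have haτ : a * τ ^ 2 = 1 / M ^ 2 := by rw [hadef]; field_simp
  have ha1 : a ≤ 1 / M := by
    refine le_trans ?_ hMi
    rw [← haτ]
    have : 1 ≤ τ ^ 2 := by nlinarith
    nlinarith
  have hPe : ∀ t, wP γ α a τ t ≤ τ / wS a t := fun t => by
    unfold wP
    have := wE_le hγ hα t
    have := wS_pos ha t
    gcongr
    nlinarith
  have hP0 : ∀ t, 0 ≤ wP γ α a τ t := fun t => by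
    unfold wP
    have := wE_pos γ α t
    have := wS_pos ha t
    positivity
  have hPτ : ∀ t, wP γ α a τ t ≤ τ := fun t => (hPe t).trans (div_le_self hτ.le (wS_one ha t))
  have hσ0 : ∀ t, 0 ≤ a * Real.exp (2 * t) / wS a t := fun t => by
    have := wS_pos ha t
    positivity
  have hσe : ∀ t, a * Real.exp (2 * t) / wS a t * Real.exp (-2 * t) ≤ a := fun t => by
    have hee : Real.exp (2 * t) * Real.exp (-2 * t) = 1 := by rw [← Real.exp_add]; simp
    have : a * Real.exp (2 * t) / wS a t * Real.exp (-2 * t) = a / wS a t := by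
      rw [div_mul_eq_mul_div, mul_assoc, hee, mul_one]
    rw [this]
    exact div_le_self ha.le (wS_one ha t)
  let w : Wt n γ δ α M Λ y1 :=
    { P := wP γ α a τ
      σ := fun t => a * Real.exp (2 * t) / wS a t
      Ψ := wΨ n γ α a τ
      H := wH n γ α δ a
      hΨ := wΨ_deriv ha γ α τ
      hP := wP_deriv hα ha γ τ
      hH := wH_deriv hα ha γ δ
      P0 := hP0
      σ0 := hσ0
      σ1 := fun t => by
        rw [div_le_one (wS_pos ha t)]; unfold wS; linarith
      H0 := fun t => Real.exp_pos _
      cΨ := wΨ_cont ha γ α τ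
      cP := (wP_cont ha γ α τ).of_le (by simp)
      cH := (wH_cont ha γ α δ).of_le (by simp)
      b1 := fun t ht => by
        have h1 := hσe t
        have h2 : wP γ α a τ t ^ 2 ≤ τ ^ 2 := pow_le_pow_left₀ (hP0 t) (hPτ t) 2
        calc a * Real.exp (2 * t) / wS a t * wP γ α a τ t ^ 2 * Real.exp (-2 * t)
            = (a * Real.exp (2 * t) / wS a t * Real.exp (-2 * t)) * wP γ α a τ t ^ 2 := by ring
          _ ≤ a * τ ^ 2 := by gcongr
          _ ≤ 1 / M := haτ.le.trans hMi
      b2 := fun t ht => (hσe t).trans ha1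
      dich := fun t ht => by
        rcases le_or_gt t1 t with h | h
        · left
          have : -α * t ≤ Real.log y1 := by
            rw [ht1, div_le_iff₀ hα] at h; linarith
          calc _ ≤ Real.exp (Real.log y1) := Real.exp_le_exp.2 this
            _ = y1 := Real.exp_log hy1
        · right
          have hS : wS a t ≤ 2 := by rw [hadef]; exact wS_le hM hτ e5 h.le
          have hl := wP_lower hγ hα ha hτ.le ht.le hS
          rw [← hc] at hl
          have hE0 := Real.exp_pos (2 * t)
          have h5 : Real.exp (2 * t) ≤ Real.exp (2 * t1) := Real.exp_le_exp.2 (by linarith)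
          have h6 : 1 ≤ Real.exp (2 * t) := Real.one_le_exp (by linarith)
          refine ⟨e1.trans hl, ?_⟩
          have hee : Real.exp (2 * t) * Real.exp (-2 * t) = 1 := by rw [← Real.exp_add]; simp
          have h7 : Real.exp (2 * t) * (|Λ| + 1) ≤ wP γ α a τ t := by
            have : Real.exp (2 * t) * (|Λ| + 1) ≤ Real.exp (2 * t1) * (|Λ| + 1) := by gcongr
            linarith
          have h8 : |Λ| + 1 ≤ wP γ α a τ t := by
            have := abs_nonneg Λ
            nlinarith
          have h9 : Real.exp (2 * t) * (|Λ| + 1) * 1 ≤ wP γ α a τ t * wP γ α a τ t := by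
            have := abs_nonneg Λ
            exact mul_le_mul h7 (by linarith) (by norm_num) (hP0 t)
          calc Λ ≤ |Λ| + 1 := by linarith [le_abs_self Λ]
            _ = Real.exp (2 * t) * (|Λ| + 1) * 1 * Real.exp (-2 * t) := by
              linear_combination (-(|Λ| + 1)) * hee
            _ ≤ _ := by rw [sq]; gcongr }
  refine ⟨w, fun t h0 hT' => ?_, fun s t hs hst hT' => ?_, ?_⟩
  · have hS : wS a t ≤ 2 := by rw [hadef]; exact wS_le hM hτ e4 hT'
    have hl1 : 0 ≤ Real.log (wS a t) := Real.log_nonneg (wS_one ha t)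
    have hl2 : Real.log (wS a t) ≤ Real.log 2 := Real.log_le_log (wS_pos ha t) hS
    have hx0 : 0 < Real.exp (-α * t) := Real.exp_pos _
    have hx1 : Real.exp (-α * t) ≤ 1 := by rw [Real.exp_le_one_iff]; nlinarith
    have hn0 : (0 : ℝ) ≤ n := Nat.cast_nonneg n
    constructor
    · refine Real.exp_le_exp.2 ?_
      have q1 : 0 ≤ γ / α * Real.exp (-α * t) := by positivity
      have q2 : (n : ℝ) * t ≤ n * T := by gcongr
      have q3 : (2 - δ) / 2 * Real.log (wS a t) ≤ 1 * Real.log 2 := by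
        apply mul_le_mul <;> linarith
      linarith
    · refine Real.exp_le_exp.2 ?_
      have q1 : γ / α * Real.exp (-α * t) ≤ γ / α * 1 := by gcongr
      have q2 : 0 ≤ (n : ℝ) * t := by positivity
      have q3 : 0 ≤ (2 - δ) / 2 * Real.log (wS a t) := mul_nonneg (by linarith) hl1
      linarith
  · have hmono : MonotoneOn (fun r => wΨ n γ α a τ r - c * τ * r) (Set.Icc 0 T) := by
      have hd : ∀ r, HasDerivAt (fun r => wΨ n γ α a τ r - c * τ * r)
          (((n : ℝ) - 1) / 2 + wP γ α a τ r - c * τ) r := fun r => by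
        have h1 : HasDerivAt (fun t : ℝ => c * τ * t) (c * τ) r := by
          simpa using (hasDerivAt_id r).const_mul (c * τ)
        exact (wΨ_deriv ha γ α τ r).sub h1
      refine monotoneOn_of_deriv_nonneg (convex_Icc 0 T)
        (fun r _ => (hd r).continuousAt.continuousWithinAt)
        (fun r _ => (hd r).differentiableAt.differentiableWithinAt) fun r hr => ?_
      rw [(hd r).deriv]
      rw [interior_Icc] at hr
      have hS : wS a r ≤ 2 := by rw [hadef]; exact wS_le hM hτ e4 hr.2.le
      have := wP_lower hγ hα ha hτ.le hr.1.le hS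
      rw [← hc] at this
      linarith
    have := hmono ⟨hs, hst.trans hT'⟩ ⟨hs.trans hst, hT'⟩ hst
    simp only at this
    change c * τ * (t - s) ≤ wΨ n γ α a τ t - wΨ n γ α a τ s
    linarith
  · have hmono : Monotone (fun r => ((n : ℝ) - 1) / 2 * r - τ / (2 * a) * Real.exp (-2 * r)
        - wΨ n γ α a τ r) := by
      have hd : ∀ r, HasDerivAt (fun r => ((n : ℝ) - 1) / 2 * r - τ / (2 * a) * Real.exp (-2 * r)
          - wΨ n γ α a τ r) (((n : ℝ) - 1) / 2 - τ / (2 * a) * (-2 * Real.exp (-2 * r))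
          - (((n : ℝ) - 1) / 2 + wP γ α a τ r)) r := fun r => by
        have h1 : HasDerivAt (fun t : ℝ => ((n : ℝ) - 1) / 2 * t) (((n : ℝ) - 1) / 2) r := by
          simpa using (hasDerivAt_id r).const_mul (((n : ℝ) - 1) / 2)
        exact (h1.sub ((exp_deriv 2 r).const_mul _)).sub (wΨ_deriv ha γ α τ r)
      refine monotone_of_deriv_nonneg (fun r => (hd r).differentiableAt) fun r => ?_
      rw [(hd r).deriv]
      have h1 := hPe r
      have h2 : τ / wS a r ≤ τ / a * Real.exp (-2 * r) := by
        rw [div_le_iff₀ (wS_pos ha r)]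
        have hee : Real.exp (-2 * r) * Real.exp (2 * r) = 1 := by rw [← Real.exp_add]; simp
        have h3 : a * Real.exp (2 * r) ≤ wS a r := by unfold wS; linarith
        calc τ = τ / a * Real.exp (-2 * r) * (a * Real.exp (2 * r)) := by
              rw [show τ / a * Real.exp (-2 * r) * (a * Real.exp (2 * r)) =
                τ / a * a * (Real.exp (-2 * r) * Real.exp (2 * r)) by ring, hee,
                div_mul_cancel₀ _ ha.ne', mul_one]
          _ ≤ _ := by gcongr
      have h3 : τ / (2 * a) * (-2 * Real.exp (-2 * r)) = -(τ / a * Real.exp (-2 * r)) := by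
        field_simp
      linarith
    have hΨ0 : wΨ n γ α a τ 0 = 0 := by simp [wΨ]
    obtain ⟨κ, hκ⟩ : ∃ κ, κ = τ / (2 * a) := ⟨_, rfl⟩
    refine ⟨Real.exp (γ / α - (2 - δ) / 2 * Real.log a + 2 * κ), Real.exp_pos _, fun t ht => ?_⟩
    have h1 := hmono ht
    simp only [hΨ0, ← hκ] at h1
    have hκ0 : 0 ≤ κ := by rw [hκ]; positivity
    have h2 : 0 ≤ κ * Real.exp (-2 * t) := by positivity
    have h3 : wΨ n γ α a τ t ≤ ((n : ℝ) - 1) / 2 * t + κ := by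
      simp only [mul_zero, Real.exp_zero] at h1
      linarith
    change wH n γ α δ a t * Real.exp (wΨ n γ α a τ t) ^ 2 ≤ _
    unfold wH
    rw [← Real.exp_nat_mul, ← Real.exp_add, ← Real.exp_add, Real.exp_le_exp]
    have hx1 : Real.exp (-α * t) ≤ 1 := by rw [Real.exp_le_one_iff]; nlinarith
    have q1 : γ / α * Real.exp (-α * t) ≤ γ / α * 1 := by gcongr
    have q2 : Real.log a + 2 * t ≤ Real.log (wS a t) := by
      have : Real.log a + 2 * t = Real.log (a * Real.exp (2 * t)) := by
        rw [Real.log_mul ha.ne' (Real.exp_pos _).ne', Real.log_exp]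
      rw [this]
      exact Real.log_le_log (by positivity) (by unfold wS; linarith)
    have q3 : (2 - δ) / 2 * (Real.log a + 2 * t) ≤ (2 - δ) / 2 * Real.log (wS a t) :=
      mul_le_mul_of_nonneg_left q2 (by linarith)
    have q4 : ((2 : ℕ) : ℝ) * wΨ n γ α a τ t ≤ 2 * (((n : ℝ) - 1) / 2 * t + κ) := by
      have : ((2 : ℕ) : ℝ) = 2 := by norm_num
      rw [this]; linarith only [h3]
    linarith only [q1, q3, q4]

end AL

namespace AL

open scoped Topology ContDiff

variable {n : ℕ}

lemma continuousOn_Lop {𝒜 : En n → En n →L[ℝ] En n} {lam α K : ℝ} (h : Good 𝒜 lam α K)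
    {v : En n → ℝ} (hv : ContDiffOn ℝ 2 v (OmegaExt n)) : ContinuousOn (Lop 𝒜 v) (OmegaExt n) :=
  (continuousOn_divg isOpen_Omega (h.smooth.clm_apply
    (contDiffOn_gradient isOpen_Omega hv (by norm_num)))).add hv.continuousOn

lemma Lop_supp (𝒜 : En n → En n →L[ℝ] En n) {v : En n → ℝ} {k : Set (En n)} (hk : IsClosed k)
    (h0 : ∀ x ∉ k, v x = 0) {x : En n} (hx : x ∉ k) : Lop 𝒜 v x = 0 := by
  unfold Lop
  rw [divg_of_supp hk (fun z hz => by rw [gradient_of_supp hk h0 hz, map_zero]) hx, h0 x hx, add_zero]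

lemma approx_lim {𝒜 : En n → En n →L[ℝ] En n} {lam α K : ℝ} (h : Good 𝒜 lam α K) {u : En n → ℝ}
    (hu : ContDiffOn ℝ 1 u (OmegaExt n)) (hw : WeakOp 𝒜 u) {k : Set (En n)} (hk : IsCompact k)
    (hks : k ⊆ OmegaExt n) :
    ∃ U : ℕ → En n → ℝ, (∀ j, ContDiff ℝ 2 (U j)) ∧
      ∀ G : En n × (ℝ × En n × ℝ) → ℝ, ContinuousOn G (OmegaExt n ×ˢ Set.univ) →
        (∀ x ∉ k, ∀ p, G (x, p) = 0) →
        (∀ j, Integrable fun x => G (x, U j x, gradient (U j) x, Lop 𝒜 (U j) x)) ∧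
        Tendsto (fun j => ∫ x, G (x, U j x, gradient (U j) x, Lop 𝒜 (U j) x)) atTop
          (𝓝 (∫ x, G (x, u x, gradient u x, 0))) := by
  obtain ⟨U, B, hU, hx⟩ := approx h hu hw hk hks
  refine ⟨U, hU, fun G hG hG0 => ?_⟩
  have hcont : ∀ j, ContinuousOn (fun x => G (x, U j x, gradient (U j) x, Lop 𝒜 (U j) x))
      (OmegaExt n) := fun j => by
    refine hG.comp (continuousOn_id.prodMk ((hU j).continuous.continuousOn.prodMk
      ((contDiff_gradient (hU j) (m := 1) (by norm_num)).continuous.continuousOn.prodMk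
      (continuousOn_Lop h (hU j).contDiffOn)))) fun x hx => ⟨hx, Set.mem_univ _⟩
  have hIntg : ∀ j, Integrable fun x => G (x, U j x, gradient (U j) x, Lop 𝒜 (U j) x) := fun j =>
    integrable_of_supp isOpen_Omega hk hks (hcont j) fun x hx => hG0 x hx _
  refine ⟨hIntg, ?_⟩
  obtain ⟨C, hC⟩ := (hk.prod ((isCompact_closedBall (0 : ℝ) B).prod
    ((isCompact_closedBall (0 : En n) B).prod (isCompact_closedBall (0 : ℝ) B)))).exists_bound_of_continuousOn
    (hG.mono (Set.prod_mono hks (Set.subset_univ _)))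
  refine tendsto_integral_of_dominated_convergence (k.indicator fun _ => C)
    (fun j => (hIntg j).aestronglyMeasurable) ?_ (fun j => ae_of_all _ fun x => ?_)
    (ae_of_all _ fun x => ?_)
  · rw [integrable_indicator_iff hk.measurableSet]
    exact integrableOn_const hk.measure_lt_top.ne
  · by_cases hxk : x ∈ k
    · rw [Set.indicator_of_mem hxk]
      obtain ⟨b1, b2, b3⟩ := (hx x hxk).1 j
      exact hC _ ⟨hxk, by simpa using b1, by simpa using b2, by simpa using b3⟩
    · rw [Set.indicator_of_notMem hxk, hG0 x hxk]; simp
  · by_cases hxk : x ∈ k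
    · obtain ⟨-, t1, t2, t3⟩ := hx x hxk
      have hGc : ContinuousAt G (x, u x, gradient u x, 0) :=
        hG.continuousAt ((isOpen_Omega.prod isOpen_univ).mem_nhds ⟨hks hxk, Set.mem_univ _⟩)
      exact hGc.tendsto.comp (tendsto_const_nhds.prodMk_nhds (t1.prodMk_nhds (t2.prodMk_nhds t3)))
    · simp only [hG0 x hxk]; exact tendsto_const_nhds

lemma carleman_weak {𝒜 : En n → En n →L[ℝ] En n} {lam α K : ℝ} (h : Good 𝒜 lam α K) {u : En n → ℝ}
    (hu : ContDiffOn ℝ 1 u (OmegaExt n)) (hw : WeakOp 𝒜 u) {k : Set (En n)} (hk : IsCompact k)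
    (hks : k ⊆ OmegaExt n) {H E : En n → ℝ} (hH : ContinuousOn H (OmegaExt n))
    (hE : ContinuousOn E (OmegaExt n)) {c : ℝ}
    (key : ∀ v : En n → ℝ, ContDiffOn ℝ 2 v (OmegaExt n) → (∀ x ∉ k, v x = 0) →
      ∫ x, H x * (E x * v x) ^ 2 ≤ c * ∫ x, H x * ‖x‖ ^ 2 * (E x * Lop 𝒜 v x) ^ 2)
    {χ : En n → ℝ} (hχ : ContDiffOn ℝ 2 χ (OmegaExt n)) (hχ0 : ∀ x ∉ k, χ x = 0) :
    ∫ x, H x * (E x * (χ x * u x)) ^ 2 ≤ c * ∫ x, H x * ‖x‖ ^ 2 * (E x *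
      (2 * inner ℝ (𝒜 x (gradient χ x)) (gradient u x)
        + u x * divg (fun y => 𝒜 y (gradient χ y)) x)) ^ 2 := by
  have hO := isOpen_Omega (n := n)
  obtain ⟨U, hU, hlim⟩ := approx_lim h hu hw hk hks
  have cgχ : ContDiffOn ℝ 1 (gradient χ) (OmegaExt n) := contDiffOn_gradient hO hχ (by norm_num)
  have cAχ : ContDiffOn ℝ 1 (fun y => 𝒜 y (gradient χ y)) (OmegaExt n) := h.smooth.clm_apply cgχ
  have cd := continuousOn_divg hO cAχ
  have hg0 : ∀ x ∉ k, gradient χ x = 0 := fun x hx => gradient_of_supp hk.isClosed hχ0 hx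
  have hd0 : ∀ x ∉ k, divg (fun y => 𝒜 y (gradient χ y)) x = 0 := fun x hx =>
    divg_of_supp hk.isClosed (fun z hz => by rw [hg0 z hz, map_zero]) hx
  have mf : Set.MapsTo (Prod.fst : En n × (ℝ × En n × ℝ) → En n) (OmegaExt n ×ˢ Set.univ)
    (OmegaExt n) := fun p hp => hp.1
  have lift : ∀ {F : Type} [TopologicalSpace F] {f : En n → F}, ContinuousOn f (OmegaExt n) →
      ContinuousOn (fun p : En n × (ℝ × En n × ℝ) => f p.1) (OmegaExt n ×ˢ Set.univ) :=
    fun hf => hf.comp continuousOn_fst mf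
  have L1 := (hlim (fun p => H p.1 * (E p.1 * (χ p.1 * p.2.1)) ^ 2)
    ((lift hH).mul (((lift hE).mul ((lift hχ.continuousOn).mul (by fun_prop))).pow 2))
    (fun x hx p => by simp [hχ0 x hx])).2
  have L2 := (hlim (fun p => H p.1 * ‖p.1‖ ^ 2 * (E p.1 * (χ p.1 * p.2.2.2 +
      2 * inner ℝ (𝒜 p.1 (gradient χ p.1)) p.2.2.1
        + p.2.1 * divg (fun y => 𝒜 y (gradient χ y)) p.1)) ^ 2)
    (((lift hH).mul (by fun_prop)).mul (((lift hE).mul ((((lift hχ.continuousOn).mul (by fun_prop)).add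
      (continuousOn_const.mul ((lift cAχ.continuousOn).inner (𝕜 := ℝ) (by fun_prop)))).add
        (ContinuousOn.mul (by fun_prop) (lift cd)))).pow 2))
    (fun x hx p => by simp [hχ0 x hx, hg0 x hx, hd0 x hx])).2
  simp only [mul_zero, zero_add] at L2
  refine le_of_tendsto_of_tendsto' L1 (L2.const_mul c) fun j => ?_
  have hv : ContDiffOn ℝ 2 (fun x => χ x * U j x) (OmegaExt n) := hχ.mul (hU j).contDiffOn
  have hv0 : ∀ x ∉ k, χ x * U j x = 0 := fun x hx => by simp [hχ0 x hx]
  refine (key _ hv hv0).trans (le_of_eq ?_)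
  congr 2
  ext x
  by_cases hx : x ∈ k
  · have hxΩ := hks hx
    have := divg_mul (h.diffAt hxΩ) (h.sym x hxΩ) (hχ.contDiffAt (hO.mem_nhds hxΩ))
      ((hU j).contDiffAt (x := x))
    unfold Lop
    rw [this]
    ring
  · rw [Lop_supp 𝒜 hk.isClosed hv0 hx]
    simp [hχ0 x hx, hg0 x hx, hd0 x hx]

lemma caccioppoli {𝒜 : En n → En n →L[ℝ] En n} {lam α K : ℝ} (h : Good 𝒜 lam α K) {u : En n → ℝ}
    (hu : ContDiffOn ℝ 1 u (OmegaExt n)) (hw : WeakOp 𝒜 u) {k : Set (En n)} (hk : IsCompact k)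
    (hks : k ⊆ OmegaExt n)
    {ζ : En n → ℝ} (hζ : ContDiffOn ℝ 2 ζ (OmegaExt n)) (hζ0 : ∀ x ∉ k, ζ x = 0) :
    lam / 2 * ∫ x, ζ x ^ 2 * ‖gradient u x‖ ^ 2 ≤
      ∫ x, (ζ x ^ 2 + 2 * (1 + K) ^ 2 / lam * ‖gradient ζ x‖ ^ 2) * u x ^ 2 := by
  have hO := isOpen_Omega (n := n)
  obtain ⟨U, hU, hlim⟩ := approx_lim h hu hw hk hks
  have cgζ : ContDiffOn ℝ 1 (gradient ζ) (OmegaExt n) := contDiffOn_gradient hO hζ (by norm_num)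
  have hg0 : ∀ x ∉ k, gradient ζ x = 0 := fun x hx => gradient_of_supp hk.isClosed hζ0 hx
  have mf : Set.MapsTo (Prod.fst : En n × (ℝ × En n × ℝ) → En n) (OmegaExt n ×ˢ Set.univ)
    (OmegaExt n) := fun p hp => hp.1
  have lift : ∀ {F : Type} [TopologicalSpace F] {f : En n → F}, ContinuousOn f (OmegaExt n) →
      ContinuousOn (fun p : En n × (ℝ × En n × ℝ) => f p.1) (OmegaExt n ×ˢ Set.univ) :=
    fun hf => hf.comp continuousOn_fst mf
  have L1 := hlim (fun p => ζ p.1 ^ 2 * ‖p.2.2.1‖ ^ 2)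
    (((lift hζ.continuousOn).pow 2).mul (by fun_prop))
    (fun x hx p => by simp [hζ0 x hx])
  have L2 := hlim (fun p => (ζ p.1 ^ 2 + 2 * (1 + K) ^ 2 / lam * ‖gradient ζ p.1‖ ^ 2) * p.2.1 ^ 2
      - ζ p.1 ^ 2 * (p.2.1 * p.2.2.2))
    (((((lift hζ.continuousOn).pow 2).add (continuousOn_const.mul
      ((lift cgζ.continuousOn).norm.pow 2))).mul (by fun_prop)).sub
      (((lift hζ.continuousOn).pow 2).mul (by fun_prop)))
    (fun x hx p => by simp [hζ0 x hx, hg0 x hx])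
  have L2' := L2.2
  simp only [mul_zero, sub_zero] at L2'
  refine le_of_tendsto_of_tendsto' (L1.2.const_mul _) L2' fun j => ?_
  have cgU : ContDiff ℝ 1 (gradient (U j)) := contDiff_gradient (hU j) (by norm_num)
  have cAU : ContDiffOn ℝ 1 (fun y => 𝒜 y (gradient (U j) y)) (OmegaExt n) :=
    h.smooth.clm_apply cgU.contDiffOn
  have cf : ContDiffOn ℝ 1 (fun y => ζ y * (ζ y * U j y)) (OmegaExt n) :=
    (hζ.mul (hζ.mul (hU j).contDiffOn)).of_le (by norm_num)
  have hV0 : ∀ x ∉ k, (ζ x * (ζ x * U j x)) • 𝒜 x (gradient (U j) x) = 0 := fun x hx => by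
    simp [hζ0 x hx]
  obtain ⟨hVi, hVint⟩ := integral_divg (V := fun x => (ζ x * (ζ x * U j x)) • 𝒜 x (gradient (U j) x))
    (contDiff_of_supp hO hk.isClosed hks (cf.smul cAU) hV0)
    (hasCompactSupport_of_supp hk hV0)
  rw [← integral_const_mul, ← sub_nonneg, ← integral_sub (L2.1 j) ((L1.1 j).const_mul _), ← neg_zero,
    ← hVint, ← integral_neg]
  refine integral_mono hVi.neg ((L2.1 j).sub ((L1.1 j).const_mul _)) fun x => ?_
  simp only
  by_cases hx : x ∈ k
  swap
  · rw [divg_of_supp hk.isClosed hV0 hx]; simp [hζ0 x hx, hg0 x hx]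
  have hxΩ := hks hx
  have dζ : DifferentiableAt ℝ ζ x :=
    (hζ.contDiffAt (hO.mem_nhds hxΩ)).differentiableAt (by norm_num)
  have dU : DifferentiableAt ℝ (U j) x := ((hU j).differentiable (by norm_num)) x
  have dζU : DifferentiableAt ℝ (fun y => ζ y * U j y) x := dζ.mul dU
  have dζζU : DifferentiableAt ℝ (fun y => ζ y * (ζ y * U j y)) x := dζ.mul dζU
  rw [divg_smul dζζU
    ((cAU.contDiffAt (hO.mem_nhds hxΩ)).differentiableAt (by norm_num))]
  obtain ⟨D, hD⟩ : ∃ D, D = divg (fun y => 𝒜 y (gradient (U j) y)) x := ⟨_, rfl⟩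
  have hLop : Lop 𝒜 (U j) x = D + U j x := by rw [hD]; rfl
  rw [hLop, ← hD, ← inner_gradient_left, gradient_mul dζ dζU, gradient_mul dζ dU]
  simp only [inner_add_left, inner_smul_left, smul_add, smul_smul]
  have e1 := h.ell x hxΩ (gradient (U j) x)
  rw [real_inner_comm] at e1
  have e2 := abs_real_inner_le_norm (gradient ζ x) (𝒜 x (gradient (U j) x))
  have e3 := h.A_le hxΩ (gradient (U j) x)
  obtain ⟨N, hN⟩ : ∃ N, N = inner ℝ (gradient ζ x) (𝒜 x (gradient (U j) x)) := ⟨_, rfl⟩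
  obtain ⟨Q, hQ⟩ : ∃ N, N = inner ℝ (gradient (U j) x) (𝒜 x (gradient (U j) x)) := ⟨_, rfl⟩
  rw [← hN] at e2 ⊢
  rw [← hQ] at e1 ⊢
  have hK := h.K1
  have hl := h.lam0
  obtain ⟨g, hg⟩ : ∃ g, g = ‖gradient (U j) x‖ := ⟨_, rfl⟩
  obtain ⟨z, hz⟩ : ∃ g, g = ‖gradient ζ x‖ := ⟨_, rfl⟩
  have hz0 : 0 ≤ z := hz ▸ norm_nonneg _
  have hg0 : 0 ≤ g := hg ▸ norm_nonneg _
  rw [← hz] at e2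
  rw [← hg] at e1 e3
  rw [← hz, ← hg]
  have e4 : |N| ≤ z * ((1 + K) * g) := e2.trans (by gcongr)
  have e5 : N ^ 2 ≤ (z * ((1 + K) * g)) ^ 2 := by
    rw [← sq_abs]; exact pow_le_pow_left₀ (abs_nonneg _) e4 2
  simp only [conj_trivial, Pi.mul_apply]
  obtain ⟨s, hs⟩ : ∃ s, s = ζ x := ⟨_, rfl⟩
  obtain ⟨U0, hU0⟩ : ∃ s, s = U j x := ⟨_, rfl⟩
  rw [← hs, ← hU0]
  have e6 : |2 * (s * (U0 * N))| ≤ 2 * ((|s| * g) * (|U0| * z * (1 + K))) := by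
    rw [abs_mul, abs_mul, abs_mul, abs_two]
    calc 2 * (|s| * (|U0| * |N|)) ≤ 2 * (|s| * (|U0| * (z * ((1 + K) * g)))) := by gcongr
      _ = _ := by ring
  have e7 : 2 * ((|s| * g) * (|U0| * z * (1 + K))) ≤ lam / 2 * (|s| * g) ^ 2
      + 2 / lam * (|U0| * z * (1 + K)) ^ 2 := by
    obtain ⟨X, hX⟩ : ∃ X, X = |s| * g := ⟨_, rfl⟩
    obtain ⟨Y, hY⟩ : ∃ X, X = |U0| * z * (1 + K) := ⟨_, rfl⟩
    rw [← hX, ← hY]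
    have : lam / 2 * X ^ 2 + 2 / lam * Y ^ 2 - 2 * (X * Y) = (2 * lam)⁻¹ * (lam * X - 2 * Y) ^ 2 := by
      field_simp; ring
    have h2 : 0 ≤ (2 * lam)⁻¹ * (lam * X - 2 * Y) ^ 2 := by positivity
    linarith only [this, h2]
  have e8 : s ^ 2 * (lam * g ^ 2) ≤ s ^ 2 * Q := by gcongr
  have e9 := (neg_abs_le (2 * (s * (U0 * N))))
  rw [mul_pow, mul_pow, mul_pow, sq_abs, sq_abs] at e7
  have e10 : 2 / lam * (U0 ^ 2 * z ^ 2 * (1 + K) ^ 2) = 2 * (1 + K) ^ 2 / lam * z ^ 2 * U0 ^ 2 := by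
    ring
  linarith only [e6, e7, e8, e9, e10]

end AL

namespace AL

open scoped Topology ContDiff

variable {n : ℕ}

/-- A smooth one dimensional cutoff rising from `0` to `1` on `[a, b]`. -/
structure Cut (a b : ℝ) where
  X : ℝ → ℝ
  X1 : ℝ → ℝ
  X2 : ℝ → ℝ
  D : ℝ
  d1 : ∀ t, HasDerivAt X (X1 t) t
  d2 : ∀ t, HasDerivAt X1 (X2 t) t
  smooth : ContDiff ℝ 2 X
  nonneg : ∀ t, 0 ≤ X t
  le_one : ∀ t, X t ≤ 1
  zero : ∀ t, t ≤ a → X t = 0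
  one : ∀ t, b ≤ t → X t = 1
  D1 : 1 ≤ D
  b1 : ∀ t, |X1 t| ≤ D
  b2 : ∀ t, |X2 t| ≤ D
  z1 : ∀ t, t ∉ Set.Icc a b → X1 t = 0
  z2 : ∀ t, t ∉ Set.Icc a b → X2 t = 0

lemma exists_cut {a b : ℝ} (hab : a < b) : Nonempty (Cut a b) := by
  obtain ⟨X, hX⟩ : ∃ X : ℝ → ℝ, X = fun t => Real.smoothTransition ((t - a) / (b - a)) := ⟨_, rfl⟩
  have hba : 0 < b - a := by linarith
  have hs : ContDiff ℝ ∞ X := by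
    rw [hX]
    exact Real.smoothTransition.contDiff.comp ((contDiff_id.sub contDiff_const).div_const _)
  have hs1 : ContDiff ℝ ∞ (deriv X) := (contDiff_infty_iff_deriv.1 hs).2
  have hs2 : ContDiff ℝ ∞ (deriv (deriv X)) := (contDiff_infty_iff_deriv.1 hs1).2
  have hz : ∀ t, t ≤ a → X t = 0 := fun t ht => by
    rw [hX]; exact Real.smoothTransition.zero_of_nonpos (div_nonpos_of_nonpos_of_nonneg (by linarith) hba.le)
  have ho : ∀ t, b ≤ t → X t = 1 := fun t ht => by
    rw [hX]; exact Real.smoothTransition.one_of_one_le (by rw [le_div_iff₀ hba]; linarith)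
  have z1 : ∀ t, t ∉ Set.Icc a b → deriv X t = 0 := fun t ht => by
    rcases lt_or_ge t a with h | h
    · have : X =ᶠ[𝓝 t] fun _ => 0 := by
        filter_upwards [Iio_mem_nhds h] with s hs using hz s (le_of_lt hs)
      rw [this.deriv_eq]; simp
    · have hb : b < t := by
        by_contra hb
        exact ht ⟨h, not_lt.1 hb⟩
      have : X =ᶠ[𝓝 t] fun _ => 1 := by
        filter_upwards [Ioi_mem_nhds hb] with s hs using ho s (le_of_lt hs)
      rw [this.deriv_eq]; simp
  have z2 : ∀ t, t ∉ Set.Icc a b → deriv (deriv X) t = 0 := fun t ht => by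
    have : deriv X =ᶠ[𝓝 t] fun _ => 0 := by
      filter_upwards [isClosed_Icc.isOpen_compl.mem_nhds ht] with s hs using z1 s hs
    rw [this.deriv_eq]; simp
  obtain ⟨B1, hB1⟩ := hs1.continuous.bounded_above_of_compact_support
    (HasCompactSupport.intro isCompact_Icc fun t ht => z1 t ht)
  obtain ⟨B2, hB2⟩ := hs2.continuous.bounded_above_of_compact_support
    (HasCompactSupport.intro isCompact_Icc fun t ht => z2 t ht)
  exact ⟨{ X := X, X1 := deriv X, X2 := deriv (deriv X), D := max 1 (max B1 B2)
           d1 := fun t => ((hs.differentiable (by simp)) t).hasDerivAt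
           d2 := fun t => ((hs1.differentiable (by simp)) t).hasDerivAt
           smooth := hs.of_le (by norm_cast)
           nonneg := fun t => by rw [hX]; exact Real.smoothTransition.nonneg _
           le_one := fun t => by rw [hX]; exact Real.smoothTransition.le_one _
           zero := hz
           one := ho
           D1 := le_max_left _ _
           b1 := fun t => (hB1 t).trans ((le_max_left _ _).trans (le_max_right _ _))
           b2 := fun t => (hB2 t).trans ((le_max_right _ _).trans (le_max_right _ _))
           z1 := z1
           z2 := z2 }⟩

/-- A closed annulus in logarithmic radius. -/
def ann (n : ℕ) (a b : ℝ) : Set (En n) := {x | Real.exp a ≤ ‖x‖ ∧ ‖x‖ ≤ Real.exp b}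

lemma ann_compact (a b : ℝ) : IsCompact (ann n a b) := by
  refine (isCompact_closedBall (0 : En n) (Real.exp b)).of_isClosed_subset ?_ fun x hx => by
    simpa using hx.2
  exact (isClosed_le continuous_const continuous_norm).inter
    (isClosed_le continuous_norm continuous_const)

lemma ann_Omega {a b : ℝ} (ha : 0 < a) : ann n a b ⊆ OmegaExt n := fun _ hx =>
  lt_of_lt_of_le (Real.one_lt_exp_iff.2 ha) hx.1

lemma mem_ann {a b : ℝ} {x : En n} (hx : x ≠ 0) :
    x ∈ ann n a b ↔ a ≤ Real.log ‖x‖ ∧ Real.log ‖x‖ ≤ b := by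
  have := norm_pos_iff.2 hx
  rw [Real.le_log_iff_exp_le this, Real.log_le_iff_le_exp this]
  rfl

/-- Radial functions vanishing for logarithmic radius outside `[a, b]`. -/
lemma rad_supp {F : ℝ → ℝ} {a b : ℝ} (ha : 0 < a) (hF : ∀ t, t ∉ Set.Icc a b → F t = 0) (x : En n)
    (hx : x ∉ ann n a b) : F (Real.log ‖x‖) = 0 := by
  apply hF
  rintro ⟨h1, h2⟩
  by_cases h0 : x = 0
  · rw [h0] at h1; simp at h1; linarith
  · exact hx ((mem_ann h0).2 ⟨h1, h2⟩)

lemma E_bound {𝒜 : En n → En n →L[ℝ] En n} {lam α K : ℝ} (h : Good 𝒜 lam α K) {F F1 F2 : ℝ → ℝ}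
    (hF : ∀ t, HasDerivAt F (F1 t) t) (hF1 : ∀ t, HasDerivAt F1 (F2 t) t) {x : En n}
    (hx : x ∈ OmegaExt n) (ξ : En n) (s : ℝ) :
    ‖x‖ ^ 2 * (2 * inner ℝ (𝒜 x (gradient (fun y : En n => F (Real.log ‖y‖)) x)) ξ
        + s * divg (fun y => 𝒜 y (gradient (fun y : En n => F (Real.log ‖y‖)) y)) x) ^ 2 ≤
      2 * (2 * (1 + K) + n * (1 + 2 * K)) ^ 2 * (|F1 (Real.log ‖x‖)| + |F2 (Real.log ‖x‖)|) ^ 2 *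
        (‖ξ‖ ^ 2 + s ^ 2) := by
  have hx0 := Omega_ne hx
  rw [divg_rad hx0 (h.diffAt hx) hF (hF1 _), gradient_rad hx0 (hF _)]
  obtain ⟨f1, hf1⟩ : ∃ f, f = F1 (Real.log ‖x‖) := ⟨_, rfl⟩
  obtain ⟨f2, hf2⟩ : ∃ f, f = F2 (Real.log ‖x‖) := ⟨_, rfl⟩
  rw [← hf1, ← hf2, map_smul, inner_smul_left, conj_trivial]
  have hr1 : 1 < ‖x‖ := hx
  have i1 : |inner ℝ (𝒜 x x) ξ| ≤ (1 + K) * ‖x‖ * ‖ξ‖ :=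
    (abs_real_inner_le_norm _ _).trans (by gcongr; exact h.A_le hx x)
  have i2 : |inner ℝ (𝒜 x x) x| ≤ (1 + K) * ‖x‖ * ‖x‖ :=
    (abs_real_inner_le_norm _ _).trans (by gcongr; exact h.A_le hx x)
  have i3 : |divg (fun y => 𝒜 y y) x| ≤ n * (1 + 2 * K) := by
    have h1 := h.d_sub hx
    have h2 := h.y_le hx
    have h3 := h.K1
    have h4 : (n : ℝ) * (2 * K * ‖x‖ ^ (-α)) ≤ n * (2 * K * 1) := by gcongr
    have h5 := abs_add_le (divg (fun y => 𝒜 y y) x - n) n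
    rw [sub_add_cancel, Nat.abs_cast] at h5
    linarith only [h1, h4, h5]
  obtain ⟨d, hd⟩ : ∃ d, d = divg (fun y => 𝒜 y y) x := ⟨_, rfl⟩
  obtain ⟨p, hp⟩ : ∃ d, d = inner ℝ (𝒜 x x) ξ := ⟨_, rfl⟩
  obtain ⟨q, hq⟩ : ∃ d, d = inner ℝ (𝒜 x x) x := ⟨_, rfl⟩
  obtain ⟨r, hr⟩ : ∃ d, d = ‖x‖ := ⟨_, rfl⟩
  obtain ⟨g, hg⟩ : ∃ d, d = ‖ξ‖ := ⟨_, rfl⟩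
  have hg0 : 0 ≤ g := hg ▸ norm_nonneg _
  have hK := h.K1
  rw [← hd] at i3
  rw [← hp, ← hr, ← hg] at i1
  rw [← hq, ← hr] at i2
  rw [← hr] at hr1
  rw [← hd, ← hp, ← hq, ← hr, ← hg]
  have hr0 : 0 < r := by linarith
  obtain ⟨c, hc⟩ : ∃ c, c = 2 * (1 + K) + n * (1 + 2 * K) := ⟨_, rfl⟩
  rw [← hc]
  have hn0 : (0 : ℝ) ≤ n := Nat.cast_nonneg n
  have hc0 : 0 ≤ c := by rw [hc]; positivity
  have hc1 : 2 * (1 + K) ≤ c := by rw [hc]; linarith [mul_nonneg hn0 (by linarith : 0 ≤ 1 + 2 * K)]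
  have j1 : |p / r| ≤ (1 + K) * g := by
    rw [abs_div, abs_of_pos hr0, div_le_iff₀ hr0]; linarith
  have j2 : |q / r ^ 2| ≤ 1 + K := by
    rw [abs_div, abs_of_pos (by positivity : 0 < r ^ 2), div_le_iff₀ (by positivity)]; linarith
  have j3 : r⁻¹ ≤ 1 := inv_le_one_of_one_le₀ hr1.le
  have e : r * (2 * (f1 / r ^ 2 * p) + s * ((f2 - 2 * f1) / r ^ 4 * q + f1 / r ^ 2 * d)) =
      2 * (f1 * (p / r)) + s * (r⁻¹ * ((f2 - 2 * f1) * (q / r ^ 2) + f1 * d)) := by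
    field_simp
  have k1 : |(f2 - 2 * f1) * (q / r ^ 2) + f1 * d| ≤ c * (|f1| + |f2|) := by
    have a1 : |(f2 - 2 * f1)| ≤ |f2| + 2 * |f1| := by
      refine (abs_sub _ _).trans ?_
      rw [abs_mul, abs_two]
    calc _ ≤ |(f2 - 2 * f1)| * |q / r ^ 2| + |f1| * |d| := by
          refine (abs_add_le _ _).trans ?_
          rw [abs_mul, abs_mul]
      _ ≤ (|f2| + 2 * |f1|) * (1 + K) + |f1| * (n * (1 + 2 * K)) := by gcongr
      _ ≤ _ := by
          rw [hc]
          have b1 : 0 ≤ |f2| * (1 + K) := by positivity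
          have b2 : 0 ≤ |f2| * (n * (1 + 2 * K)) := by positivity
          linarith only [b1, b2]
  have k2 : |r * (2 * (f1 / r ^ 2 * p) + s * ((f2 - 2 * f1) / r ^ 4 * q + f1 / r ^ 2 * d))| ≤
      c * (|f1| + |f2|) * (g + |s|) := by
    rw [e]
    calc _ ≤ 2 * (|f1| * |p / r|) + |s| * (r⁻¹ * |(f2 - 2 * f1) * (q / r ^ 2) + f1 * d|) := by
          refine (abs_add_le _ _).trans (le_of_eq ?_)
          rw [abs_mul, abs_mul, abs_mul, abs_mul, abs_two, abs_of_pos (inv_pos.2 hr0)]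
      _ ≤ 2 * (|f1| * ((1 + K) * g)) + |s| * (1 * (c * (|f1| + |f2|))) := by gcongr
      _ ≤ _ := by
          have b1 : 0 ≤ (c - 2 * (1 + K)) * (|f1| * g) :=
            mul_nonneg (by linarith) (by positivity)
          have b2 : 0 ≤ c * (|f2| * g) := by positivity
          linarith only [b1, b2]
  rw [← mul_pow, ← sq_abs]
  refine (pow_le_pow_left₀ (abs_nonneg _) k2 2).trans ?_
  have k3 : (g + |s|) ^ 2 ≤ 2 * (g ^ 2 + s ^ 2) := by
    have := sq_nonneg (g - |s|)
    have h2 := sq_abs s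
    linarith only [this, h2]
  calc (c * (|f1| + |f2|) * (g + |s|)) ^ 2 = c ^ 2 * (|f1| + |f2|) ^ 2 * (g + |s|) ^ 2 := by ring
    _ ≤ c ^ 2 * (|f1| + |f2|) ^ 2 * (2 * (g ^ 2 + s ^ 2)) := by gcongr
    _ = _ := by ring

lemma shift_deriv {f f' : ℝ → ℝ} (hf : ∀ t, HasDerivAt f (f' t) t) (ρ t : ℝ) :
    HasDerivAt (fun t => f (t - ρ)) (f' (t - ρ)) t := (hf (t - ρ)).comp_sub_const t ρ

/-- Gradient control in a thinner annulus. -/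
lemma outer_bound {𝒜 : En n → En n →L[ℝ] En n} {lam α K : ℝ} (h : Good 𝒜 lam α K) {u : En n → ℝ}
    (hu : ContDiffOn ℝ 1 u (OmegaExt n)) (hw : WeakOp 𝒜 u) :
    ∃ C > 0, ∀ R > 1, ∫ x in ann n (Real.log R + 1 / 4) (Real.log R + 1 / 2),
      (‖gradient u x‖ ^ 2 + u x ^ 2) ≤
      C * ∫ x in ball (0 : En n) (2 * R) \ ball (0 : En n) R, u x ^ 2 := by
  obtain ⟨Y⟩ := exists_cut (show (1 / 8 : ℝ) < 1 / 4 by norm_num)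
  obtain ⟨Z⟩ := exists_cut (show (1 / 2 : ℝ) < 5 / 8 by norm_num)
  obtain ⟨D, hD⟩ : ∃ D, D = Y.D + Z.D := ⟨_, rfl⟩
  have hD0 : 0 ≤ D := by rw [hD]; linarith [Y.D1, Z.D1]
  have hl := h.lam0
  obtain ⟨c, hc⟩ : ∃ c, c = 1 + 2 * (1 + K) ^ 2 / lam * D ^ 2 := ⟨_, rfl⟩
  have hc0 : 0 < c := by rw [hc]; positivity
  refine ⟨2 / lam * c + 1, by positivity, fun R hR => ?_⟩
  have hO := isOpen_Omega (n := n)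
  obtain ⟨ρ, hρ⟩ : ∃ ρ, ρ = Real.log R := ⟨_, rfl⟩
  have hρ0 : 0 < ρ := hρ ▸ Real.log_pos hR
  have hRe : Real.exp ρ = R := by rw [hρ, Real.exp_log (by linarith)]
  rw [← hρ]
  obtain ⟨F, hF⟩ : ∃ F : ℝ → ℝ, F = fun t => Y.X (t - ρ) * (1 - Z.X (t - ρ)) := ⟨_, rfl⟩
  have hFd : ∀ t, HasDerivAt F (Y.X1 (t - ρ) * (1 - Z.X (t - ρ)) + Y.X (t - ρ) * (-Z.X1 (t - ρ))) t :=
    fun t => by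
      rw [hF]
      exact (shift_deriv Y.d1 ρ t).mul ((shift_deriv Z.d1 ρ t).const_sub 1)
  have hFs : ContDiff ℝ 2 F := by
    rw [hF]
    have s1 := Y.smooth
    have s2 := Z.smooth
    fun_prop
  have hF0 : ∀ t, t ∉ Set.Icc (ρ + 1 / 8) (ρ + 5 / 8) → F t = 0 := fun t ht => by
    rw [hF]; simp only
    rcases lt_or_ge t (ρ + 1 / 8) with h1 | h1
    · rw [Y.zero _ (by linarith), zero_mul]
    · have : ρ + 5 / 8 < t := by
        by_contra hb
        exact ht ⟨h1, not_lt.1 hb⟩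
      rw [Z.one _ (by linarith), sub_self, mul_zero]
  have hF1 : ∀ t, t ∈ Set.Icc (ρ + 1 / 4) (ρ + 1 / 2) → F t = 1 := fun t ht => by
    rw [hF]; simp only
    rw [Y.one _ (by linarith [ht.1]), Z.zero _ (by linarith [ht.2])]; norm_num
  have hFle : ∀ t, F t ^ 2 ≤ 1 := fun t => by
    rw [hF]; simp only
    have a1 := Y.nonneg (t - ρ)
    have a2 := Y.le_one (t - ρ)
    have a3 := Z.nonneg (t - ρ)
    have a4 := Z.le_one (t - ρ)
    have : Y.X (t - ρ) * (1 - Z.X (t - ρ)) ≤ 1 := mul_le_one₀ a2 (by linarith) (by linarith)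
    exact pow_le_one₀ (mul_nonneg a1 (by linarith)) this
  have hFD : ∀ t, |Y.X1 (t - ρ) * (1 - Z.X (t - ρ)) + Y.X (t - ρ) * (-Z.X1 (t - ρ))| ≤ D := fun t => by
    have a1 := Y.nonneg (t - ρ)
    have a2 := Y.le_one (t - ρ)
    have a3 := Z.nonneg (t - ρ)
    have a4 := Z.le_one (t - ρ)
    have a5 := Y.b1 (t - ρ)
    have a6 := Z.b1 (t - ρ)
    have a7 := Y.D1
    have a8 := Z.D1
    refine (abs_add_le _ _).trans ?_
    rw [abs_mul, abs_mul, abs_neg, abs_of_nonneg a1, abs_of_nonneg (by linarith : 0 ≤ 1 - Z.X (t - ρ)), hD]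
    have b1 : |Y.X1 (t - ρ)| * (1 - Z.X (t - ρ)) ≤ Y.D * 1 :=
      mul_le_mul a5 (by linarith) (by linarith) (by linarith)
    have b2 : Y.X (t - ρ) * |Z.X1 (t - ρ)| ≤ 1 * Z.D :=
      mul_le_mul a2 a6 (abs_nonneg _) (by norm_num)
    linarith
  have hk := ann_compact (n := n) (ρ + 1 / 8) (ρ + 5 / 8)
  have hkΩ := ann_Omega (n := n) (b := ρ + 5 / 8) (show 0 < ρ + 1 / 8 by linarith)
  have hk2 := ann_compact (n := n) (ρ + 1 / 4) (ρ + 1 / 2)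
  have hkΩ2 := ann_Omega (n := n) (b := ρ + 1 / 2) (show 0 < ρ + 1 / 4 by linarith)
  have hζ0 := rad_supp (n := n) (show 0 < ρ + 1 / 8 by linarith) hF0
  have cac := caccioppoli h hu hw hk hkΩ (contDiffOn_rad hFs) hζ0
  have cg : ContinuousOn (gradient u) (OmegaExt n) :=
    (contDiffOn_gradient hO hu (m := 0) (by simp)).continuousOn
  have cu := hu.continuousOn
  -- the large annulus
  obtain ⟨S, hS⟩ : ∃ S : Set (En n), S = ball (0 : En n) (2 * R) \ ball (0 : En n) R := ⟨_, rfl⟩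
  rw [← hS]
  have hSm : MeasurableSet S := by rw [hS]; exact measurableSet_ball.diff measurableSet_ball
  have iS : IntegrableOn (fun x => u x ^ 2) S := by
    have hc : IsCompact (closedBall (0 : En n) (2 * R) \ ball (0 : En n) R) :=
      (isCompact_closedBall _ _).diff isOpen_ball
    have : IntegrableOn (fun x => u x ^ 2) (closedBall (0 : En n) (2 * R) \ ball (0 : En n) R) :=
      ((cu.mono fun x hx => by
        have : R ≤ ‖x‖ := by simpa using hx.2
        exact lt_of_lt_of_le hR this).pow 2).integrableOn_compact hc
    refine this.mono_set ?_
    rw [hS]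
    exact Set.sdiff_subset_sdiff_left ball_subset_closedBall
  have hkS : ann n (ρ + 1 / 8) (ρ + 5 / 8) ⊆ S := fun x hx => by
    rw [hS]
    have l2 := Real.log_two_gt_d9
    have a1 : R ≤ Real.exp (ρ + 1 / 8) := by
      rw [← hRe]; exact Real.exp_le_exp.2 (by linarith)
    have a2 : Real.exp (ρ + 5 / 8) < 2 * R := by
      rw [← hRe, ← Real.exp_log (show (0 : ℝ) < 2 by norm_num), ← Real.exp_add]
      rw [Real.exp_lt_exp]; linarith
    constructor
    · simpa using lt_of_le_of_lt hx.2 a2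
    · simpa using a1.trans hx.1
  have hkk : ann n (ρ + 1 / 4) (ρ + 1 / 2) ⊆ ann n (ρ + 1 / 8) (ρ + 5 / 8) := fun x hx =>
    ⟨(Real.exp_le_exp.2 (by linarith)).trans hx.1, hx.2.trans (Real.exp_le_exp.2 (by linarith))⟩
  have r1 : ∫ x, (F (Real.log ‖x‖) ^ 2 + 2 * (1 + K) ^ 2 / lam *
      ‖gradient (fun y : En n => F (Real.log ‖y‖)) x‖ ^ 2) * u x ^ 2 ≤ c * ∫ x in S, u x ^ 2 := by
    rw [← integral_const_mul, ← integral_indicator hSm]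
    refine integral_mono_of_nonneg (ae_of_all _ fun x => by positivity)
      ((integrable_indicator_iff hSm).2 (iS.const_mul c)) (ae_of_all _ fun x => ?_)
    simp only
    by_cases hx : x ∈ ann n (ρ + 1 / 8) (ρ + 5 / 8)
    · rw [Set.indicator_of_mem (hkS hx)]
      have hxΩ := hkΩ hx
      have hx1 : 1 < ‖x‖ := hxΩ
      have : ‖gradient (fun y : En n => F (Real.log ‖y‖)) x‖ ≤ D := by
        rw [gradient_rad (Omega_ne hxΩ) (hFd _), norm_smul, norm_div, Real.norm_eq_abs]
        have a1 := hFD (Real.log ‖x‖)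
        rw [norm_pow, norm_norm, sq, div_mul_eq_mul_div, mul_div_mul_right _ _ (by linarith)]
        refine (div_le_self (abs_nonneg _) hx1.le).trans a1
      rw [hc]
      have a2 := hFle (Real.log ‖x‖)
      gcongr
    · rw [hζ0 x hx, gradient_of_supp hk.isClosed hζ0 hx]
      have : 0 ≤ S.indicator (fun x => c * u x ^ 2) x := Set.indicator_nonneg (fun x _ => by positivity) x
      simpa using this
  have r2 : ∫ x in ann n (ρ + 1 / 4) (ρ + 1 / 2), ‖gradient u x‖ ^ 2 ≤
      ∫ x, F (Real.log ‖x‖) ^ 2 * ‖gradient u x‖ ^ 2 := by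
    rw [← integral_indicator hk2.measurableSet]
    refine integral_mono_of_nonneg (ae_of_all _ fun x => Set.indicator_nonneg (fun x _ => by positivity) x)
      (integrable_of_supp hO hk hkΩ (((contDiffOn_rad hFs).continuousOn.pow 2).mul (cg.norm.pow 2))
        fun x hx => by simp [hζ0 x hx]) (ae_of_all _ fun x => ?_)
    simp only
    by_cases hx : x ∈ ann n (ρ + 1 / 4) (ρ + 1 / 2)
    · rw [Set.indicator_of_mem hx, hF1 _ ((mem_ann (Omega_ne (hkΩ2 hx))).1 hx)]
      simp
    · rw [Set.indicator_of_notMem hx]; positivity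
  have r3 : ∫ x in ann n (ρ + 1 / 4) (ρ + 1 / 2), u x ^ 2 ≤ ∫ x in S, u x ^ 2 :=
    setIntegral_mono_set iS (ae_of_all _ fun x => sq_nonneg _) (hkk.trans hkS).eventuallyLE
  have i1 : IntegrableOn (fun x => ‖gradient u x‖ ^ 2) (ann n (ρ + 1 / 4) (ρ + 1 / 2)) :=
    ((cg.mono hkΩ2).norm.pow 2).integrableOn_compact hk2
  have i2 : IntegrableOn (fun x => u x ^ 2) (ann n (ρ + 1 / 4) (ρ + 1 / 2)) :=
    ((cu.mono hkΩ2).pow 2).integrableOn_compact hk2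
  rw [integral_add i1 i2]
  have r4 : ∫ x, F (Real.log ‖x‖) ^ 2 * ‖gradient u x‖ ^ 2 ≤ 2 / lam * (c * ∫ x in S, u x ^ 2) := by
    have := mul_le_mul_of_nonneg_left (cac.trans r1) (by positivity : 0 ≤ 2 / lam)
    rw [← mul_assoc, show 2 / lam * (lam / 2) = 1 by field_simp, one_mul] at this
    exact this
  linarith

end AL

namespace AL

open scoped Topology ContDiff

variable {n : ℕ}

/-- The constant in front of the commutator terms. -/
def Qc (n : ℕ) (K D : ℝ) : ℝ := 2 * (2 * (1 + K) + n * (1 + 2 * K)) ^ 2 * D ^ 2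

/-- The Carleman inequality applied to the solution multiplied by a cutoff. -/
lemma step {𝒜 : En n → En n →L[ℝ] En n} {lam α K : ℝ} (h : Good 𝒜 lam α K) {u : En n → ℝ}
    (hu : ContDiffOn ℝ 1 u (OmegaExt n)) (hw : WeakOp 𝒜 u) {t1 t2 t3 T ρ : ℝ} (ht1 : 0 < t1)
    (h12 : t1 ≤ t2) (h23 : t2 ≤ t3) (h3T : t3 ≤ T) (hTρ : T ≤ ρ)
    (X : Cut t1 t2) (Y : Cut (1 / 4) (1 / 2)) {H Ψ : ℝ → ℝ} (cH : ContDiff ℝ 0 H)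
    (cΨ : ContDiff ℝ 0 Ψ) {c h0 h1 B : ℝ} (hc : 0 ≤ c) (hh0 : 0 ≤ h0) (hh1 : 0 ≤ h1) (hB : 0 ≤ B)
    (H0 : ∀ t, 0 ≤ H t) (hin : ∀ t, t1 ≤ t → t ≤ t2 → H t ≤ h1 ∧ Ψ t ≤ Ψ t2)
    (hmid : ∀ t, t3 ≤ t → t ≤ T → h0 ≤ H t ∧ Ψ t3 ≤ Ψ t)
    (hout : ∀ t, ρ ≤ t → H t * Real.exp (Ψ t) ^ 2 ≤ B)
    (key : ∀ (v : En n → ℝ) (k : Set (En n)),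
      ContDiffOn ℝ 2 v (OmegaExt n) → IsCompact k → k ⊆ OmegaExt n → (∀ x ∉ k, v x = 0) →
      ∫ x, H (Real.log ‖x‖) * (Real.exp (Ψ (Real.log ‖x‖)) * v x) ^ 2 ≤
        c * ∫ x, H (Real.log ‖x‖) * ‖x‖ ^ 2 *
          (Real.exp (Ψ (Real.log ‖x‖)) * Lop 𝒜 v x) ^ 2) :
    h0 * Real.exp (Ψ t3) ^ 2 * ∫ x in ann n t3 T, u x ^ 2 ≤
      c * (Qc n K (2 * X.D + 2 * Y.D + 2 * (X.D * Y.D)) *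
        (h1 * Real.exp (Ψ t2) ^ 2 * (∫ x in ann n t1 t2, (‖gradient u x‖ ^ 2 + u x ^ 2)) +
          B * ∫ x in ann n (ρ + 1 / 4) (ρ + 1 / 2), (‖gradient u x‖ ^ 2 + u x ^ 2))) := by
  have hO := isOpen_Omega (n := n)
  obtain ⟨D, hD⟩ : ∃ D, D = 2 * X.D + 2 * Y.D + 2 * (X.D * Y.D) := ⟨_, rfl⟩
  rw [← hD]
  have XD := X.D1
  have YD := Y.D1
  have XYD : 0 ≤ X.D * Y.D := mul_nonneg (by linarith) (by linarith)
  have hD0 : 0 ≤ D := by rw [hD]; linarith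
  obtain ⟨F, hF⟩ : ∃ F : ℝ → ℝ, F = fun t => X.X t * (1 - Y.X (t - ρ)) := ⟨_, rfl⟩
  obtain ⟨F1, hF1⟩ : ∃ F1 : ℝ → ℝ, F1 = fun t => X.X1 t * (1 - Y.X (t - ρ)) +
    X.X t * (-Y.X1 (t - ρ)) := ⟨_, rfl⟩
  obtain ⟨F2, hF2⟩ : ∃ F2 : ℝ → ℝ, F2 = fun t => (X.X2 t * (1 - Y.X (t - ρ)) +
    X.X1 t * (-Y.X1 (t - ρ))) + (X.X1 t * (-Y.X1 (t - ρ)) + X.X t * (-Y.X2 (t - ρ))) := ⟨_, rfl⟩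
  have d1 : ∀ t, HasDerivAt F (F1 t) t := fun t => by
    rw [hF, hF1]
    exact (X.d1 t).mul ((shift_deriv Y.d1 ρ t).const_sub 1)
  have d2 : ∀ t, HasDerivAt F1 (F2 t) t := fun t => by
    rw [hF1, hF2]
    exact ((X.d2 t).mul ((shift_deriv Y.d1 ρ t).const_sub 1)).add
      ((X.d1 t).mul (shift_deriv Y.d2 ρ t).neg)
  have hFs : ContDiff ℝ 2 F := by
    rw [hF]
    exact X.smooth.mul (contDiff_const.sub (Y.smooth.comp (contDiff_id.sub contDiff_const)))
  have hF0 : ∀ t, t ∉ Set.Icc t1 (ρ + 1 / 2) → F t = 0 := fun t ht => by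
    rw [hF]; simp only
    rcases lt_or_ge t t1 with h1 | h1
    · rw [X.zero _ h1.le, zero_mul]
    · have : ρ + 1 / 2 < t := by
        by_contra hb
        exact ht ⟨h1, not_lt.1 hb⟩
      rw [Y.one _ (by linarith), sub_self, mul_zero]
  have hFone : ∀ t, t3 ≤ t → t ≤ T → F t = 1 := fun t ha hb => by
    rw [hF]; simp only
    rw [X.one _ (by linarith), Y.zero _ (by linarith)]; norm_num
  have hz : ∀ t, t ∉ Set.Icc t1 t2 → t ∉ Set.Icc (ρ + 1 / 4) (ρ + 1 / 2) →
      |F1 t| + |F2 t| = 0 := fun t ha hb => by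
    have hb2 : t - ρ ∉ Set.Icc (1 / 4 : ℝ) (1 / 2) := fun hh =>
      hb ⟨by linarith [hh.1], by linarith [hh.2]⟩
    rw [hF1, hF2]; simp only
    rw [X.z1 _ ha, X.z2 _ ha, Y.z1 _ hb2, Y.z2 _ hb2]; simp
  have hFD : ∀ t, |F1 t| + |F2 t| ≤ D := fun t => by
    have a1 := X.nonneg t
    have a2 := X.le_one t
    have a3 := Y.nonneg (t - ρ)
    have a4 := Y.le_one (t - ρ)
    have a5 := X.b1 t
    have a6 := X.b2 t
    have a7 := Y.b1 (t - ρ)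
    have a8 := Y.b2 (t - ρ)
    have e0 : |1 - Y.X (t - ρ)| ≤ 1 := by rw [abs_of_nonneg (by linarith)]; linarith
    have e1 : |X.X t| ≤ 1 := by rw [abs_of_nonneg a1]; exact a2
    have b1 : |X.X1 t * (1 - Y.X (t - ρ))| ≤ X.D * 1 := by
      rw [abs_mul]; exact mul_le_mul a5 e0 (abs_nonneg _) (by linarith)
    have b2 : |X.X t * (-Y.X1 (t - ρ))| ≤ 1 * Y.D := by
      rw [abs_mul, abs_neg]; exact mul_le_mul e1 a7 (abs_nonneg _) (by linarith)
    have b3 : |X.X2 t * (1 - Y.X (t - ρ))| ≤ X.D * 1 := by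
      rw [abs_mul]; exact mul_le_mul a6 e0 (abs_nonneg _) (by linarith)
    have b4 : |X.X1 t * (-Y.X1 (t - ρ))| ≤ X.D * Y.D := by
      rw [abs_mul, abs_neg]; exact mul_le_mul a5 a7 (abs_nonneg _) (by linarith)
    have b5 : |X.X t * (-Y.X2 (t - ρ))| ≤ 1 * Y.D := by
      rw [abs_mul, abs_neg]; exact mul_le_mul e1 a8 (abs_nonneg _) (by linarith)
    rw [hF1, hF2, hD]; simp only
    have c1 := abs_add_le (X.X1 t * (1 - Y.X (t - ρ))) (X.X t * (-Y.X1 (t - ρ)))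
    have c2 := abs_add_le (X.X2 t * (1 - Y.X (t - ρ)) + X.X1 t * (-Y.X1 (t - ρ)))
      (X.X1 t * (-Y.X1 (t - ρ)) + X.X t * (-Y.X2 (t - ρ)))
    have c3 := abs_add_le (X.X2 t * (1 - Y.X (t - ρ))) (X.X1 t * (-Y.X1 (t - ρ)))
    have c4 := abs_add_le (X.X1 t * (-Y.X1 (t - ρ))) (X.X t * (-Y.X2 (t - ρ)))
    linarith only [b1, b2, b3, b4, b5, c1, c2, c3, c4]
  have hk := ann_compact (n := n) t1 (ρ + 1 / 2)
  have hkΩ := ann_Omega (n := n) (b := ρ + 1 / 2) ht1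
  have hki := ann_compact (n := n) t1 t2
  have hkiΩ := ann_Omega (n := n) (b := t2) ht1
  have hko := ann_compact (n := n) (ρ + 1 / 4) (ρ + 1 / 2)
  have hkoΩ := ann_Omega (n := n) (b := ρ + 1 / 2) (show 0 < ρ + 1 / 4 by linarith)
  have hkm := ann_compact (n := n) t3 T
  have hkmΩ := ann_Omega (n := n) (b := T) (show 0 < t3 by linarith)
  have hχ0 := rad_supp (n := n) ht1 hF0
  have cHx : ContinuousOn (fun x : En n => H (Real.log ‖x‖)) (OmegaExt n) :=
    (contDiffOn_rad cH).continuousOn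
  have cEx : ContinuousOn (fun x : En n => Real.exp (Ψ (Real.log ‖x‖))) (OmegaExt n) :=
    (contDiffOn_rad (F := fun t => Real.exp (Ψ t)) cΨ.exp).continuousOn
  have main := carleman_weak h hu hw hk hkΩ cHx cEx
    (fun v hv h0 => key v _ hv hk hkΩ h0) (contDiffOn_rad hFs) hχ0
  have cg : ContinuousOn (gradient u) (OmegaExt n) :=
    (contDiffOn_gradient hO hu (m := 0) (by simp)).continuousOn
  have cu := hu.continuousOn
  obtain ⟨G, hG⟩ : ∃ G : En n → ℝ, G = fun x => ‖gradient u x‖ ^ 2 + u x ^ 2 := ⟨_, rfl⟩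
  have cG : ContinuousOn G (OmegaExt n) := by rw [hG]; exact (cg.norm.pow 2).add (cu.pow 2)
  have G0 : ∀ x, 0 ≤ G x := fun x => by rw [hG]; positivity
  have iGi : IntegrableOn G (ann n t1 t2) := (cG.mono hkiΩ).integrableOn_compact hki
  have iGo : IntegrableOn G (ann n (ρ + 1 / 4) (ρ + 1 / 2)) :=
    (cG.mono hkoΩ).integrableOn_compact hko
  obtain ⟨q, hq⟩ : ∃ q, q = Qc n K D := ⟨_, rfl⟩
  have hq0 : 0 ≤ q := by rw [hq, Qc]; positivity
  obtain ⟨m, hm⟩ : ∃ m, m = h1 * Real.exp (Ψ t2) ^ 2 := ⟨_, rfl⟩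
  have hm0 : 0 ≤ m := by rw [hm]; positivity
  -- left side
  have left : h0 * Real.exp (Ψ t3) ^ 2 * ∫ x in ann n t3 T, u x ^ 2 ≤
      ∫ x : En n, H (Real.log ‖x‖) * (Real.exp (Ψ (Real.log ‖x‖)) *
        (F (Real.log ‖x‖) * u x)) ^ 2 := by
    rw [← integral_const_mul, ← integral_indicator hkm.measurableSet]
    refine integral_mono_of_nonneg
      (ae_of_all _ fun x => Set.indicator_nonneg (fun x _ => by positivity) x)
      (integrable_of_supp hO hk hkΩ (cHx.mul ((cEx.mul
        ((contDiffOn_rad hFs).continuousOn.mul cu)).pow 2))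
        fun x hx => by simp [hχ0 x hx]) (ae_of_all _ fun x => ?_)
    simp only
    by_cases hx : x ∈ ann n t3 T
    · rw [Set.indicator_of_mem hx]
      have ht := (mem_ann (Omega_ne (hkmΩ hx))).1 hx
      obtain ⟨e1, e2⟩ := hmid _ ht.1 ht.2
      rw [hFone _ ht.1 ht.2, one_mul, mul_pow, ← mul_assoc]
      have := H0 (Real.log ‖x‖)
      have e3 := Real.exp_le_exp.2 e2
      gcongr
    · rw [Set.indicator_of_notMem hx]
      have := H0 (Real.log ‖x‖)
      positivity
  -- right side
  have right : ∫ x : En n, H (Real.log ‖x‖) * ‖x‖ ^ 2 * (Real.exp (Ψ (Real.log ‖x‖)) *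
      (2 * inner ℝ (𝒜 x (gradient (fun y : En n => F (Real.log ‖y‖)) x)) (gradient u x)
        + u x * divg (fun y => 𝒜 y (gradient (fun y : En n => F (Real.log ‖y‖)) y)) x)) ^ 2 ≤
      q * (m * (∫ x in ann n t1 t2, G x) + B * ∫ x in ann n (ρ + 1 / 4) (ρ + 1 / 2), G x) := by
    have j1 : Integrable ((ann n t1 t2).indicator fun x => m * G x) :=
      (integrable_indicator_iff hki.measurableSet).2 (iGi.const_mul m)
    have j2 : Integrable ((ann n (ρ + 1 / 4) (ρ + 1 / 2)).indicator fun x => B * G x) :=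
      (integrable_indicator_iff hko.measurableSet).2 (iGo.const_mul B)
    have e : q * (m * (∫ x in ann n t1 t2, G x) + B * ∫ x in ann n (ρ + 1 / 4) (ρ + 1 / 2), G x) =
        ∫ x, q * ((ann n t1 t2).indicator (fun x => m * G x) x +
          (ann n (ρ + 1 / 4) (ρ + 1 / 2)).indicator (fun x => B * G x) x) := by
      rw [integral_const_mul, integral_add j1 j2, integral_indicator hki.measurableSet,
        integral_indicator hko.measurableSet, integral_const_mul, integral_const_mul]
    rw [e]
    refine integral_mono_of_nonneg (ae_of_all _ fun x => ?_) ((j1.add j2).const_mul q)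
      (ae_of_all _ fun x => ?_)
    · have := H0 (Real.log ‖x‖)
      exact mul_nonneg (mul_nonneg this (sq_nonneg _)) (sq_nonneg _)
    simp only
    have n1 : 0 ≤ (ann n t1 t2).indicator (fun x => m * G x) x :=
      Set.indicator_nonneg (fun x _ => mul_nonneg hm0 (G0 x)) x
    have n2 : 0 ≤ (ann n (ρ + 1 / 4) (ρ + 1 / 2)).indicator (fun x => B * G x) x :=
      Set.indicator_nonneg (fun x _ => mul_nonneg hB (G0 x)) x
    by_cases hx : x ∈ OmegaExt n
    · have hx0 := Omega_ne hx
      have eb := E_bound h d1 d2 hx (gradient u x) (u x)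
      obtain ⟨S, hS⟩ : ∃ S, S = 2 * inner ℝ (𝒜 x (gradient (fun y : En n => F (Real.log ‖y‖)) x)) (gradient u x)
        + u x * divg (fun y => 𝒜 y (gradient (fun y : En n => F (Real.log ‖y‖)) y)) x := ⟨_, rfl⟩
      rw [← hS] at eb ⊢
      obtain ⟨t, ht⟩ : ∃ t, t = Real.log ‖x‖ := ⟨_, rfl⟩
      rw [← ht] at eb ⊢
      have hGx : ‖gradient u x‖ ^ 2 + u x ^ 2 = G x := by rw [hG]
      rw [hGx] at eb
      have hHt := H0 t
      have r1 : H t * ‖x‖ ^ 2 * (Real.exp (Ψ t) * S) ^ 2 =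
        (H t * Real.exp (Ψ t) ^ 2) * (‖x‖ ^ 2 * S ^ 2) := by ring
      have hw0 : 0 ≤ H t * Real.exp (Ψ t) ^ 2 := by positivity
      have eb2 : ‖x‖ ^ 2 * S ^ 2 ≤ q * G x := by
        refine eb.trans ?_
        rw [hq, Qc]
        have := hFD t
        have := G0 x
        gcongr
      by_cases hi : x ∈ ann n t1 t2
      · have hti := (mem_ann hx0).1 hi
        rw [← ht] at hti
        obtain ⟨f1, f2⟩ := hin t hti.1 hti.2
        have f3 := Real.exp_le_exp.2 f2
        have f4 : H t * Real.exp (Ψ t) ^ 2 ≤ m := by rw [hm]; gcongr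
        rw [Set.indicator_of_mem hi, r1]
        have f5 := mul_le_mul f4 eb2 (by positivity) hm0
        have f6 := mul_nonneg hq0 n2
        linarith only [f5, f6]
      · by_cases ho : x ∈ ann n (ρ + 1 / 4) (ρ + 1 / 2)
        · have hti := (mem_ann hx0).1 ho
          rw [← ht] at hti
          have f4 := hout t (by linarith [hti.1])
          rw [Set.indicator_of_mem ho, r1]
          have f5 := mul_le_mul f4 eb2 (by positivity) hB
          have f6 := mul_nonneg hq0 n1
          linarith only [f5, f6]
        · rw [mem_ann hx0, ← ht] at hi ho
          rw [hz t hi ho] at eb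
          have eb3 : ‖x‖ ^ 2 * S ^ 2 ≤ 0 := by simpa using eb
          have f5 := mul_nonpos_of_nonneg_of_nonpos hw0 eb3
          rw [r1]
          have f6 := mul_nonneg hq0 (add_nonneg n1 n2)
          linarith only [f5, f6]
    · have hxk : x ∉ ann n t1 (ρ + 1 / 2) := fun hh => hx (hkΩ hh)
      have hg0 : ∀ y ∉ ann n t1 (ρ + 1 / 2),
        gradient (fun y : En n => F (Real.log ‖y‖)) y = 0 := fun y hy =>
          gradient_of_supp hk.isClosed hχ0 hy
      rw [divg_of_supp hk.isClosed (fun z hz => by rw [hg0 z hz, map_zero]) hxk, hg0 x hxk]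
      have f6 := mul_nonneg hq0 (add_nonneg n1 n2)
      simpa using f6
  have := left.trans (main.trans (mul_le_mul_of_nonneg_left right hc))
  rw [hq, hm, hG] at this
  exact this

end AL

namespace AL

open scoped Topology ContDiff

variable {n : ℕ}

lemma annulus_pos {u : En n → ℝ} (hu : ContinuousOn u (OmegaExt n)) {x0 : En n}
    (hx0 : x0 ∈ OmegaExt n) (hne : u x0 ≠ 0) {a b : ℝ} (ha : 0 < a) (ha1 : a < Real.log ‖x0‖)
    (hb1 : Real.log ‖x0‖ < b) : 0 < ∫ x in ann n a b, u x ^ 2 := by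
  have hO := isOpen_Omega (n := n)
  have hx := Omega_ne hx0
  have hpos := norm_pos_iff.2 hx
  have e1 : ∀ᶠ x in 𝓝 x0, u x0 ^ 2 / 2 < u x ^ 2 := by
    have : ContinuousAt (fun x => u x ^ 2) x0 := (hu.continuousAt (hO.mem_nhds hx0)).pow 2
    refine this.eventually (lt_mem_nhds ?_)
    have : 0 < u x0 ^ 2 := by positivity
    linarith
  have e2 : ∀ᶠ x in 𝓝 x0, Real.exp a < ‖x‖ :=
    continuous_norm.continuousAt.eventually (lt_mem_nhds ((Real.lt_log_iff_exp_lt hpos).1 ha1))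
  have e3 : ∀ᶠ x in 𝓝 x0, ‖x‖ < Real.exp b :=
    continuous_norm.continuousAt.eventually (gt_mem_nhds ((Real.log_lt_iff_lt_exp hpos).1 hb1))
  obtain ⟨ε, hε, hball⟩ := Metric.eventually_nhds_iff_ball.1 (e1.and (e2.and e3))
  have hsub : ball x0 ε ⊆ ann n a b := fun x hx =>
    ⟨(hball x hx).2.1.le, (hball x hx).2.2.le⟩
  have hi : IntegrableOn (fun x => u x ^ 2) (ann n a b) :=
    ((hu.mono (ann_Omega ha)).pow 2).integrableOn_compact (ann_compact a b)
  have k1 : ∫ x in ball x0 ε, u x ^ 2 ≤ ∫ x in ann n a b, u x ^ 2 :=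
    setIntegral_mono_set hi (ae_of_all _ fun x => sq_nonneg _) hsub.eventuallyLE
  have k2 : u x0 ^ 2 / 2 * volume.real (ball x0 ε) ≤ ∫ x in ball x0 ε, u x ^ 2 :=
    setIntegral_ge_of_const_le_real measurableSet_ball measure_ball_lt_top.ne
      (fun x hx => (hball x hx).1.le) (hi.mono_set hsub)
  have k3 : 0 < volume.real (ball x0 ε) :=
    ENNReal.toReal_pos (measure_ball_pos volume x0 hε).ne' measure_ball_lt_top.ne
  have k4 : 0 < u x0 ^ 2 / 2 * volume.real (ball x0 ε) := by positivity
  linarith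

lemma main_bound (hn : 1 ≤ n) {𝒜 : En n → En n →L[ℝ] En n} {lam α K : ℝ} (h : Good 𝒜 lam α K)
    {u : En n → ℝ} (hu : ContDiffOn ℝ 1 u (OmegaExt n)) (hw : WeakOp 𝒜 u)
    (hne : ∃ x ∈ OmegaExt n, u x ≠ 0) {δ : ℝ} (hδ : 0 < δ) (hδ1 : δ < 1) :
    ∃ Rbar > (1 : ℝ), ∃ C₁ > (0 : ℝ), ∀ R ≥ Rbar,
      C₁ * R ^ (1 - δ) ≤ ∫ x in ball (0 : En n) (2 * R) \ ball (0 : En n) R, (u x) ^ 2 := by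
  by_contra hcon
  push Not at hcon
  obtain ⟨x0, hx0, hux0⟩ := hne
  obtain ⟨L, hL⟩ : ∃ L, L = Real.log ‖x0‖ := ⟨_, rfl⟩
  have hL0 : 0 < L := by rw [hL]; exact Real.log_pos hx0
  obtain ⟨γ, hγ, M, hM, Λ, hΛ, y1, hy1, car⟩ := carleman h hn hδ hδ1
  obtain ⟨c, hc, h0, hh0, h1, hh1, hev⟩ := exists_weights (Λ := Λ) hn hγ hδ hδ1 h.α0 hM hy1
    (show 0 ≤ L + 1 by linarith)
  obtain ⟨Co, hCo, outer⟩ := outer_bound h hu hw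
  obtain ⟨X⟩ := exists_cut (show L / 4 < L / 2 by linarith)
  obtain ⟨Y⟩ := exists_cut (show (1 / 4 : ℝ) < 1 / 2 by norm_num)
  have hI0 : 0 < ∫ x in ann n (3 * L / 4) (L + 1), u x ^ 2 :=
    annulus_pos hu.continuousOn hx0 hux0 (by linarith) (by rw [← hL]; linarith)
      (by rw [← hL]; linarith)
  obtain ⟨I0, hI⟩ : ∃ I0, I0 = ∫ x in ann n (3 * L / 4) (L + 1), u x ^ 2 := ⟨_, rfl⟩
  obtain ⟨N0, hN⟩ : ∃ N0, N0 = ∫ x in ann n (L / 4) (L / 2), (‖gradient u x‖ ^ 2 + u x ^ 2) :=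
    ⟨_, rfl⟩
  obtain ⟨Q, hQ⟩ : ∃ Q, Q = Qc n K (2 * X.D + 2 * Y.D + 2 * (X.D * Y.D)) := ⟨_, rfl⟩
  have hQ0 : 0 ≤ Q := by rw [hQ, Qc]; positivity
  rw [← hI] at hI0
  obtain ⟨Z, hZ⟩ : ∃ Z, Z = 16 / δ ^ 2 * (Q * (h1 * (N0 + 1))) / (h0 * I0) := ⟨_, rfl⟩
  obtain ⟨τ, hτw, hτ0, hτ⟩ := (hev.and ((eventually_gt_atTop 0).and
    (eventually_gt_atTop (Z / (c * (L / 4)))))).exists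
  obtain ⟨w, wH, wΨ, Cw, hCw, wout⟩ := hτw
  obtain ⟨C1, hC1⟩ : ∃ C1, C1 = h1 * Real.exp (w.Ψ (L / 2)) ^ 2 / (Cw * Co) := ⟨_, rfl⟩
  have hC10 : 0 < C1 := by rw [hC1]; positivity
  obtain ⟨R, hR, hRlt⟩ := hcon (Real.exp (L + 1)) (Real.one_lt_exp_iff.2 (by linarith)) C1 hC10
  have hR1 : 1 < R := lt_of_lt_of_le (Real.one_lt_exp_iff.2 (by linarith)) hR
  have hR0 : 0 < R := by linarith
  obtain ⟨ρ, hρ⟩ : ∃ ρ, ρ = Real.log R := ⟨_, rfl⟩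
  have hTρ : L + 1 ≤ ρ := by rw [hρ]; exact (Real.le_log_iff_exp_le hR0).2 hR
  have hout := outer R hR1
  rw [← hρ] at hout
  have mono : ∀ s t, 0 ≤ s → s ≤ t → t ≤ L + 1 → w.Ψ s ≤ w.Ψ t := fun s t a b d => by
    have := wΨ s t a b d
    have h2 : 0 ≤ c * τ * (t - s) := mul_nonneg (by positivity) (by linarith)
    linarith
  have st := step h hu hw (t1 := L / 4) (t2 := L / 2) (t3 := 3 * L / 4) (T := L + 1) (ρ := ρ)
    (by linarith) (by linarith) (by linarith) (by linarith) hTρ X Y (w.cH.of_le (by simp))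
    (w.cΨ.of_le (by simp)) (c := 16 / δ ^ 2) (h0 := h0) (h1 := h1)
    (B := Cw * Real.exp ((δ - 1) * ρ)) (by positivity) hh0.le hh1.le (by positivity)
    (fun t => (w.H0 t).le)
    (fun t a b => ⟨(wH t (by linarith) (by linarith)).2, mono _ _ (by linarith) b (by linarith)⟩)
    (fun t a b => ⟨(wH t (by linarith) b).1, mono _ _ (by linarith) a b⟩)
    (fun t a => (wout t (by linarith)).trans (by
      refine mul_le_mul_of_nonneg_left (Real.exp_le_exp.2 ?_) hCw.le
      exact mul_le_mul_of_nonpos_left a (by linarith)))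
    (fun v k a b d e => car w v k a b d e)
  rw [← hI, ← hN, ← hQ] at st
  obtain ⟨O, hOO⟩ : ∃ O, O = ∫ x in ann n (ρ + 1 / 4) (ρ + 1 / 2),
    (‖gradient u x‖ ^ 2 + u x ^ 2) := ⟨_, rfl⟩
  rw [← hOO] at st hout
  have o1 : O ≤ Co * (C1 * Real.exp ((1 - δ) * ρ)) := by
    refine hout.trans (mul_le_mul_of_nonneg_left ?_ hCo.le)
    rw [hρ, mul_comm (1 - δ), ← Real.rpow_def_of_pos hR0]
    exact hRlt.le
  have o2 : Cw * Real.exp ((δ - 1) * ρ) * O ≤ h1 * Real.exp (w.Ψ (L / 2)) ^ 2 := by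
    refine (mul_le_mul_of_nonneg_left o1 (by positivity)).trans (le_of_eq ?_)
    have e : Real.exp ((δ - 1) * ρ) * Real.exp ((1 - δ) * ρ) = 1 := by
      rw [← Real.exp_add, ← Real.exp_zero]; congr 1; ring
    calc _ = Cw * Co * C1 * (Real.exp ((δ - 1) * ρ) * Real.exp ((1 - δ) * ρ)) := by ring
      _ = _ := by rw [e, hC1]; field_simp
  obtain ⟨y, hy⟩ : ∃ y, y = w.Ψ (3 * L / 4) - w.Ψ (L / 2) := ⟨_, rfl⟩
  have hyl : c * τ * (L / 4) ≤ y := by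
    have := wΨ (L / 2) (3 * L / 4) (by linarith) (by linarith) (by linarith)
    rw [hy]; linarith only [this]
  have hy0 : 0 ≤ y := le_trans (by positivity) hyl
  have hexp : Real.exp (w.Ψ (3 * L / 4)) = Real.exp (w.Ψ (L / 2)) * Real.exp y := by
    rw [← Real.exp_add, hy]; congr 1; ring
  have st2 : h0 * Real.exp (w.Ψ (3 * L / 4)) ^ 2 * I0 ≤ 16 / δ ^ 2 * (Q *
      (h1 * Real.exp (w.Ψ (L / 2)) ^ 2 * N0 + h1 * Real.exp (w.Ψ (L / 2)) ^ 2)) := by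
    refine st.trans ?_
    gcongr
  rw [hexp] at st2
  obtain ⟨E, hE⟩ : ∃ E, E = Real.exp (w.Ψ (L / 2)) := ⟨_, rfl⟩
  have hE0 : 0 < E := hE ▸ Real.exp_pos _
  rw [← hE] at st2
  have st3 : Real.exp y ^ 2 ≤ Z := by
    rw [hZ, le_div_iff₀ (by positivity)]
    refine le_of_mul_le_mul_left ?_ (by positivity : 0 < E ^ 2)
    calc _ = h0 * (E * Real.exp y) ^ 2 * I0 := by ring
      _ ≤ _ := st2
      _ = _ := by ring
  have e1 : Real.exp y ≤ Real.exp y ^ 2 := by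
    have := Real.one_le_exp hy0
    exact le_self_pow₀ this (by norm_num)
  have e2 := Real.add_one_le_exp y
  rw [div_lt_iff₀ (by positivity)] at hτ
  linarith only [hτ, e1, e2, st3, hyl]

end AL

namespace AL

open scoped Topology ContDiff

variable {n : ℕ}

/-- The operator attached to a coefficient matrix. -/
def opA (A : En n → Matrix (Fin n) (Fin n) ℝ) (x : En n) : En n →L[ℝ] En n :=
  Matrix.toEuclideanCLM (n := Fin n) (𝕜 := ℝ) (A x)

/-- Elementary operators. -/
def eOp (n : ℕ) (p : Fin n × Fin n) : En n →L[ℝ] En n :=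
  Matrix.toEuclideanCLM (n := Fin n) (𝕜 := ℝ) (Matrix.single p.1 p.2 1)

lemma inner_opA (A : En n → Matrix (Fin n) (Fin n) ℝ) (x ξ η : En n) :
    inner ℝ (opA A x ξ) η = quadForm (A x) ξ η := by
  rw [PiLp.inner_apply]
  unfold quadForm
  refine Finset.sum_congr rfl fun i _ => ?_
  rw [real_inner_comm]
  rfl

lemma toCLM_sum (B : Matrix (Fin n) (Fin n) ℝ) :
    Matrix.toEuclideanCLM (n := Fin n) (𝕜 := ℝ) B = ∑ p : Fin n × Fin n, B p.1 p.2 • eOp n p := by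
  unfold eOp
  simp_rw [← map_smul]
  rw [← map_sum]
  congr 1
  conv_lhs => rw [Matrix.matrix_eq_sum_single B]
  rw [Fintype.sum_prod_type]
  simp

lemma opA_eq (A : En n → Matrix (Fin n) (Fin n) ℝ) :
    opA A = fun x => ContinuousLinearMap.id ℝ (En n) +
      ∑ p : Fin n × Fin n, (A x - 1) p.1 p.2 • eOp n p := by
  funext x
  rw [← toCLM_sum, map_sub, map_one]
  unfold opA
  rw [show ContinuousLinearMap.id ℝ (En n) = 1 from rfl]
  abel

lemma norm_gradient' (f : En n → ℝ) (x : En n) : ‖gradient f x‖ = ‖fderiv ℝ f x‖ := by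
  unfold gradient
  rw [LinearIsometryEquiv.norm_map]

lemma norm_fderiv_sum {ι V W : Type*} [Fintype ι] [NormedAddCommGroup V] [NormedSpace ℝ V]
    [NormedAddCommGroup W] [NormedSpace ℝ W] (b : ι → V → ℝ) (e : ι → W) (w0 : W) (x : V)
    (hd : ∀ p, DifferentiableAt ℝ (b p) x) :
    ‖fderiv ℝ (fun y => w0 + ∑ p, b p y • e p) x‖ ≤ ∑ p, ‖fderiv ℝ (b p) x‖ * ‖e p‖ := by
  have h : HasFDerivAt (fun y => w0 + ∑ p, b p y • e p)
      (∑ p, (fderiv ℝ (b p) x).smulRight (e p)) x :=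
    HasFDerivAt.const_add _ (HasFDerivAt.fun_sum fun p _ => (hd p).hasFDerivAt.smul_const (e p))
  rw [h.fderiv]
  refine (norm_sum_le _ _).trans (le_of_eq (Finset.sum_congr rfl fun p _ => ?_))
  exact ContinuousLinearMap.norm_smulRight_apply _ _

lemma good_of {A : En n → Matrix (Fin n) (Fin n) ℝ} {lam α C : ℝ}
    (hlam0 : 0 < lam) (hα : 0 < α) (hC : 0 < C) (hA : EllipticDecay A lam α C) :
    ∃ K, Good (opA A) lam (min α 1) K := by
  obtain ⟨hsym, hsm, hell, hdec⟩ := hA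
  obtain ⟨N, hN⟩ : ∃ N, N = ∑ p : Fin n × Fin n, ‖eOp n p‖ := ⟨_, rfl⟩
  have hN0 : 0 ≤ N := by rw [hN]; positivity
  have hO := isOpen_Omega (n := n)
  have hBs : ∀ p : Fin n × Fin n, ContDiffOn ℝ 1 (fun x => (A x - 1) p.1 p.2) (OmegaExt n) :=
    fun p => (hsm p.1 p.2).sub contDiffOn_const
  have hpow : ∀ x ∈ OmegaExt n, C * ‖x‖ ^ (-α) ≤ C * ‖x‖ ^ (-(min α 1)) := fun x hx => by
    have hx1 : 1 < ‖x‖ := hx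
    refine mul_le_mul_of_nonneg_left (Real.rpow_le_rpow_of_exponent_le hx1.le ?_) hC.le
    exact neg_le_neg (min_le_left _ _)
  have hfin : ∀ x ∈ OmegaExt n, N * (C * ‖x‖ ^ (-α)) ≤ (1 + N * C) * ‖x‖ ^ (-(min α 1)) :=
    fun x hx => by
      have h1 := mul_le_mul_of_nonneg_left (hpow x hx) hN0
      have h2 : 0 ≤ ‖x‖ ^ (-(min α 1)) := by positivity
      linarith only [h1, h2]
  refine ⟨1 + N * C, ?_, ?_, ?_, ?_, ?_, hlam0, lt_min hα one_pos, min_le_right _ _, ?_⟩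
  · intro x hx ξ η
    rw [inner_opA, real_inner_comm, inner_opA]
    unfold quadForm
    have e : ∀ a b : En n, ∑ i, (A x).mulVec (fun j => a j) i * b i =
        dotProduct ((A x).mulVec (fun j => a j)) (fun j => b j) := fun a b => rfl
    rw [e, e, dotProduct_comm, Matrix.dotProduct_mulVec, ← Matrix.mulVec_transpose, hsym x hx]
  · rw [opA_eq]
    exact contDiffOn_const.add (ContDiffOn.sum fun p _ => (hBs p).smul contDiffOn_const)
  · intro x hx ξ
    rw [inner_opA]
    exact (hell x hx ξ).1
  · intro x hx
    rw [opA_eq]; simp only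
    rw [add_sub_cancel_left]
    refine le_trans ?_ (hfin x hx)
    rw [hN, Finset.sum_mul]
    refine (norm_sum_le _ _).trans (Finset.sum_le_sum fun p _ => ?_)
    rw [norm_smul, mul_comm, Real.norm_eq_abs]
    refine mul_le_mul_of_nonneg_left ?_ (norm_nonneg _)
    have := hdec x hx p.1 p.2
    have h2 : 0 ≤ ‖x‖ * ‖gradient (fun y => (A y - 1) p.1 p.2) x‖ := by positivity
    linarith only [this, h2]
  · intro x hx
    have hb := norm_fderiv_sum (fun (p : Fin n × Fin n) y => (A y - 1) p.1 p.2) (eOp n)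
      (ContinuousLinearMap.id ℝ (En n)) x fun p =>
        ((hBs p).contDiffAt (hO.mem_nhds hx)).differentiableAt (by simp)
    rw [← opA_eq] at hb
    refine le_trans ?_ (hfin x hx)
    refine (mul_le_mul_of_nonneg_left hb (norm_nonneg x)).trans ?_
    rw [Finset.mul_sum, hN, Finset.sum_mul]
    refine Finset.sum_le_sum fun p _ => ?_
    rw [← norm_gradient', ← mul_assoc, mul_comm]
    refine mul_le_mul_of_nonneg_left ?_ (norm_nonneg _)
    have := hdec x hx p.1 p.2
    have h2 : 0 ≤ |(A x - 1) p.1 p.2| := abs_nonneg _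
    linarith only [this, h2]
  · have := mul_nonneg hN0 hC.le
    linarith

lemma weakOp_of {A : En n → Matrix (Fin n) (Fin n) ℝ} {u : En n → ℝ} (hu : WeakSol A u) :
    WeakOp (opA A) u := by
  intro φ h1 h2 h3
  have h := hu.2 φ h1 h2 h3
  have e : ∀ x, ∑ i, (A x).mulVec (fun j => gradient u x j) i * gradient φ x i =
      fderiv ℝ φ x (opA A x (gradient u x)) := fun x => by
    have := inner_opA A x (gradient u x) (gradient φ x)
    unfold quadForm at this
    rw [← this, real_inner_comm]
    unfold gradient
    rw [InnerProductSpace.toDual_symm_apply]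
  simp_rw [e] at h
  rw [setIntegral_eq_integral_of_forall_compl_eq_zero, setIntegral_eq_integral_of_forall_compl_eq_zero] at h
  · exact h
  · intro x hx
    rw [image_eq_zero_of_notMem_tsupport (fun hh => hx (h3 hh)), mul_zero]
  · intro x hx
    have : fderiv ℝ φ x = 0 := by
      apply image_eq_zero_of_notMem_tsupport
      exact fun hh => hx (h3 (tsupport_fderiv_subset ℝ hh))
    rw [this]; rfl

end AL

/-- If `u ∈ C¹(Ω)` is a nontrivial weak solution of `-div(A∇u) = u`
in `Ω`, then for every `δ ∈ (0,1)` there exist `R̄ > 1` and `C₁ > 0` such that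
`∫_{B_{2R} \ B_R} u² ≥ C₁ R^{1-δ}` for all `R ≥ R̄`. -/
theorem annular_lower_bound
    (n : ℕ) (hn : 2 ≤ n)
    (A : En n → Matrix (Fin n) (Fin n) ℝ) (lam α C : ℝ)
    (hlam0 : 0 < lam) (hlam1 : lam < 1) (hα : 0 < α) (hC : 0 < C)
    (hA : EllipticDecay A lam α C)
    (u : En n → ℝ) (hu : WeakSol A u)
    (hne : ∃ x ∈ OmegaExt n, u x ≠ 0) :
    ∀ δ : ℝ, δ ∈ Set.Ioo (0 : ℝ) 1 →
      ∃ Rbar > (1 : ℝ), ∃ C₁ > (0 : ℝ), ∀ R ≥ Rbar,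
        C₁ * R ^ (1 - δ) ≤ ∫ x in ball (0 : En n) (2 * R) \ ball (0 : En n) R, (u x) ^ 2 := by
  intro δ hδ
  obtain ⟨K, hK⟩ := AL.good_of hlam0 hα hC hA
  exact AL.main_bound (by omega) hK hu.1 (AL.weakOp_of hu) hne hδ.1 hδ.2

end
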